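/- arXiv:1806.08855 — 2 statements merged into one kernel-verified Lean document; each statement's English description precedes it below -/
import Mathlib

section
/- Fix integers k ≥ 2 and d with 0 ≤ d ≤ k−1, and a real x with 0 < x < 1/k. Then limsup_{n→∞} m*_d(n,k,⌊xn⌋)/C(n−d,k−d) = limsup_{n→∞} m_d(n,k,⌊xn⌋)/C(n−d,k−d), where C(a,b) denotes the binomial coefficient. -/
open Finset

/-- The fractional matching number of a family `F` of subsets of `{0,…,n-1}`:
the supremum of sizes of fractional matchings, i.e. weight functions
`w : F → [0,1]` such that every vertex carries total weight at most 1. -/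
noncomputable def fracMatchingNumber (n : ℕ) (F : Finset (Finset ℕ)) : ℝ :=
  sSup {v : ℝ | ∃ w : Finset ℕ → ℝ,
    (∀ A, 0 ≤ w A ∧ w A ≤ 1) ∧ (∀ A, A ∉ F → w A = 0) ∧
    (∀ i ∈ Finset.range n, ∑ A ∈ F.filter (fun A => i ∈ A), w A ≤ 1) ∧
    v = ∑ A ∈ F, w A}

/-- The minimal `d`-degree of a family of subsets of `{0,…,n-1}`. -/
noncomputable def minDeg (n d : ℕ) (F : Finset (Finset ℕ)) : ℕ :=
  sInf {t : ℕ | ∃ S ∈ (Finset.range n).powersetCard d, t = (F.filter (fun A => S ⊆ A)).card}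

/-- `mStarDeg n k d s` is `m*_d(n,k,s)`: the maximum of the minimal `d`-degree
over all families of `k`-subsets of an `n`-set with fractional matching number
less than `s+1`. -/
noncomputable def mStarDeg (n k d s : ℕ) : ℕ :=
  sSup {t : ℕ | ∃ F : Finset (Finset ℕ), F ⊆ (Finset.range n).powersetCard k ∧
    fracMatchingNumber n F < (s : ℝ) + 1 ∧ t = minDeg n d F}

/-- The (integer) matching number of a family of finite sets. -/
noncomputable def matchingNumber (F : Finset (Finset ℕ)) : ℕ :=
  sSup {t : ℕ | ∃ M : Finset (Finset ℕ), M ⊆ F ∧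
    (M : Set (Finset ℕ)).Pairwise (fun A B => Disjoint A B) ∧ M.card = t}

/-- `mDeg n k d s` is `m_d(n,k,s)`: the maximum of the minimal `d`-degree over
all families of `k`-subsets of an `n`-set with matching number less than `s+1`. -/
noncomputable def mDeg (n k d s : ℕ) : ℕ :=
  sSup {t : ℕ | ∃ F : Finset (Finset ℕ), F ⊆ (Finset.range n).powersetCard k ∧
    matchingNumber F < s + 1 ∧ t = minDeg n d F}

open Finset
set_option linter.unusedSectionVars false
set_option linter.unusedSimpArgs false

namespace Nib

noncomputable def ind {V : Type} [DecidableEq V] (s : Finset V) (v : V) : ℝ := if v ∈ s then 1 else 0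

section
variable {V ι : Type} [Fintype V] [DecidableEq V] [Fintype ι]

noncomputable def dg (E : ι → Finset V) (w : ι → ℝ) (v : V) : ℝ := ∑ i, w i * ind (E i) v
noncomputable def cd (E : ι → Finset V) (w : ι → ℝ) (u v : V) : ℝ :=
  ∑ i, w i * ind (E i) u * ind (E i) v

lemma ind_nonneg (s : Finset V) (v : V) : 0 ≤ ind s v := by unfold ind; split_ifs <;> norm_num
lemma ind_le_one (s : Finset V) (v : V) : ind s v ≤ 1 := by unfold ind; split_ifs <;> norm_num
lemma ind_sq (s : Finset V) (v : V) : ind s v * ind s v = ind s v := by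
  unfold ind; split_ifs <;> norm_num
lemma ind_inter (s t : Finset V) (v : V) : ind s v * ind t v = ind (s ∩ t) v := by
  unfold ind; by_cases h1 : v ∈ s <;> by_cases h2 : v ∈ t <;> simp [h1, h2]
lemma sum_ind (s : Finset V) : ∑ v, ind s v = s.card := by
  unfold ind; simp

lemma sum_ind_mul (s : Finset V) (f : V → ℝ) : ∑ v, ind s v * f v = ∑ v ∈ s, f v := by
  unfold ind; simp [Finset.sum_ite_mem]

lemma dg_nonneg {E : ι → Finset V} {w : ι → ℝ} (hw : ∀ i, 0 ≤ w i) (v : V) : 0 ≤ dg E w v :=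
  Finset.sum_nonneg fun i _ => mul_nonneg (hw i) (ind_nonneg _ _)
lemma cd_nonneg {E : ι → Finset V} {w : ι → ℝ} (hw : ∀ i, 0 ≤ w i) (u v : V) : 0 ≤ cd E w u v :=
  Finset.sum_nonneg fun i _ => mul_nonneg (mul_nonneg (hw i) (ind_nonneg _ _)) (ind_nonneg _ _)
lemma cd_comm (E : ι → Finset V) (w : ι → ℝ) (u v : V) : cd E w u v = cd E w v u :=
  Finset.sum_congr rfl fun i _ => by ring
lemma cd_self (E : ι → Finset V) (w : ι → ℝ) (v : V) : cd E w v v = dg E w v :=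
  Finset.sum_congr rfl fun i _ => by rw [mul_assoc, ind_sq]

lemma sum_dg {E : ι → Finset V} {w : ι → ℝ} {k : ℕ} (hE : ∀ i, (E i).card = k) :
    ∑ v, dg E w v = k * ∑ i, w i := by
  unfold dg
  rw [Finset.sum_comm, Finset.mul_sum]
  refine Finset.sum_congr rfl fun i _ => ?_
  rw [← Finset.mul_sum, sum_ind, hE]; ring

lemma sum_cd {E : ι → Finset V} {w : ι → ℝ} {k : ℕ} (hE : ∀ i, (E i).card = k) (v : V) :
    ∑ u, cd E w u v = k * dg E w v := by
  unfold cd dg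
  rw [Finset.sum_comm, Finset.mul_sum]
  refine Finset.sum_congr rfl fun i _ => ?_
  rw [← Finset.sum_mul, ← Finset.mul_sum, sum_ind, hE]; ring

lemma sum_cd_erase {E : ι → Finset V} {w : ι → ℝ} {k : ℕ} (hE : ∀ i, (E i).card = k) (v : V) :
    ∑ u ∈ univ.erase v, cd E w u v = (k - 1) * dg E w v := by
  have := Finset.add_sum_erase univ (fun u => cd E w u v) (Finset.mem_univ v)
  rw [sum_cd hE, cd_self] at this
  linarith

/-- the hit indicator -/
noncomputable def hit (s t : Finset V) : ℝ := if Disjoint s t then 0 else 1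

lemma hit_nonneg (s t : Finset V) : 0 ≤ hit s t := by unfold hit; split_ifs <;> norm_num

lemma hit_le (s t : Finset V) : hit s t ≤ ∑ u, ind s u * ind t u := by
  simp_rw [ind_inter, sum_ind]
  unfold hit
  split_ifs with h
  · positivity
  · have : (s ∩ t).Nonempty := by rwa [← Finset.not_disjoint_iff_nonempty_inter]
    exact_mod_cast this.card_pos

lemma over_bounds (s t : Finset V) (v : V) (hv : v ∈ s) :
    0 ≤ (∑ u ∈ univ.erase v, ind s u * ind t u) - (1 - ind t v) * hit s t ∧
    (∑ u ∈ univ.erase v, ind s u * ind t u) - (1 - ind t v) * hit s t ≤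
      ∑ u, ∑ u' ∈ univ.erase u, ind s u * ind t u * (ind s u' * ind t u') := by
  have h1 : ∀ u, ∑ u' ∈ univ.erase u, ind s u' * ind t u' = (s ∩ t).card - ind (s ∩ t) u := by
    intro u
    have := Finset.add_sum_erase univ (fun u => ind s u * ind t u) (Finset.mem_univ u)
    simp_rw [ind_inter, sum_ind] at this ⊢
    linarith
  have h2 : ∑ u, ∑ u' ∈ univ.erase u, ind s u * ind t u * (ind s u' * ind t u')
      = (s ∩ t).card * ((s ∩ t).card - 1) := by
    simp_rw [← Finset.mul_sum, h1, ind_inter, mul_sub, ind_sq, Finset.sum_sub_distrib,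
      ← Finset.sum_mul, sum_ind]
    ring
  rw [h2, h1]
  rcases Nat.eq_zero_or_pos (s ∩ t).card with h0 | h0
  · have hd : Disjoint s t := by
      rw [Finset.disjoint_iff_inter_eq_empty]; exact Finset.card_eq_zero.mp h0
    have hvt : v ∉ t := fun h => Finset.disjoint_left.mp hd hv h
    simp [hit, hd, h0, ind, hvt]
  · have hd : ¬ Disjoint s t := by
      rw [Finset.not_disjoint_iff_nonempty_inter]; exact Finset.card_pos.mp h0
    have h3 : (1:ℝ) ≤ (s ∩ t).card := by exact_mod_cast h0
    by_cases hvt : v ∈ t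
    · simp only [hit, hd, ind, hvt, hv, Finset.mem_inter, and_self, if_true, if_false]
      constructor <;> nlinarith
    · simp only [hit, hd, ind, hvt, hv, Finset.mem_inter, and_false, if_true, if_false]
      constructor <;> nlinarith

lemma ell_le {E : ι → Finset V} {w : ι → ℝ} {k : ℕ} {δ : ℝ} (hE : ∀ i, (E i).card = k)
    (hw : ∀ i, 0 ≤ w i) (hc : ∀ u v, u ≠ v → cd E w u v ≤ δ) (e : ι) (v : V) (hv : v ∉ E e) :
    ∑ i, w i * ind (E i) v * hit (E i) (E e) ≤ k * δ := by
  calc ∑ i, w i * ind (E i) v * hit (E i) (E e)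
      ≤ ∑ i, w i * ind (E i) v * ∑ u, ind (E i) u * ind (E e) u :=
        Finset.sum_le_sum fun i _ => mul_le_mul_of_nonneg_left (hit_le _ _)
          (mul_nonneg (hw i) (ind_nonneg _ _))
    _ = ∑ u, ind (E e) u * cd E w u v := by
        unfold cd
        simp_rw [Finset.mul_sum]
        rw [Finset.sum_comm]
        refine Finset.sum_congr rfl fun u _ => Finset.sum_congr rfl fun i _ => by ring
    _ = ∑ u ∈ E e, cd E w u v := sum_ind_mul _ _
    _ ≤ ∑ u ∈ E e, δ := Finset.sum_le_sum fun u hu => hc _ _ (fun h => hv (h ▸ hu))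
    _ = k * δ := by rw [Finset.sum_const, hE, nsmul_eq_mul]

lemma PB {E : ι → Finset V} {w : ι → ℝ} {k : ℕ} {δ : ℝ} (hE : ∀ i, (E i).card = k)
    (hw : ∀ i, 0 ≤ w i) (hδ : 0 ≤ δ) (hc : ∀ u v, u ≠ v → cd E w u v ≤ δ) (v : V)
    (hD : dg E w v ≤ 1) :
    ∑ e, w e * ((1 - ind (E e) v) * ∑ i, w i * ind (E i) v * hit (E i) (E e)) ≤
      ∑ u ∈ univ.erase v, cd E w u v * dg E w u ∧
    ∑ u ∈ univ.erase v, cd E w u v * dg E w u ≤ 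
      ∑ e, w e * ((1 - ind (E e) v) * ∑ i, w i * ind (E i) v * hit (E i) (E e)) + k ^ 2 * δ := by
  have hP : ∑ u ∈ univ.erase v, cd E w u v * dg E w u =
      ∑ i, ∑ e, w i * ind (E i) v * (w e * ∑ u ∈ univ.erase v, ind (E i) u * ind (E e) u) := by
    unfold cd dg
    simp_rw [Finset.sum_mul_sum, Finset.mul_sum]
    rw [Finset.sum_comm]
    refine Finset.sum_congr rfl fun i _ => ?_
    rw [Finset.sum_comm]
    refine Finset.sum_congr rfl fun u _ => Finset.sum_congr rfl fun e _ => by ring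
  have hB : ∑ e, w e * ((1 - ind (E e) v) * ∑ i, w i * ind (E i) v * hit (E i) (E e)) =
      ∑ i, ∑ e, w i * ind (E i) v * (w e * ((1 - ind (E e) v) * hit (E i) (E e))) := by
    simp_rw [Finset.mul_sum]
    rw [Finset.sum_comm]
    refine Finset.sum_congr rfl fun u _ => Finset.sum_congr rfl fun e _ => by ring
  have hdiff : ∑ u ∈ univ.erase v, cd E w u v * dg E w u -
      ∑ e, w e * ((1 - ind (E e) v) * ∑ i, w i * ind (E i) v * hit (E i) (E e)) =
      ∑ i, ∑ e, w i * ind (E i) v * (w e * ((∑ u ∈ univ.erase v, ind (E i) u * ind (E e) u) -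
        (1 - ind (E e) v) * hit (E i) (E e))) := by
    rw [hP, hB, ← Finset.sum_sub_distrib]
    refine Finset.sum_congr rfl fun i _ => ?_
    rw [← Finset.sum_sub_distrib]
    refine Finset.sum_congr rfl fun e _ => by ring
  constructor
  · rw [← sub_nonneg, hdiff]
    refine Finset.sum_nonneg fun i _ => Finset.sum_nonneg fun e _ => ?_
    by_cases hv : v ∈ E i
    · exact mul_nonneg (mul_nonneg (hw i) (ind_nonneg _ _))
        (mul_nonneg (hw e) (over_bounds _ _ _ hv).1)
    · simp [ind, hv]
  · rw [← sub_le_iff_le_add', hdiff]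
    have step : ∀ i, ∑ e, w i * ind (E i) v * (w e * ((∑ u ∈ univ.erase v, ind (E i) u * ind (E e) u) -
        (1 - ind (E e) v) * hit (E i) (E e))) ≤ w i * ind (E i) v * (k ^ 2 * δ) := by
      intro i
      rw [← Finset.mul_sum]
      by_cases hv : v ∈ E i
      · refine mul_le_mul_of_nonneg_left ?_ (mul_nonneg (hw i) (ind_nonneg _ _))
        calc _ ≤ ∑ e, w e * ∑ u, ∑ u' ∈ univ.erase u,
                ind (E i) u * ind (E e) u * (ind (E i) u' * ind (E e) u') :=
              Finset.sum_le_sum fun e _ => mul_le_mul_of_nonneg_left (over_bounds _ _ _ hv).2 (hw e)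
          _ = ∑ u, ∑ u' ∈ univ.erase u, ind (E i) u * (ind (E i) u' * cd E w u u') := by
              unfold cd
              simp_rw [Finset.mul_sum]
              rw [Finset.sum_comm]
              refine Finset.sum_congr rfl fun u _ => ?_
              rw [Finset.sum_comm]
              refine Finset.sum_congr rfl fun u' _ => Finset.sum_congr rfl fun e _ => by ring
          _ ≤ ∑ u, ∑ u' ∈ univ.erase u, ind (E i) u * (ind (E i) u' * δ) := by
              refine Finset.sum_le_sum fun u _ => Finset.sum_le_sum fun u' hu' => ?_
              refine mul_le_mul_of_nonneg_left (mul_le_mul_of_nonneg_left ?_ (ind_nonneg _ _)) (ind_nonneg _ _)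
              exact hc _ _ (Finset.ne_of_mem_erase hu').symm
          _ ≤ ∑ u, ∑ u', ind (E i) u * (ind (E i) u' * δ) := by
              refine Finset.sum_le_sum fun u _ => ?_
              refine Finset.sum_le_sum_of_subset_of_nonneg (Finset.subset_univ _) fun u' _ _ => ?_
              exact mul_nonneg (ind_nonneg _ _) (mul_nonneg (ind_nonneg _ _) hδ)
          _ = k ^ 2 * δ := by
              simp_rw [← Finset.mul_sum, ← Finset.sum_mul, sum_ind, hE]; ring
      · simp [ind, hv]
    calc _ ≤ ∑ i, w i * ind (E i) v * (k ^ 2 * δ) := Finset.sum_le_sum fun i _ => step i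
      _ = dg E w v * (k ^ 2 * δ) := by rw [← Finset.sum_mul]; rfl
      _ ≤ 1 * (k ^ 2 * δ) := mul_le_mul_of_nonneg_right hD (by positivity)
      _ = _ := one_mul _
end
end Nib

open Finset
set_option linter.unusedSectionVars false
namespace Nib
section
variable {V ι : Type} [Fintype V] [DecidableEq V] [Fintype ι]

lemma per_vertex {E : ι → Finset V} {w : ι → ℝ} {k : ℕ} {δ q g : ℝ} (hk : 1 ≤ k)
    (hE : ∀ i, (E i).card = k)
    (hw : ∀ i, 0 ≤ w i) (hδ : 0 ≤ δ) (hc : ∀ u v, u ≠ v → cd E w u v ≤ δ)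
    (hD : ∀ v, dg E w v ≤ 1) (hq0 : 0 ≤ q) (hq1 : q ≤ 1) (hg : 0 ≤ g) (v : V) :
    ∑ e, w e * ((1 - ind (E e) v) *
      (dg E w v - q + g - ∑ i, w i * ind (E i) v * hit (E i) (E e)) ^ 2) ≤
    (dg E w v - q) ^ 2 * (∑ i, w i) + 2 * (dg E w v - q) * g * (∑ i, w i) + 2 * g
      - 2 * (dg E w v - q) * (∑ u ∈ univ.erase v, cd E w u v * dg E w u)
      + 4 * k ^ 2 * δ + 2 * g ^ 2 * ∑ i, w i := by
  have hk' : (1:ℝ) ≤ k := by exact_mod_cast hk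
  obtain ⟨hB1, hB2⟩ := PB hE hw hδ hc v (hD v)
  set P := ∑ u ∈ univ.erase v, cd E w u v * dg E w u with hP
  set ℓ : ι → ℝ := fun e => ∑ i, w i * ind (E i) v * hit (E i) (E e) with hℓ
  set B := ∑ e, w e * ((1 - ind (E e) v) * ∑ i, w i * ind (E i) v * hit (E i) (E e)) with hB
  set W := ∑ i, w i with hW
  set D := dg E w v with hDv
  have hD0 : 0 ≤ D := dg_nonneg hw v
  have hD1 : D ≤ 1 := hD v
  have hℓ0 : ∀ e, 0 ≤ ℓ e := fun e => Finset.sum_nonneg fun i _ =>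
    mul_nonneg (mul_nonneg (hw i) (ind_nonneg _ _)) (hit_nonneg _ _)
  have hPle : P ≤ k := by
    calc P ≤ ∑ u ∈ univ.erase v, cd E w u v := Finset.sum_le_sum fun u _ => by
            have := cd_nonneg (E := E) hw u v
            nlinarith [hD u]
      _ = (k - 1) * D := sum_cd_erase hE v
      _ ≤ k := by nlinarith
  have hQ : ∑ e, w e * ((1 - ind (E e) v) * ℓ e ^ 2) ≤ k ^ 2 * δ := by
    calc ∑ e, w e * ((1 - ind (E e) v) * ℓ e ^ 2)
        ≤ ∑ e, (k * δ) * (w e * ((1 - ind (E e) v) * ℓ e)) := by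
          refine Finset.sum_le_sum fun e _ => ?_
          by_cases hv : v ∈ E e
          · simp [ind, hv]
          · have h1 : ℓ e ≤ k * δ := ell_le hE hw hc e v hv
            have h2 : ind (E e) v = 0 := by simp [ind, hv]
            rw [h2]
            have : ℓ e ^ 2 ≤ (k * δ) * ℓ e := by nlinarith [hℓ0 e]
            nlinarith [hw e, mul_le_mul_of_nonneg_left this (hw e)]
      _ = (k * δ) * B := by rw [← Finset.mul_sum]
      _ ≤ (k * δ) * k := mul_le_mul_of_nonneg_left (hB1.trans hPle) (by positivity)
      _ = _ := by ring
  have hpt : ∀ e, w e * ((1 - ind (E e) v) * (D - q + g - ℓ e) ^ 2) ≤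
      (D - q) ^ 2 * w e + 2 * (D - q) * g * (w e - w e * ind (E e) v)
      - 2 * (D - q) * (w e * ((1 - ind (E e) v) * ℓ e)) + 2 * g ^ 2 * w e
      + 2 * (w e * ((1 - ind (E e) v) * ℓ e ^ 2)) := by
    intro e
    by_cases hv : v ∈ E e
    · have h2 : ind (E e) v = 1 := by simp [ind, hv]
      rw [h2]
      have := mul_nonneg (sq_nonneg (D - q)) (hw e)
      have := mul_nonneg (sq_nonneg g) (hw e)
      nlinarith
    · have h2 : ind (E e) v = 0 := by simp [ind, hv]
      rw [h2]
      have := mul_nonneg (sq_nonneg (g + ℓ e)) (hw e)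
      nlinarith
  have hsum := Finset.sum_le_sum fun e (_ : e ∈ univ) => hpt e
  simp only [Finset.sum_add_distrib, Finset.sum_sub_distrib, ← Finset.mul_sum] at hsum
  have hDe : ∑ e, w e * ind (E e) v = D := rfl
  rw [hDe] at hsum
  have ha1 : D - q ≤ 1 := by linarith
  have ha2 : -1 ≤ D - q := by linarith
  have h3 : - 2 * (D - q) * g * D ≤ 2 * g := by
    have : -((D - q) * D) ≤ 1 := by nlinarith
    nlinarith
  have h4 : (D - q) * (P - B) ≤ k ^ 2 * δ := by nlinarith
  have hBB : ∑ e, w e * ((1 - ind (E e) v) * ℓ e) = B := rfl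
  rw [hBB] at hsum
  calc _ ≤ _ := hsum
    _ ≤ _ := by nlinarith

lemma expect {E : ι → Finset V} {w : ι → ℝ} {k : ℕ} {δ q g θ : ℝ} (hk : 1 ≤ k)
    (hE : ∀ i, (E i).card = k)
    (hw : ∀ i, 0 ≤ w i) (hδ : 0 ≤ δ) (hc : ∀ u v, u ≠ v → cd E w u v ≤ δ)
    (hD : ∀ v, dg E w v ≤ 1) (hq0 : 0 ≤ q) (hq1 : q ≤ 1) (hg : 0 ≤ g)
    (L : Finset V) (hL : ∀ v, v ∉ L → dg E w v = 0)
    (hθ : |g * L.card / k - q * (k - 1)| ≤ θ) :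
    ∑ e, w e * ∑ v ∈ L, ((1 - ind (E e) v) *
      (dg E w v - q + g - ∑ i, w i * ind (E i) v * hit (E i) (E e)) ^ 2) ≤
    (∑ i, w i) * (∑ v ∈ L, (dg E w v - q) ^ 2) + 
     (2 * g * L.card / k + 2 * (k - 1)) * (∑ v ∈ L, (dg E w v - q) ^ 2) + 
     2 * L.card * θ + 2 * g * L.card + 4 * k ^ 2 * δ * L.card + 2 * g ^ 2 * (∑ i, w i) * L.card := by
  have hk' : (1:ℝ) ≤ k := by exact_mod_cast hk
  set Φ := ∑ v ∈ L, (dg E w v - q) ^ 2 with hΦ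
  set W := ∑ i, w i with hW
  set a : V → ℝ := fun v => dg E w v - q with ha
  set A := ∑ v ∈ L, a v with hA
  have hlhs : ∑ e, w e * ∑ v ∈ L, ((1 - ind (E e) v) *
      (dg E w v - q + g - ∑ i, w i * ind (E i) v * hit (E i) (E e)) ^ 2) =
      ∑ v ∈ L, ∑ e, w e * ((1 - ind (E e) v) *
      (dg E w v - q + g - ∑ i, w i * ind (E i) v * hit (E i) (E e)) ^ 2) := by
    simp_rw [Finset.mul_sum]
    rw [Finset.sum_comm]
  rw [hlhs]
  have h1 := Finset.sum_le_sum fun v (_ : v ∈ L) => per_vertex hk hE hw hδ hc hD hq0 hq1 hg v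
  refine h1.trans ?_
  clear h1 hlhs
  have hc0 : ∀ u v, u ∉ L → cd E w u v = 0 := by
    intro u v hu
    have h0 := hL u hu
    unfold dg at h0
    rw [Finset.sum_eq_zero_iff_of_nonneg (fun i _ => mul_nonneg (hw i) (ind_nonneg _ _))] at h0
    refine Finset.sum_eq_zero fun i hi => by rw [h0 i hi, zero_mul]
  have hWA : k * W = q * L.card + A := by
    rw [← sum_dg hE, hA, ha]
    simp only [Finset.sum_sub_distrib, Finset.sum_const, nsmul_eq_mul]
    rw [← Finset.sum_subset (Finset.subset_univ L) (fun v _ hv => hL v hv)]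
    ring
  have hAsq : A ^ 2 ≤ L.card * Φ := by
    exact sq_sum_le_card_mul_sum_sq
  have hAle : |A| ≤ L.card := by
    calc |A| ≤ ∑ v ∈ L, |a v| := Finset.abs_sum_le_sum_abs _ _
      _ ≤ ∑ v ∈ L, 1 := Finset.sum_le_sum fun v _ => by
          rw [abs_le]; constructor <;> simp only [ha] <;> linarith [hD v, dg_nonneg (E := E) hw v]
      _ = L.card := by simp
  -- the double sum
  have hPv : ∀ v, ∑ u ∈ univ.erase v, cd E w u v * dg E w u =
      q * ((k - 1) * dg E w v) + ∑ u ∈ L.erase v, cd E w u v * a u := by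
    intro v
    have e1 : ∑ u ∈ L.erase v, cd E w u v * a u = ∑ u ∈ univ.erase v, cd E w u v * a u := by
      refine Finset.sum_subset (Finset.erase_subset_erase _ (Finset.subset_univ L)) ?_
      intro u hu hu'
      have : u ∉ L := fun h => hu' (Finset.mem_erase.mpr ⟨Finset.ne_of_mem_erase hu, h⟩)
      rw [hc0 u v this, zero_mul]
    rw [e1, ← sum_cd_erase hE, Finset.mul_sum, ← Finset.sum_add_distrib]
    refine Finset.sum_congr rfl fun u _ => by simp only [ha]; ring
  have hrow : ∀ v, ∑ u ∈ L.erase v, cd E w u v ≤ k - 1 := by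
    intro v
    calc ∑ u ∈ L.erase v, cd E w u v ≤ ∑ u ∈ univ.erase v, cd E w u v :=
          Finset.sum_le_sum_of_subset_of_nonneg
            (Finset.erase_subset_erase _ (Finset.subset_univ L)) fun u _ _ => cd_nonneg hw u v
      _ = (k - 1) * dg E w v := sum_cd_erase hE v
      _ ≤ k - 1 := by nlinarith [hD v]
  have hcross : -(∑ v ∈ L, 2 * a v * ∑ u ∈ L.erase v, cd E w u v * a u) ≤ 2 * (k - 1) * Φ := by
    have e1 : -(∑ v ∈ L, 2 * a v * ∑ u ∈ L.erase v, cd E w u v * a u) ≤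
        ∑ v ∈ L, ∑ u ∈ L.erase v, (cd E w u v * a v ^ 2 + cd E w u v * a u ^ 2) := by
      rw [← Finset.sum_neg_distrib]
      refine Finset.sum_le_sum fun v _ => ?_
      rw [Finset.mul_sum, ← Finset.sum_neg_distrib]
      refine Finset.sum_le_sum fun u _ => ?_
      nlinarith [mul_nonneg (cd_nonneg (E := E) hw u v) (sq_nonneg (a u + a v))]
    have e2 : ∑ v ∈ L, ∑ u ∈ L.erase v, cd E w u v * a v ^ 2 ≤ (k - 1) * Φ := by
      rw [hΦ, Finset.mul_sum]
      refine Finset.sum_le_sum fun v _ => ?_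
      rw [← Finset.sum_mul]
      exact mul_le_mul_of_nonneg_right (hrow v) (sq_nonneg _)
    have e3 : ∑ v ∈ L, ∑ u ∈ L.erase v, cd E w u v * a u ^ 2 ≤ (k - 1) * Φ := by
      refine le_trans (le_of_eq ?_) e2
      have : ∀ f : V → V → ℝ, ∑ v ∈ L, ∑ u ∈ L.erase v, f u v = ∑ v ∈ L, ∑ u ∈ L.erase v, f v u := by
        intro f
        refine Finset.sum_comm' fun x y => ?_
        simp only [Finset.mem_erase, ne_eq]
        tauto
      rw [this (fun u v => cd E w u v * a u ^ 2)]
      refine Finset.sum_congr rfl fun v _ => Finset.sum_congr rfl fun u _ => by rw [cd_comm]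
    simp only [Finset.sum_add_distrib] at e1
    linarith
  have hsum : ∑ v ∈ L, ((dg E w v - q) ^ 2 * W + 2 * (dg E w v - q) * g * W + 2 * g
      - 2 * (dg E w v - q) * (∑ u ∈ univ.erase v, cd E w u v * dg E w u)
      + 4 * k ^ 2 * δ + 2 * g ^ 2 * W) =
      W * Φ + 2 * g * W * A + 2 * g * L.card - 2 * q * (k - 1) * (Φ + q * A)
      - (∑ v ∈ L, 2 * a v * ∑ u ∈ L.erase v, cd E w u v * a u)
      + 4 * k ^ 2 * δ * L.card + 2 * g ^ 2 * W * L.card := by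
    have : ∀ v, (dg E w v - q) ^ 2 * W + 2 * (dg E w v - q) * g * W + 2 * g
      - 2 * (dg E w v - q) * (∑ u ∈ univ.erase v, cd E w u v * dg E w u)
      + 4 * k ^ 2 * δ + 2 * g ^ 2 * W =
      W * (dg E w v - q) ^ 2 + 2 * g * W * a v + 2 * g 
      - 2 * q * (k - 1) * ((dg E w v - q) ^ 2 + q * a v)
      - (2 * a v * ∑ u ∈ L.erase v, cd E w u v * a u) + 4 * k ^ 2 * δ + 2 * g ^ 2 * W := by
      intro v
      rw [hPv]; simp only [ha]; ring
    simp_rw [this]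
    simp only [Finset.sum_add_distrib, Finset.sum_sub_distrib, ← Finset.mul_sum, Finset.sum_const,
      nsmul_eq_mul]
    rw [← hΦ, ← hA]
    ring
  rw [hsum]
  have hΦ0 : 0 ≤ Φ := Finset.sum_nonneg fun v _ => sq_nonneg _
  have hWe : W = (q * L.card + A) / k := by field_simp; linarith
  have hmid : 2 * g * W * A - 2 * q * (k - 1) * (q * A) ≤ 2 * g * L.card / k * Φ + 2 * L.card * θ := by
    have e1 : 2 * g * W * A - 2 * q * (k - 1) * (q * A) =
       2 * g / k * A ^ 2 + 2 * q * (A * (g * L.card / k - q * (k - 1))) := by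
      rw [hWe]; field_simp; ring
    have e2 : 2 * g / k * A ^ 2 ≤ 2 * g / k * (L.card * Φ) :=
      mul_le_mul_of_nonneg_left hAsq (by positivity)
    have e3 : A * (g * L.card / k - q * (k - 1)) ≤ L.card * θ := by
      calc _ ≤ |A * (g * L.card / k - q * (k - 1))| := le_abs_self _
        _ = |A| * |g * L.card / k - q * (k - 1)| := abs_mul _ _
        _ ≤ L.card * θ := mul_le_mul hAle hθ (abs_nonneg _) (by positivity)
    have hθ0 : 0 ≤ L.card * θ := mul_nonneg (by positivity) ((abs_nonneg _).trans hθ)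
    have e4 : q * (A * (g * L.card / k - q * (k - 1))) ≤ L.card * θ := by
      nlinarith
    rw [e1]
    have e5 : 2 * g / k * (L.card * Φ) = 2 * g * L.card / k * Φ := by ring
    linarith
  have hneg : 0 ≤ 2 * q * (k - 1) * Φ := by
    have : (0:ℝ) ≤ k - 1 := by linarith
    positivity
  linarith
end
end Nib

open Finset
set_option linter.unusedSectionVars false
namespace Nib

lemma pow_diff (p h : ℝ) (hh : 0 ≤ h) (hph : h ≤ p) (hp1 : p ≤ 1) (j : ℕ) :
    0 ≤ p ^ j - (p - h) ^ j ∧ p ^ j - (p - h) ^ j ≤ j * h ∧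
    p * (p ^ j - (p - h) ^ j) ≤ j * h * p ^ j ∧
    j * h * p ^ j - j ^ 2 * h ^ 2 ≤ p * (p ^ j - (p - h) ^ j) := by
  have hp0 : 0 ≤ p := hh.trans hph
  induction j with
  | zero => simp
  | succ j ih =>
    obtain ⟨h1, h2, h3, h4⟩ := ih
    set g := p ^ j - (p - h) ^ j with hg
    have e : p ^ (j+1) - (p - h) ^ (j+1) = p * g + h * (p ^ j - g) := by
      rw [hg]; ring
    have e1 : 0 ≤ p ^ j - g := by rw [hg]; simp; exact pow_nonneg (by linarith) _
    have e2 : p ^ j - g ≤ 1 := by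
      have : p ^ j ≤ 1 := pow_le_one₀ hp0 hp1
      linarith
    rw [e]
    push_cast
    have hpg : p * g ≤ j * h := (mul_le_of_le_one_left h1 hp1).trans h2
    have hj : (0:ℝ) ≤ j := by positivity
    refine ⟨by positivity, by nlinarith, ?_, ?_⟩
    · have := mul_le_mul_of_nonneg_left h3 hp0
      have : 0 ≤ h * (p * g) := by positivity
      rw [pow_succ]
      nlinarith
    · have t1 := mul_le_mul_of_nonneg_left h4 hp0
      have t2 := mul_le_mul_of_nonneg_left hpg hh
      have t3 : p * (j ^ 2 * h ^ 2) ≤ j ^ 2 * h ^ 2 := mul_le_of_le_one_left (by positivity) hp1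
      have t4 : 0 ≤ j * h ^ 2 := by positivity
      rw [pow_succ]
      nlinarith [sq_nonneg h]

section
variable {V ι : Type} [Fintype V] [DecidableEq V] [Fintype ι]

noncomputable def wr (E : ι → Finset V) (w : ι → ℝ) (L : Finset V) (i : ι) : ℝ :=
  if E i ⊆ L then w i else 0

noncomputable def phi (E : ι → Finset V) (w : ι → ℝ) (k : ℕ) (L : Finset V) : ℝ :=
  ∑ v ∈ L, (dg E (wr E w L) v - ((L.card : ℝ) / Fintype.card V) ^ (k - 1)) ^ 2

lemma wr_nonneg {E : ι → Finset V} {w : ι → ℝ} (hw : ∀ i, 0 ≤ w i) (L : Finset V) (i : ι) :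
    0 ≤ wr E w L i := by unfold wr; split_ifs; exacts [hw i, le_rfl]
lemma wr_le {E : ι → Finset V} {w : ι → ℝ} (hw : ∀ i, 0 ≤ w i) (L : Finset V) (i : ι) :
    wr E w L i ≤ w i := by unfold wr; split_ifs; exacts [le_rfl, hw i]

lemma wr_sdiff {E : ι → Finset V} {w : ι → ℝ} (L : Finset V) (e i : ι) :
    wr E w (L \ E e) i = wr E w L i - wr E w L i * hit (E i) (E e) := by
  unfold wr hit
  simp only [Finset.subset_sdiff]
  by_cases h1 : E i ⊆ L <;> by_cases h2 : Disjoint (E i) (E e) <;> simp [h1, h2]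

lemma dg_wr_le {E : ι → Finset V} {w : ι → ℝ} (hw : ∀ i, 0 ≤ w i) (L : Finset V) (v : V) :
    dg E (wr E w L) v ≤ dg E w v :=
  Finset.sum_le_sum fun i _ => mul_le_mul_of_nonneg_right (wr_le hw L i) (ind_nonneg _ _)

lemma cd_wr_le {E : ι → Finset V} {w : ι → ℝ} (hw : ∀ i, 0 ≤ w i) (L : Finset V) (u v : V) :
    cd E (wr E w L) u v ≤ cd E w u v :=
  Finset.sum_le_sum fun i _ => mul_le_mul_of_nonneg_right
    (mul_le_mul_of_nonneg_right (wr_le hw L i) (ind_nonneg _ _)) (ind_nonneg _ _)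

lemma dg_wr_zero {E : ι → Finset V} {w : ι → ℝ} (L : Finset V) (v : V) (hv : v ∉ L) :
    dg E (wr E w L) v = 0 := by
  refine Finset.sum_eq_zero fun i _ => ?_
  unfold wr ind
  by_cases h : E i ⊆ L
  · have : v ∉ E i := fun h' => hv (h h')
    simp [this]
  · simp [h]

lemma dg_wr_sdiff {E : ι → Finset V} {w : ι → ℝ} (L : Finset V) (e : ι) (v : V) :
    dg E (wr E w (L \ E e)) v = dg E (wr E w L) v -
      ∑ i, wr E w L i * ind (E i) v * hit (E i) (E e) := by
  unfold dg
  rw [← Finset.sum_sub_distrib]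
  refine Finset.sum_congr rfl fun i _ => ?_
  rw [wr_sdiff]; ring

set_option maxHeartbeats 1000000 in
lemma step {E : ι → Finset V} {w : ι → ℝ} {k : ℕ} {δ κ : ℝ} (hk : 1 ≤ k)
    (hE : ∀ i, (E i).card = k)
    (hw : ∀ i, 0 ≤ w i) (hδ : 0 ≤ δ) (hc : ∀ u v, u ≠ v → cd E w u v ≤ δ)
    (hD : ∀ v, dg E w v ≤ 1) (L : Finset V) (hLk : k ≤ L.card) (hκ : 0 < κ)
    (hW : κ * Fintype.card V ≤ ∑ i, wr E w L i) :
    ∃ e, E e ⊆ L ∧ phi E w k (L \ E e) ≤ phi E w k L +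
      (4 * k * phi E w k L + 6 * k ^ 4 + 4 * k ^ 2 * δ * Fintype.card V) / (κ * Fintype.card V) := by
  have hLn : L.card ≤ Fintype.card V := Finset.card_le_univ L
  have hn0 : 0 < Fintype.card V := by omega
  set n : ℝ := (Fintype.card V : ℝ) with hn
  have hnpos : 0 < n := by rw [hn]; exact_mod_cast hn0
  have hkpos : (1:ℝ) ≤ k := by exact_mod_cast hk
  have hLn' : (L.card : ℝ) ≤ n := by rw [hn]; exact_mod_cast hLn
  have hLk' : (k : ℝ) ≤ L.card := by exact_mod_cast hLk
  set p : ℝ := L.card / n with hp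
  set h : ℝ := k / n with hh
  have hp1 : p ≤ 1 := by rw [hp, div_le_one hnpos]; exact hLn'
  have hhp : h ≤ p := by rw [hp, hh]; gcongr
  have hh0 : 0 < h := by positivity
  have hp0 : 0 ≤ p := hh0.le.trans hhp
  obtain ⟨j, rfl⟩ : ∃ j, k = j + 1 := ⟨k - 1, by omega⟩
  obtain ⟨g0, g1, g2, g3⟩ := pow_diff p h hh0.le hhp hp1 j
  set g := p ^ j - (p - h) ^ j with hg
  set W := ∑ i, wr E w L i with hWd
  have hWpos : 0 < W := lt_of_lt_of_le (by positivity) hW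
  have hDr : ∀ v, dg E (wr E w L) v ≤ 1 := fun v => (dg_wr_le hw L v).trans (hD v)
  have hWn : W ≤ n := by
    have h1 : ((j+1 : ℕ) : ℝ) * W ≤ n := by
      rw [← sum_dg hE]
      calc _ ≤ ∑ v : V, (1:ℝ) := Finset.sum_le_sum fun v _ => hDr v
        _ = n := by simp [hn]
    nlinarith
  have hjk : (j:ℝ) ≤ ((j+1 : ℕ) : ℝ) := by push_cast; linarith
  have hgj : g ≤ ((j+1:ℕ):ℝ) ^ 2 / n := by
    refine g1.trans ?_
    rw [hh, pow_two, mul_div_assoc]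
    gcongr
  have hθ : |g * L.card / ((j+1:ℕ):ℝ) - p ^ j * (((j+1:ℕ):ℝ) - 1)| ≤ ((j+1:ℕ):ℝ) ^ 3 / n := by
    have e1 : g * L.card / ((j+1:ℕ):ℝ) = p * g / h := by
      rw [hp, hh]; field_simp
    have e2 : (((j+1:ℕ):ℝ) - 1) = j := by push_cast; ring
    rw [e1, e2]
    have e3 : ((j+1:ℕ):ℝ) ^ 3 / n = ((j+1:ℕ):ℝ) ^ 2 * h := by rw [hh]; ring
    have e4 : (j:ℝ) ^ 2 * h ≤ ((j+1:ℕ):ℝ) ^ 2 * h := by gcongr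
    rw [e3, abs_le]
    constructor
    · have : (j * h * p ^ j - j ^ 2 * h ^ 2) / h ≤ p * g / h := by gcongr
      have e5 : (j * h * p ^ j - j ^ 2 * h ^ 2) / h = j * p ^ j - j ^ 2 * h := by field_simp
      rw [e5] at this
      nlinarith
    · have : p * g / h ≤ j * h * p ^ j / h := by gcongr
      have e5 : j * h * p ^ j / h = j * p ^ j := by field_simp
      rw [e5] at this
      have : 0 ≤ ((j+1:ℕ):ℝ) ^ 2 * h := by positivity
      nlinarith
  have key := expect (E := E) (w := wr E w L) (k := j + 1) (δ := δ) (q := p ^ j) (g := g) 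
    hk hE (wr_nonneg hw L) hδ (fun u v huv => (cd_wr_le hw L u v).trans (hc u v huv)) hDr
    (by positivity) (pow_le_one₀ hp0 hp1) g0 L (fun v hv => dg_wr_zero L v hv) hθ
  have hphi : phi E w (j+1) L = ∑ v ∈ L, (dg E (wr E w L) v - p ^ j) ^ 2 := rfl
  rw [← hphi, ← hWd] at key
  set Φ := phi E w (j+1) L with hΦ
  have hΦ0 : 0 ≤ Φ := Finset.sum_nonneg fun v _ => sq_nonneg _
  set kk : ℝ := ((j+1:ℕ):ℝ) with hkk
  set X := 4 * kk * Φ + 6 * kk ^ 4 + 4 * kk ^ 2 * δ * n with hX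
  have hX0 : 0 ≤ X := by positivity
  have key2 : ∑ e, wr E w L e * ∑ v ∈ L, ((1 - ind (E e) v) *
      (dg E (wr E w L) v - p ^ j + g - ∑ i, wr E w L i * ind (E i) v * hit (E i) (E e)) ^ 2) ≤
      W * Φ + X := by
    refine key.trans ?_
    have gn : g * n ≤ kk ^ 2 := by rwa [le_div_iff₀ hnpos] at hgj
    have gL : g * L.card ≤ kk ^ 2 := (mul_le_mul_of_nonneg_left hLn' g0).trans gn
    have a1 : 2 * g * L.card / kk ≤ 2 * kk := by
      rw [div_le_iff₀ (by positivity)]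
      have : kk ^ 2 = kk * kk := sq kk
      linarith
    have a1' : (2 * g * L.card / kk + 2 * (kk - 1)) * Φ ≤ 4 * kk * Φ := by
      apply mul_le_mul_of_nonneg_right _ hΦ0; linarith
    have a2 : 2 * L.card * (kk ^ 3 / n) ≤ 2 * kk ^ 3 := by
      have : (L.card : ℝ) / n ≤ 1 := hp1
      calc 2 * L.card * (kk ^ 3 / n) = 2 * kk ^ 3 * (L.card / n) := by ring
        _ ≤ 2 * kk ^ 3 * 1 := by gcongr
        _ = _ := by ring
    have a3 : 4 * kk ^ 2 * δ * L.card ≤ 4 * kk ^ 2 * δ * n := by gcongr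
    have a4 : 2 * g ^ 2 * W * L.card ≤ 2 * kk ^ 4 := by
      calc 2 * g ^ 2 * W * L.card ≤ 2 * g ^ 2 * n * n := by gcongr
        _ = 2 * (g * n) ^ 2 := by ring
        _ ≤ 2 * (kk ^ 2) ^ 2 := by gcongr
        _ = _ := by ring
    have b3 : kk ^ 3 ≤ kk ^ 4 := pow_le_pow_right₀ hkpos (by norm_num)
    have b2 : kk ^ 2 ≤ kk ^ 4 := pow_le_pow_right₀ hkpos (by norm_num)
    rw [hX]
    linarith
  by_contra hcon
  push Not at hcon
  have hS : ∀ e, E e ⊆ L → ∑ v ∈ L, ((1 - ind (E e) v) *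
      (dg E (wr E w L) v - p ^ j + g - ∑ i, wr E w L i * ind (E i) v * hit (E i) (E e)) ^ 2)
      = phi E w (j+1) (L \ E e) := by
    intro e he
    unfold phi
    have hcard : (((L \ E e).card : ℕ) : ℝ) / n = p - h := by
      rw [Finset.card_sdiff_of_subset he, hE, Nat.cast_sub hLk, hp, hh]; ring
    rw [← hn, hcard]
    rw [← Finset.sum_sdiff he, Finset.sum_eq_zero (s := E e), add_zero]
    · refine Finset.sum_congr rfl fun v hv => ?_
      rw [dg_wr_sdiff]
      have : ind (E e) v = 0 := by simp [ind, (Finset.mem_sdiff.mp hv).2]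
      rw [this, hg]
      simp only [Nat.add_sub_cancel]
      ring
    · intro v hv
      have : ind (E e) v = 1 := by simp [ind, hv]
      rw [this]; ring
  have hXW : X / W ≤ X / (κ * n) := div_le_div_of_nonneg_left hX0 (by positivity) hW
  have hlt : ∑ e, wr E w L e * (Φ + X / W) < ∑ e, wr E w L e * ∑ v ∈ L, ((1 - ind (E e) v) *
      (dg E (wr E w L) v - p ^ j + g - ∑ i, wr E w L i * ind (E i) v * hit (E i) (E e)) ^ 2) := by
    have hlt' : ∀ e, wr E w L e ≠ 0 → Φ + X / W < ∑ v ∈ L, ((1 - ind (E e) v) *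
      (dg E (wr E w L) v - p ^ j + g - ∑ i, wr E w L i * ind (E i) v * hit (E i) (E e)) ^ 2) := by
      intro e he
      have heL : E e ⊆ L := by
        by_contra h'; exact he (by simp [wr, h'])
      rw [hS e heL]
      have := hcon e heL
      linarith
    apply Finset.sum_lt_sum
    · intro e _
      rcases eq_or_ne (wr E w L e) 0 with h0 | h0
      · rw [h0]; simp
      · exact mul_le_mul_of_nonneg_left (hlt' e h0).le (wr_nonneg hw L e)
    · have : ∃ e ∈ univ, 0 < wr E w L e := by
        by_contra h'
        push Not at h'
        have := Finset.sum_nonpos h'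
        linarith
      obtain ⟨e, he, hpos⟩ := this
      exact ⟨e, he, mul_lt_mul_of_pos_left (hlt' e hpos.ne') hpos⟩
  rw [← Finset.sum_mul, ← hWd] at hlt
  have : W * (Φ + X / W) = W * Φ + X := by field_simp
  linarith

end
end Nib

open Finset
set_option linter.unusedSectionVars false
namespace Nib

lemma W_lower {V ι : Type} [Fintype V] [DecidableEq V] [Fintype ι]
    {E : ι → Finset V} {w : ι → ℝ} {k : ℕ} {ε : ℝ} (hk : 1 ≤ k)
    (hE : ∀ i, (E i).card = k) (hε : 0 < ε) (hn : 0 < Fintype.card V)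
    (L : Finset V) (hL : ε * Fintype.card V ≤ L.card)
    (hΦ : phi E w k L ≤ (ε ^ (k-1)) ^ 2 * ε / 2 * Fintype.card V) :
    (ε ^ (k-1) * ε / (4 * k)) * Fintype.card V ≤ ∑ i, wr E w L i := by
  have hkpos : (0:ℝ) < k := by exact_mod_cast hk
  have hnpos : (0:ℝ) < Fintype.card V := by exact_mod_cast hn
  set n : ℝ := (Fintype.card V : ℝ) with hnd
  set q0 := ε ^ (k-1) with hq0
  have hq0pos : 0 < q0 := by positivity
  have hq : q0 ≤ ((L.card : ℝ) / n) ^ (k-1) := by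
    rw [hq0]; gcongr; rwa [le_div_iff₀ hnpos]
  set q := ((L.card : ℝ) / n) ^ (k-1) with hqd
  have h1 : k * ∑ i, wr E w L i = ∑ v ∈ L, dg E (wr E w L) v := by
    rw [← sum_dg hE]
    rw [← Finset.sum_subset (Finset.subset_univ L) (fun v _ hv => dg_wr_zero L v hv)]
  have h2 : ∀ v ∈ L, q0 / 2 - (dg E (wr E w L) v - q) ^ 2 / (2 * q0) ≤ dg E (wr E w L) v := by
    intro v _
    set a := dg E (wr E w L) v - q with ha
    have : dg E (wr E w L) v = q + a := by rw [ha]; ring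
    rw [this]
    have e : q0 / 2 - a ^ 2 / (2 * q0) = q0 + a - (q0 + a) ^ 2 / (2 * q0) := by
      field_simp; ring
    rw [e]
    have : 0 ≤ (q0 + a) ^ 2 / (2 * q0) := by positivity
    linarith
  have h3 := Finset.sum_le_sum h2
  rw [Finset.sum_sub_distrib, ← Finset.sum_div (f := fun v => (dg E (wr E w L) v - q) ^ 2), ← h1] at h3
  have h4 : ∑ v ∈ L, (dg E (wr E w L) v - q) ^ 2 = phi E w k L := rfl
  rw [h4, Finset.sum_const, nsmul_eq_mul] at h3
  have h5 : phi E w k L / (2 * q0) ≤ q0 * ε * n / 4 := by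
    rw [div_le_iff₀ (by positivity)]
    refine hΦ.trans (le_of_eq ?_); ring
  have h6 : ε * n * (q0 / 2) ≤ L.card * (q0 / 2) := by gcongr
  have h7 : q0 * ε * n / 4 ≤ k * ∑ i, wr E w L i := by linarith
  rw [div_mul_eq_mul_div, div_le_iff₀ (by positivity)]
  linarith

theorem nibble (k : ℕ) (hk : 1 ≤ k) (ε : ℝ) (hε : 0 < ε) : ∃ δ > 0, ∃ N : ℕ,
    ∀ (V ι : Type) [Fintype V] [DecidableEq V] [Fintype ι] (E : ι → Finset V) (w : ι → ℝ),
      N ≤ Fintype.card V → (∀ i, (E i).card = k) → (∀ i, 0 ≤ w i) →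
      (∀ v, dg E w v ≤ 1) → (∀ u v, u ≠ v → cd E w u v ≤ δ) →
      ∑ v, (1 - dg E w v) ≤ δ * Fintype.card V →
      ∃ M : Finset ι, (∀ i ∈ M, ∀ j ∈ M, i ≠ j → Disjoint (E i) (E j)) ∧
        (1 - ε) * Fintype.card V / k ≤ M.card := by
  classical
  rcases le_or_gt 1 ε with hε1 | hε1
  · refine ⟨1, one_pos, 0, ?_⟩
    intro V ι _ _ _ E w _ _ _ _ _ _
    refine ⟨∅, by simp, ?_⟩
    simp only [Finset.card_empty, Nat.cast_zero]
    apply div_nonpos_of_nonpos_of_nonneg _ (by positivity)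
    exact mul_nonpos_of_nonpos_of_nonneg (by linarith) (by positivity)
  have hkpos : (1:ℝ) ≤ k := by exact_mod_cast hk
  set q0 := ε ^ (k-1) with hq0
  have hq0pos : 0 < q0 := by positivity
  set κ := q0 * ε / (4 * k) with hκ
  have hκpos : 0 < κ := by positivity
  set K := 6 * (k:ℝ) ^ 4 / κ with hK
  have hKpos : 0 < K := by positivity
  set η := q0 ^ 2 * ε / 2 with hη
  have hηpos : 0 < η := by positivity
  refine ⟨η * Real.exp (-K) / 4, by positivity, ⌈2 * Real.exp K / η⌉₊ + ⌈k / ε⌉₊ + 1, ?_⟩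
  set δ := η * Real.exp (-K) / 4 with hδ
  have hδpos : 0 < δ := by positivity
  intro V ι _ _ _ E w hN hE hw hD hc hdef
  have hn0 : 0 < Fintype.card V := by omega
  set n : ℝ := (Fintype.card V : ℝ) with hn
  have hnpos : 0 < n := by rw [hn]; exact_mod_cast hn0
  have hN1 : 2 * Real.exp K / η ≤ n := by
    refine (Nat.le_ceil _).trans ?_
    rw [hn]; exact_mod_cast by omega
  have hN2 : k / ε ≤ n := by
    refine (Nat.le_ceil _).trans ?_
    rw [hn]; exact_mod_cast by omega
  have hkε : k ≤ ε * n := by rw [div_le_iff₀ hε] at hN2; linarith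
  -- initial potential
  have hinit : phi E w k univ ≤ δ * n := by
    refine le_trans ?_ hdef
    unfold phi
    refine Finset.sum_le_sum fun v _ => ?_
    have e1 : wr E w univ = w := by funext i; simp [wr]
    rw [e1, Finset.card_univ, div_self hnpos.ne', one_pow]
    nlinarith [hD v, dg_nonneg (E := E) hw v]
  have hbound : ∀ t : ℕ, (t:ℝ) ≤ n → (1 + K / n) ^ t * (2 * δ * n + 1) ≤ η * n := by
    intro t ht
    have e1 : (1 + K / n) ^ t ≤ Real.exp K := by
      calc (1 + K / n) ^ t ≤ (Real.exp (K / n)) ^ t := by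
            gcongr; linarith [Real.add_one_le_exp (K / n)]
        _ = Real.exp (t * (K / n)) := by rw [Real.exp_nat_mul]
        _ ≤ Real.exp K := by
            apply Real.exp_le_exp.mpr
            calc t * (K / n) ≤ n * (K / n) := by gcongr
              _ = K := by field_simp
    have e2 : Real.exp K * (2 * δ * n) = η * n / 2 := by
      rw [hδ, Real.exp_neg]; field_simp; ring
    have e3 : Real.exp K ≤ η * n / 2 := by
      rw [div_le_iff₀ hηpos] at hN1; linarith
    calc _ ≤ Real.exp K * (2 * δ * n + 1) := by gcongr
      _ ≤ η * n := by linarith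
  have main : ∀ t : ℕ, ((t:ℝ) < (1 - ε) * n / k + 1) → ∃ M : Finset ι, M.card = t ∧
      (∀ i ∈ M, ∀ j ∈ M, i ≠ j → Disjoint (E i) (E j)) ∧
      phi E w k (univ \ M.biUnion E) + 1 + δ * n ≤ (1 + K / n) ^ t * (2 * δ * n + 1) := by
    intro t
    induction t with
    | zero =>
      intro _
      refine ⟨∅, by simp, by simp, ?_⟩
      simp only [Finset.biUnion_empty, Finset.sdiff_empty, pow_zero, one_mul]
      linarith
    | succ t ih =>
      intro ht
      push_cast at ht
      have ht' : (t:ℝ) < (1 - ε) * n / k := by linarith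
      obtain ⟨M, hMc, hMd, hMΦ⟩ := ih (by linarith)
      set L := univ \ M.biUnion E with hL
      have hbU : (M.biUnion E).card = t * k := by
        rw [Finset.card_biUnion hMd, Finset.sum_congr rfl fun i _ => hE i, Finset.sum_const, hMc]
        simp
      have hLc : (L.card : ℝ) = n - t * k := by
        have := Finset.card_sdiff_add_card_eq_card (Finset.subset_univ (M.biUnion E))
        rw [hbU, Finset.card_univ] at this
        rw [hn, ← this]; push_cast; ring
      have htk : t * k < (1 - ε) * n := by
        rwa [lt_div_iff₀ (by linarith)] at ht'
      have hLε : ε * n ≤ L.card := by rw [hLc]; linarith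
      have hLk : k ≤ L.card := by
        have : (k:ℝ) ≤ L.card := hkε.trans hLε
        exact_mod_cast this
      have htn : (t:ℝ) ≤ n := by
        have : (0:ℝ) ≤ t := by positivity
        nlinarith
      have hΦη : phi E w k L ≤ η * n := by
        have := hbound t htn
        have : 0 < δ * n := by positivity
        linarith
      have hWl := W_lower (E := E) (w := w) hk hE hε hn0 L hLε hΦη
      obtain ⟨e, heL, heΦ⟩ := step hk hE hw hδpos.le hc hD L hLk hκpos hWl
      have hdis : ∀ i ∈ M, Disjoint (E e) (E i) := by
        intro i hi
        rw [Finset.disjoint_left]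
        intro v hv hvi
        have := heL hv
        rw [hL, Finset.mem_sdiff] at this
        exact this.2 (Finset.mem_biUnion.mpr ⟨i, hi, hvi⟩)
      have heM : e ∉ M := by
        intro h
        have := hdis e h
        rw [disjoint_self, Finset.bot_eq_empty] at this
        have h2 := hE e
        rw [this] at h2; simp at h2; omega
      refine ⟨insert e M, by rw [Finset.card_insert_of_notMem heM, hMc], ?_, ?_⟩
      · intro i hi j hj hij
        rw [Finset.mem_insert] at hi hj
        rcases hi with rfl | hi <;> rcases hj with rfl | hj
        · exact absurd rfl hij
        · exact hdis j hj
        · exact (hdis i hi).symm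
        · exact hMd i hi j hj hij
      · have e1 : univ \ (insert e M).biUnion E = L \ E e := by
          rw [Finset.biUnion_insert, hL]
          ext v; simp; tauto
        rw [e1, pow_succ]
        set Φ := phi E w k L
        have hΦ0 : 0 ≤ Φ := Finset.sum_nonneg fun v _ => sq_nonneg _
        have e2 : (4 * k * Φ + 6 * k ^ 4 + 4 * k ^ 2 * δ * n) / (κ * n) ≤
            K / n * (Φ + 1 + δ * n) := by
          have e9 : K / n * (Φ + 1 + δ * n) = (6 * (k:ℝ) ^ 4 * (Φ + 1 + δ * n)) / (κ * n) := by
            rw [hK]; generalize κ = z; ring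
          rw [e9]
          apply div_le_div_of_nonneg_right _ (by positivity)
          have b1 : (k:ℝ) ≤ k ^ 4 := le_self_pow₀ hkpos (by norm_num)
          have b2 : (k:ℝ) ^ 2 ≤ k ^ 4 := pow_le_pow_right₀ hkpos (by norm_num)
          have c1 : k * Φ ≤ k ^ 4 * Φ := by gcongr
          have c2 : (k:ℝ) ^ 2 * (δ * n) ≤ k ^ 4 * (δ * n) := by gcongr
          have c3 : 0 ≤ (k:ℝ) ^ 4 * Φ := by positivity
          have c4 : 0 ≤ (k:ℝ) ^ 4 * (δ * n) := by positivity
          nlinarith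
        have e3 : (Φ + 1 + δ * n) * (1 + K / n) ≤ 
            (1 + K / n) ^ t * (2 * δ * n + 1) * (1 + K / n) := by
          apply mul_le_mul_of_nonneg_right hMΦ (by positivity)
        rw [← hn] at heΦ
        linarith
  obtain ⟨M, hMc, hMd, -⟩ := main ⌈(1 - ε) * n / k⌉₊ (by
    apply Nat.ceil_lt_add_one
    have : 0 < 1 - ε := by linarith
    positivity)
  exact ⟨M, hMd, by rw [hMc]; exact Nat.le_ceil _⟩
end Nib

open Finset
set_option linter.unusedSectionVars false
namespace Nib

section count
variable {α β : Type} [Fintype α] [DecidableEq α] [Fintype β] [DecidableEq β]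

lemma card_one (j : α) (b : β) :
    (∑ f : α → β, if f j = b then (1:ℝ) else 0) * Fintype.card β = (Fintype.card β : ℝ) ^ Fintype.card α := by
  have h1 : (univ.filter fun f : α → β => f j = b) =
      Fintype.piFinset (fun i => if i = j then {b} else univ) := by
    ext f
    simp only [mem_filter, mem_univ, true_and, Fintype.mem_piFinset]
    constructor
    · intro h i; split_ifs with hi
      · subst hi; simp [h]
      · simp
    · intro h; simpa using h j
  rw [Finset.sum_boole, h1, Fintype.card_piFinset, ← Finset.mul_prod_erase univ _ (mem_univ j)]
  rw [Finset.prod_congr rfl (g := fun _ => Fintype.card β) (fun i hi => by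
    simp [Finset.ne_of_mem_erase hi])]
  have : 0 < Fintype.card α := Fintype.card_pos_iff.mpr ⟨j⟩
  simp only [if_true, card_singleton, one_mul, prod_const, card_erase_of_mem (mem_univ j), card_univ]
  push_cast
  rw [← pow_succ]; congr 1; omega

lemma card_two (j j' : α) (hj : j ≠ j') (b b' : β) :
    (∑ f : α → β, if f j = b ∧ f j' = b' then (1:ℝ) else 0) * (Fintype.card β) ^ 2 =
      (Fintype.card β : ℝ) ^ Fintype.card α := by
  have h1 : (univ.filter fun f : α → β => f j = b ∧ f j' = b') =
      Fintype.piFinset (fun i => if i = j then {b} else if i = j' then {b'} else univ) := by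
    ext f
    simp only [mem_filter, mem_univ, true_and, Fintype.mem_piFinset]
    constructor
    · rintro ⟨h, h'⟩ i; split_ifs with hi hi'
      · subst hi; simp [h]
      · subst hi'; simp [h']
      · simp
    · intro h
      refine ⟨by simpa using h j, ?_⟩
      have := h j'
      simpa [hj.symm] using this
  have hj'm : j' ∈ univ.erase j := Finset.mem_erase.mpr ⟨hj.symm, mem_univ _⟩
  rw [Finset.sum_boole, h1, Fintype.card_piFinset, ← Finset.mul_prod_erase univ _ (mem_univ j),
    ← Finset.mul_prod_erase _ _ hj'm]
  rw [Finset.prod_congr rfl (g := fun _ => Fintype.card β) (fun i hi => by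
    simp [Finset.ne_of_mem_erase hi, Finset.ne_of_mem_erase (Finset.mem_of_mem_erase hi)])]
  have : 2 ≤ Fintype.card α := by
    have := Finset.card_le_univ ({j, j'} : Finset α)
    rwa [Finset.card_pair hj] at this
  simp only [if_true, if_neg hj.symm, card_singleton, one_mul, prod_const, card_erase_of_mem hj'm,
    card_erase_of_mem (mem_univ j), card_univ]
  push_cast
  rw [← pow_add]; congr 1; omega
end count

section dummy
variable {V ι : Type} [Fintype V] [DecidableEq V] [Fintype ι]

def E' (E : ι → Finset V) (r q : ℕ) : ι ⊕ (V × (Fin r → Fin q)) → Finset (V ⊕ (Fin r × Fin q))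
  | .inl i => (E i).disjSum ∅
  | .inr vf => ({vf.1} : Finset V).disjSum (univ.image fun j => (j, vf.2 j))

noncomputable def w' (E : ι → Finset V) (w : ι → ℝ) (r q : ℕ) : ι ⊕ (V × (Fin r → Fin q)) → ℝ
  | .inl i => w i
  | .inr vf => (1 - dg E w vf.1) / (q:ℝ) ^ r

lemma E'_card {E : ι → Finset V} {r q : ℕ} (hE : ∀ i, (E i).card = r + 1) (x) :
    (E' E r q x).card = r + 1 := by
  rcases x with i | ⟨v, f⟩
  · simp [E', hE]
  · have : (univ.image fun j : Fin r => (j, f j)).card = r := by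
      rw [Finset.card_image_of_injective _ (fun a b h => (Prod.mk.inj h).1)]; simp
    simp [E', this]; ring

@[simp] lemma ind_ll (E : ι → Finset V) (r q : ℕ) (i : ι) (v : V) :
    ind (E' E r q (.inl i)) (.inl v) = ind (E i) v := by simp [E', ind]
@[simp] lemma ind_lr (E : ι → Finset V) (r q : ℕ) (i : ι) (b : Fin r × Fin q) :
    ind (E' E r q (.inl i)) (.inr b) = 0 := by simp [E', ind]
@[simp] lemma ind_rl (E : ι → Finset V) (r q : ℕ) (u : V) (f : Fin r → Fin q) (v : V) :
    ind (E' E r q (.inr (u, f))) (.inl v) = if u = v then 1 else 0 := by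
  simp [E', ind, eq_comm]
@[simp] lemma ind_rr (E : ι → Finset V) (r q : ℕ) (u : V) (f : Fin r → Fin q) (b : Fin r × Fin q) :
    ind (E' E r q (.inr (u, f))) (.inr b) = if f b.1 = b.2 then 1 else 0 := by
  rcases b with ⟨j, b⟩
  simp [E', ind]

lemma cnt1 {r q : ℕ} (hq : 0 < q) (j : Fin r) (b : Fin q) :
    (∑ f : Fin r → Fin q, if f j = b then (1:ℝ) else 0) / (q:ℝ) ^ r = 1 / q := by
  have := card_one j b
  have hq' : (0:ℝ) < q := by exact_mod_cast hq
  simp only [Fintype.card_fin] at this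
  rw [div_eq_div_iff (by positivity) (by positivity), this, one_mul]

lemma cnt2 {r q : ℕ} (hq : 0 < q) (j j' : Fin r) (hj : j ≠ j') (b b' : Fin q) :
    (∑ f : Fin r → Fin q, if f j = b ∧ f j' = b' then (1:ℝ) else 0) / (q:ℝ) ^ r = 1 / q ^ 2 := by
  have := card_two j j' hj b b'
  have hq' : (0:ℝ) < q := by exact_mod_cast hq
  simp only [Fintype.card_fin] at this
  rw [div_eq_div_iff (by positivity) (by positivity), this, one_mul]

lemma dg'_l {E : ι → Finset V} {w : ι → ℝ} {r q : ℕ} (hq : 0 < q) (v : V) :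
    dg (E' E r q) (w' E w r q) (.inl v) = 1 := by
  have hq' : (0:ℝ) < q := by exact_mod_cast hq
  unfold dg
  rw [Fintype.sum_sum_type, Fintype.sum_prod_type]
  simp only [ind_ll, ind_rl, w', mul_ite, mul_one, mul_zero]
  rw [Finset.sum_comm]
  simp only [Finset.sum_ite_eq', mem_univ, if_true, sum_const, card_univ, Fintype.card_pi,
    Fintype.card_fin, prod_const, nsmul_eq_mul]
  push_cast
  unfold dg
  field_simp
  ring

lemma dg'_r {E : ι → Finset V} {w : ι → ℝ} {r q : ℕ} (hq : 0 < q) (b : Fin r × Fin q) :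
    dg (E' E r q) (w' E w r q) (.inr b) = (∑ v, (1 - dg E w v)) / q := by
  conv_lhs => unfold dg
  rw [Fintype.sum_sum_type, Fintype.sum_prod_type]
  simp only [ind_lr, ind_rr, w', mul_zero, sum_const_zero, zero_add]
  have : ∀ v, ∑ f : Fin r → Fin q, (1 - dg E w v) / (q:ℝ) ^ r * (if f b.1 = b.2 then (1:ℝ) else 0)
      = (1 - dg E w v) * (1 / q) := by
    intro v
    rw [← Finset.mul_sum, ← cnt1 hq b.1 b.2]; ring
  simp_rw [this]
  rw [← Finset.sum_mul]; ring

lemma cd'_ll {E : ι → Finset V} {w : ι → ℝ} {r q : ℕ} (u v : V) (huv : u ≠ v) :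
    cd (E' E r q) (w' E w r q) (.inl u) (.inl v) = cd E w u v := by
  unfold cd
  rw [Fintype.sum_sum_type, Fintype.sum_prod_type]
  simp only [ind_ll, ind_rl, w']
  rw [add_eq_left]
  refine Finset.sum_eq_zero fun x _ => Finset.sum_eq_zero fun f _ => ?_
  by_cases h : x = u
  · subst h; simp [huv]
  · simp [h]

lemma cd'_lr {E : ι → Finset V} {w : ι → ℝ} {r q : ℕ} (hq : 0 < q) (u : V) (b : Fin r × Fin q) :
    cd (E' E r q) (w' E w r q) (.inl u) (.inr b) = (1 - dg E w u) / q := by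
  conv_lhs => unfold cd
  rw [Fintype.sum_sum_type, Fintype.sum_prod_type]
  simp only [ind_ll, ind_rl, ind_lr, ind_rr, w', mul_zero, sum_const_zero, zero_add]
  rw [Finset.sum_eq_single u]
  · simp only [if_true, mul_one]
    rw [← Finset.mul_sum]
    have := cnt1 hq b.1 b.2
    calc _ = (1 - dg E w u) * ((∑ f : Fin r → Fin q, if f b.1 = b.2 then (1:ℝ) else 0) / (q:ℝ) ^ r) := by ring
      _ = _ := by rw [this]; ring
  · intro x _ hx; simp [hx]
  · simp

lemma cd'_rr {E : ι → Finset V} {w : ι → ℝ} {r q : ℕ} (hq : 0 < q) (hD : ∀ v, dg E w v ≤ 1)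
    (b c : Fin r × Fin q) (hbc : b ≠ c) :
    cd (E' E r q) (w' E w r q) (.inr b) (.inr c) ≤ (∑ v, (1 - dg E w v)) / q ^ 2 := by
  have hY : 0 ≤ ∑ v, (1 - dg E w v) := Finset.sum_nonneg fun v _ => by linarith [hD v]
  conv_lhs => unfold cd
  rw [Fintype.sum_sum_type, Fintype.sum_prod_type]
  simp only [ind_lr, ind_rr, w', mul_zero, sum_const_zero, zero_add]
  by_cases hj : b.1 = c.1
  · have hb : b.2 ≠ c.2 := fun h => hbc (Prod.ext hj h)
    rw [Finset.sum_eq_zero]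
    · positivity
    · intro v _
      refine Finset.sum_eq_zero fun f _ => ?_
      by_cases h : f b.1 = b.2
      · have : f c.1 ≠ c.2 := by rw [← hj, h]; exact hb
        simp [this]
      · simp [h]
  · apply le_of_eq
    have : ∀ v, ∑ f : Fin r → Fin q, (1 - dg E w v) / (q:ℝ) ^ r * (if f b.1 = b.2 then (1:ℝ) else 0)
        * (if f c.1 = c.2 then (1:ℝ) else 0) = (1 - dg E w v) * (1 / q ^ 2) := by
      intro v
      rw [← cnt2 hq b.1 c.1 hj b.2 c.2, Finset.sum_div, Finset.mul_sum]
      refine Finset.sum_congr rfl fun f _ => ?_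
      by_cases h1 : f b.1 = b.2 <;> by_cases h2 : f c.1 = c.2 <;> simp [h1, h2]
      ring
    simp_rw [this]
    rw [← Finset.sum_mul]; ring

end dummy

theorem frac_to_int (k : ℕ) (hk : 2 ≤ k) (ε : ℝ) (hε : 0 < ε) : ∃ δ > 0, ∃ N : ℕ,
    ∀ (V ι : Type) [Fintype V] [DecidableEq V] [Fintype ι] (E : ι → Finset V) (w : ι → ℝ),
      N ≤ Fintype.card V → (∀ i, (E i).card = k) → (∀ i, 0 ≤ w i) →
      (∀ v, dg E w v ≤ 1) → (∀ u v, u ≠ v → cd E w u v ≤ δ) →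
      ∃ M : Finset ι, (∀ i ∈ M, ∀ j ∈ M, i ≠ j → Disjoint (E i) (E j)) ∧
        (∑ i, w i) - ε * Fintype.card V ≤ M.card := by
  obtain ⟨δ, hδ, N, hnib⟩ := nibble k (by omega) (ε / 4) (by positivity)
  obtain ⟨r, rfl⟩ : ∃ r, k = r + 1 := ⟨k - 1, by omega⟩
  set Q := 1 / δ + 2 with hQ
  have hQpos : 0 < Q := by positivity
  set kk : ℝ := ((r + 1 : ℕ) : ℝ) with hkk
  have hkk2 : (2:ℝ) ≤ kk := by rw [hkk]; exact_mod_cast hk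
  have hkr : kk = r + 1 := by rw [hkk]; push_cast; ring
  refine ⟨δ, hδ, N + ⌈kk * Q / δ⌉₊ + ⌈Q * 2 / ε⌉₊ + ⌈Q⌉₊, ?_⟩
  intro V ι _ _ _ E w hN hE hw hD hc
  set n : ℝ := (Fintype.card V : ℝ) with hn
  have hN1 : kk * Q / δ ≤ n := by
    refine (Nat.le_ceil _).trans ?_
    rw [hn]; exact_mod_cast by omega
  have hN2 : Q * 2 / ε ≤ n := by
    refine (Nat.le_ceil _).trans ?_
    rw [hn]; exact_mod_cast by omega
  have hN3 : Q ≤ n := by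
    refine (Nat.le_ceil _).trans ?_
    rw [hn]; exact_mod_cast by omega
  set Y := ∑ v, (1 - dg E w v) with hY
  have hY0 : 0 ≤ Y := Finset.sum_nonneg fun v _ => by linarith [hD v]
  have hYn : Y ≤ n := by
    calc Y ≤ ∑ v : V, (1:ℝ) := Finset.sum_le_sum fun v _ => by linarith [dg_nonneg (E := E) hw v]
      _ = n := by simp [hn]
  have hYw : kk * ∑ i, w i = n - Y := by
    rw [hkk, ← sum_dg hE, hY, Finset.sum_sub_distrib]; simp [hn]
  set q : ℕ := ⌈Y⌉₊ + ⌈1 / δ⌉₊ with hq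
  have hqY : Y ≤ q := by
    refine (Nat.le_ceil _).trans ?_
    exact_mod_cast by omega
  have hqδ : 1 / δ ≤ q := by
    refine (Nat.le_ceil _).trans ?_
    exact_mod_cast by omega
  have hqQ : q ≤ Y + Q := by
    have h1 := Nat.ceil_lt_add_one hY0
    have h2 := Nat.ceil_lt_add_one (show 0 ≤ 1 / δ by positivity)
    rw [hq, hQ]; push_cast; linarith
  have hqpos' : (0:ℝ) < q := lt_of_lt_of_le (by positivity) hqδ
  have hqpos : 0 < q := by exact_mod_cast hqpos'
  have hqinv : 1 / (q:ℝ) ≤ δ := by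
    rw [div_le_iff₀ hqpos']; rw [div_le_iff₀ hδ] at hqδ; linarith
  have hn' : (Fintype.card (V ⊕ (Fin r × Fin q)) : ℝ) = n + r * q := by
    simp [hn]
  obtain ⟨M, hMd, hMc⟩ := hnib (V ⊕ (Fin r × Fin q)) (ι ⊕ (V × (Fin r → Fin q)))
    (E' E r q) (w' E w r q) (by simp; omega) (E'_card hE) (by
      rintro (i | ⟨v, f⟩)
      · exact hw i
      · exact div_nonneg (by linarith [hD v]) (by positivity)) (by
      rintro (v | b)
      · exact (dg'_l hqpos v).le
      · rw [dg'_r hqpos, div_le_one hqpos']; exact hqY) (by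
      have hlr : ∀ (u : V) (b : Fin r × Fin q),
          cd (E' E r q) (w' E w r q) (.inl u) (.inr b) ≤ δ := by
        intro u b
        rw [cd'_lr hqpos]
        refine le_trans ?_ hqinv
        gcongr
        linarith [dg_nonneg (E := E) hw u]
      rintro (u | b) (v | c) huv
      · have huv' : u ≠ v := fun h => huv (by rw [h])
        rw [cd'_ll u v huv']; exact hc u v huv'
      · exact hlr u c
      · rw [cd_comm]; exact hlr v b
      · refine (cd'_rr hqpos hD b c (fun h => huv (by rw [h]))).trans (le_trans ?_ hqinv)
        rw [div_le_div_iff₀ (by positivity) hqpos']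
        nlinarith) (by
      rw [Fintype.sum_sum_type, hn']
      simp_rw [dg'_l hqpos, dg'_r hqpos]
      simp only [sub_self, sum_const_zero, zero_add, sum_const, card_univ, Fintype.card_prod,
        Fintype.card_fin, nsmul_eq_mul, Nat.cast_mul]
      rw [← hY]
      have e1 : (r:ℝ) * q * (1 - Y / q) = r * (q - Y) := by field_simp
      rw [e1]
      have e2 : (r:ℝ) * (q - Y) ≤ kk * Q := by
        apply mul_le_mul _ (by linarith) (by linarith) (by linarith)
        rw [hkr]; linarith
      rw [div_le_iff₀ hδ] at hN1
      have : 0 ≤ δ * (r * q) := by positivity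
      nlinarith)
  refine ⟨M.toLeft, ?_, ?_⟩
  · intro i hi j hj hij
    have := hMd (.inl i) (by simpa using hi) (.inl j) (by simpa using hj) (by simpa using hij)
    rw [Finset.disjoint_left] at this ⊢
    intro v hv hv'
    exact this (a := .inl v) (by simpa [E'] using hv) (by simpa [E'] using hv')
  · have hr : 0 < r := by omega
    have hright : M.toRight.card ≤ q := by
      have : M.toRight.card ≤ (univ : Finset (Fin q)).card := by
        apply Finset.card_le_card_of_injOn (fun vf => vf.2 ⟨0, hr⟩) (fun _ _ => mem_coe.mpr (mem_univ _))
        intro x hx y hy hxy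
        by_contra hne
        have := hMd (.inr x) (by simpa using hx) (.inr y) (by simpa using hy) (by simpa using hne)
        rw [Finset.disjoint_left] at this
        refine this (a := .inr (⟨0, hr⟩, x.2 ⟨0, hr⟩)) (by simp [E']) ?_
        simp only at hxy
        simp [E', hxy]
      simpa using this
    have htot : (M.card : ℝ) = M.toLeft.card + M.toRight.card := by
      rw [← Finset.card_toLeft_add_card_toRight (u := M)]; push_cast; ring
    have hright' : (M.toRight.card : ℝ) ≤ q := by exact_mod_cast hright
    rw [hn', div_le_iff₀ (by linarith)] at hMc
    rw [div_le_iff₀ hε] at hN2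
    have h1 : (1 - ε/4) * (n + r * q) - q * kk ≤ M.toLeft.card * kk := by nlinarith
    have h2 : n + r * q ≤ kk * n * 2 := by
      have hrk : (r:ℝ) = kk - 1 := by linarith
      have hr0 : (0:ℝ) ≤ r := by positivity
      have hq2n : (q:ℝ) ≤ 2 * n := by linarith
      have : (r:ℝ) * q ≤ r * (2 * n) := by gcongr
      rw [hrk] at this ⊢
      linarith
    have h3 : (∑ i, w i - ε * n) * kk ≤ M.toLeft.card * kk := by
      have hε' : ε / 4 * (n + r * q) ≤ ε / 4 * (kk * n * 2) := by gcongr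
      have hrk : (r:ℝ) = kk - 1 := by linarith
      have e5 : Q * 2 ≤ ε * n * kk := by
        have : 0 ≤ n * ε := by linarith
        nlinarith
      rw [hrk] at h1 hε'
      have e6 : (1 - ε / 4) * (n + (kk - 1) * q) - q * kk
          = n - q - ε / 4 * (n + (kk - 1) * q) := by ring
      have e7 : (∑ i, w i - ε * n) * kk = n - Y - ε * n * kk := by rw [← hYw]; ring
      have e8 : ε / 4 * (kk * n * 2) = ε * n * kk / 2 := by ring
      linarith
    exact le_of_mul_le_mul_right h3 (by linarith)
end Nib

open Finset
set_option linter.unusedSectionVars false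
namespace Nib
section mcd
variable {V : Type} [Fintype V] [DecidableEq V]

theorem exp_quad (y c : ℝ) (hy : |y| ≤ c) (hc : c ≤ 1) : Real.exp y ≤ 1 + y + c ^ 2 := by
  have h := Real.abs_exp_sub_one_sub_id_le (hy.trans hc)
  have h2 : y ^ 2 ≤ c ^ 2 := by
    rw [← sq_abs]; gcongr
  have := (abs_le.mp h).2
  linarith

theorem mcd_one [Nonempty V] (h : V → ℝ) (l c : ℝ) (hl : 0 ≤ l) (hlc : l * c ≤ 1)
    (hh : ∀ v v', |h v - h v'| ≤ c) :
    ∑ v, Real.exp (l * h v) ≤ Fintype.card V *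
      Real.exp (l * ((∑ v, h v) / Fintype.card V) + (l * c) ^ 2) := by
  set q : ℝ := (Fintype.card V : ℝ) with hq
  have hq0 : 0 < q := by rw [hq]; exact_mod_cast Fintype.card_pos
  set b := (∑ v, h v) / q with hb
  have hsum : ∑ v, h v = q * b := by rw [hb]; field_simp
  have hdev : ∀ v, |l * (h v - b)| ≤ l * c := by
    intro v
    rw [abs_mul, abs_of_nonneg hl]
    gcongr
    have : q * (h v - b) = ∑ v', (h v - h v') := by
      rw [Finset.sum_sub_distrib, hsum]; simp [hq]; ring
    have h2 : |q * (h v - b)| ≤ q * c := by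
      rw [this]
      refine (Finset.abs_sum_le_sum_abs _ _).trans ?_
      refine (Finset.sum_le_sum fun v' _ => hh v v').trans ?_
      simp [hq]
    rw [abs_mul, abs_of_pos hq0] at h2
    exact le_of_mul_le_mul_left h2 hq0
  have h1 : ∀ v, Real.exp (l * h v) ≤ Real.exp (l * b) * (1 + l * (h v - b) + (l * c) ^ 2) := by
    intro v
    have : l * h v = l * b + l * (h v - b) := by ring
    rw [this, Real.exp_add]
    gcongr
    exact exp_quad _ _ (hdev v) hlc
  calc _ ≤ ∑ v, Real.exp (l * b) * (1 + l * (h v - b) + (l * c) ^ 2) :=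
        Finset.sum_le_sum fun v _ => h1 v
    _ = q * (Real.exp (l * b) * (1 + (l * c) ^ 2)) := by
        rw [← Finset.mul_sum, Finset.sum_add_distrib, Finset.sum_add_distrib, ← Finset.mul_sum,
          Finset.sum_sub_distrib, hsum]
        simp only [sum_const, card_univ, nsmul_eq_mul, ← hq]
        ring
    _ ≤ _ := by
        rw [Real.exp_add]
        gcongr
        linarith [Real.add_one_le_exp ((l * c) ^ 2)]

theorem mcd [Nonempty V] (l c : ℝ) (hl : 0 ≤ l) (hlc : l * c ≤ 1) (N : ℕ) :
    ∀ (f : (Fin N → V) → ℝ), (∀ g a v, |f (Function.update g a v) - f g| ≤ c) →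
    ∑ g, Real.exp (l * f g) ≤ (Fintype.card V : ℝ) ^ N *
      Real.exp (l * ((∑ g, f g) / (Fintype.card V : ℝ) ^ N) + N * (l * c) ^ 2) := by
  have hq0 : (0:ℝ) < (Fintype.card V : ℝ) := by exact_mod_cast Fintype.card_pos
  induction N with
  | zero => intro f _; simp
  | succ N ih =>
    intro f hf
    set q : ℝ := (Fintype.card V : ℝ) with hq
    have hsplit : ∀ G : (Fin (N+1) → V) → ℝ, ∑ g, G g = ∑ v, ∑ g, G (Fin.cons v g) := by
      intro G
      rw [← (Fin.consEquiv (fun _ => V)).sum_comp, Fintype.sum_prod_type]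
      rfl
    set h : V → ℝ := fun v => (∑ g, f (Fin.cons v g)) / q ^ N with hh
    have hcardN : (∑ _g : Fin N → V, (1:ℝ)) = q ^ N := by simp [hq]
    have h1 : ∀ v v', |h v - h v'| ≤ c := by
      intro v v'
      simp only [hh]
      rw [← sub_div, ← Finset.sum_sub_distrib, abs_div, abs_of_pos (pow_pos hq0 N),
        div_le_iff₀ (pow_pos hq0 N), ← hcardN, Finset.mul_sum]
      refine (Finset.abs_sum_le_sum_abs _ _).trans (Finset.sum_le_sum fun g _ => ?_)
      have := hf (Fin.cons v' g) 0 v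
      rw [Fin.update_cons_zero] at this
      linarith
    have h2 : ∀ v, ∑ g, Real.exp (l * f (Fin.cons v g)) ≤
        q ^ N * Real.exp (l * h v + N * (l * c) ^ 2) := by
      intro v
      refine ih (fun g => f (Fin.cons v g)) ?_
      intro g a u
      have := hf (Fin.cons v g) a.succ u
      rwa [← Fin.cons_update] at this
    have h3 := mcd_one h l c hl hlc h1
    have hmean : (∑ g, f g) / q ^ (N+1) = (∑ v, h v) / q := by
      rw [hsplit, ← Finset.sum_div, pow_succ, div_div]
    rw [hsplit, hmean]
    calc _ ≤ ∑ v, q ^ N * Real.exp (l * h v + N * (l * c) ^ 2) := Finset.sum_le_sum fun v _ => h2 v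
      _ = q ^ N * Real.exp (N * (l * c) ^ 2) * ∑ v, Real.exp (l * h v) := by
        rw [Finset.mul_sum]
        refine Finset.sum_congr rfl fun v _ => ?_
        rw [Real.exp_add]; ring
      _ ≤ q ^ N * Real.exp (N * (l * c) ^ 2) * (q * Real.exp (l * ((∑ v, h v) / q) + (l * c) ^ 2)) := by
        gcongr
      _ = _ := by
        push_cast
        rw [show l * ((∑ v, h v) / q) + (N + 1 : ℝ) * (l * c) ^ 2 =
          N * (l * c) ^ 2 + (l * ((∑ v, h v) / q) + (l * c) ^ 2) by ring, Real.exp_add (N * (l * c) ^ 2)]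
        ring

open Classical in
theorem mcd_tail [Nonempty V] (l c t : ℝ) (hl : 0 ≤ l) (hlc : l * c ≤ 1) (N : ℕ)
    (f : (Fin N → V) → ℝ) (hf : ∀ g a v, |f (Function.update g a v) - f g| ≤ c)
    (mu : ℝ) (hmu : mu * (Fintype.card V : ℝ) ^ N ≤ ∑ g, f g) :
    ∑ g, (if f g < mu - t then (1:ℝ) else 0) ≤ (Fintype.card V : ℝ) ^ N *
      Real.exp (- (l * t) + N * (l * c) ^ 2) := by
  have hq0 : (0:ℝ) < (Fintype.card V : ℝ) := by exact_mod_cast Fintype.card_pos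
  have h := mcd l c hl hlc N (fun g => - f g) (fun g a v => by
    have := hf g a v
    rw [show -f (Function.update g a v) - -f g = -(f (Function.update g a v) - f g) by ring, abs_neg]
    exact this)
  set q : ℝ := (Fintype.card V : ℝ) with hq
  have h1 : ∀ g, (if f g < mu - t then (1:ℝ) else 0) ≤ Real.exp (l * (mu - t)) * Real.exp (l * (- f g)) := by
    intro g
    rw [← Real.exp_add]
    split_ifs with hg
    · rw [Real.one_le_exp_iff]
      nlinarith
    · positivity
  calc _ ≤ ∑ g, Real.exp (l * (mu - t)) * Real.exp (l * (- f g)) := Finset.sum_le_sum fun g _ => h1 g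
    _ ≤ Real.exp (l * (mu - t)) * (q ^ N *
      Real.exp (l * ((∑ g, - f g) / q ^ N) + N * (l * c) ^ 2)) := by
        rw [← Finset.mul_sum]; gcongr
    _ ≤ _ := by
        rw [mul_left_comm, ← Real.exp_add]
        refine mul_le_mul_of_nonneg_left (Real.exp_le_exp.mpr ?_) (by positivity)
        have : (∑ g, - f g) / q ^ N ≤ - mu := by
          rw [div_le_iff₀ (pow_pos hq0 N), Finset.sum_neg_distrib]; linarith
        have := mul_le_mul_of_nonneg_left this hl
        linarith
end mcd
end Nib

open Finset
set_option linter.unusedSectionVars false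
namespace Nib
section samp
variable {V : Type} [Fintype V] [DecidableEq V] {m : ℕ}

theorem piecewise_swap (S : Finset (Fin m)) (H : (Fin m → V) → ℝ) :
    ∑ ψ : Fin m → V, ∑ φ : Fin m → V, H (S.piecewise ψ φ) =
      (Fintype.card V : ℝ) ^ m * ∑ φ, H φ := by
  have hinv : Function.Involutive (fun p : (Fin m → V) × (Fin m → V) =>
      (S.piecewise p.1 p.2, S.piecewise p.2 p.1)) := by
    rintro ⟨a, b⟩
    ext i <;> by_cases h : i ∈ S <;> simp [h]
  have h1 := Equiv.sum_comp (Function.Involutive.toPerm _ hinv)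
    (fun p : (Fin m → V) × (Fin m → V) => H p.1)
  rw [Fintype.sum_prod_type, Fintype.sum_prod_type] at h1
  simp only [Function.Involutive.coe_toPerm] at h1
  rw [h1, Finset.mul_sum]
  refine Finset.sum_congr rfl fun φ _ => ?_
  simp

theorem coll (i j : Fin m) (hij : i ≠ j) :
    (∑ φ : Fin m → V, if φ i = φ j then (1:ℝ) else 0) * Fintype.card V = (Fintype.card V : ℝ) ^ m := by
  rcases Nat.eq_zero_or_pos (Fintype.card V) with h0 | h0
  · have := Fin.pos i
    rw [h0]; simp only [Nat.cast_zero, mul_zero]; rw [zero_pow (by omega)]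
  have hq0 : (0:ℝ) < (Fintype.card V : ℝ) := by exact_mod_cast h0
  have h1 : ∀ φ : Fin m → V, (if φ i = φ j then (1:ℝ) else 0) =
      ∑ b : V, if φ i = b ∧ φ j = b then (1:ℝ) else 0 := by
    intro φ
    by_cases h : φ i = φ j
    · simp [h]
    · rw [if_neg h, Finset.sum_eq_zero]
      intro b _
      rw [if_neg]
      rintro ⟨h1, h2⟩; exact h (h1.trans h2.symm)
  have h2 : (∑ φ : Fin m → V, if φ i = φ j then (1:ℝ) else 0) * (Fintype.card V) ^ 2 =
      Fintype.card V * (Fintype.card V : ℝ) ^ m := by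
    simp_rw [h1]
    rw [Finset.sum_comm, Finset.sum_mul]
    simp_rw [card_two i j hij, Fintype.card_fin]
    simp
  have h3 : (Fintype.card V : ℝ) * ((∑ φ : Fin m → V, if φ i = φ j then (1:ℝ) else 0) * Fintype.card V)
     = Fintype.card V * (Fintype.card V : ℝ) ^ m := by rw [← h2]; ring
  exact mul_left_cancel₀ hq0.ne' h3

open Classical in
theorem noninj (S : Finset (Fin m)) :
    (∑ φ : Fin m → V, if Set.InjOn φ S then (0:ℝ) else 1) * Fintype.card V ≤
      (S.card : ℝ) ^ 2 * (Fintype.card V : ℝ) ^ m := by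
  have h1 : ∀ φ : Fin m → V, (if Set.InjOn φ S then (0:ℝ) else 1) ≤
      ∑ p ∈ S ×ˢ S, if p.1 ≠ p.2 then (if φ p.1 = φ p.2 then (1:ℝ) else 0) else 0 := by
    intro φ
    split_ifs with h
    · exact Finset.sum_nonneg fun p _ => by split_ifs <;> norm_num
    · simp only [Set.InjOn, not_forall] at h
      obtain ⟨a, ha, b, hb, hab, hne⟩ := h
      have := Finset.single_le_sum (s := S ×ˢ S)
        (f := fun p => if p.1 ≠ p.2 then (if φ p.1 = φ p.2 then (1:ℝ) else 0) else 0)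
        (fun p _ => by split_ifs <;> norm_num) (a := (a, b)) (by
          simp at ha hb ⊢; exact ⟨ha, hb⟩)
      simpa [hab, hne] using this
  calc _ ≤ (∑ φ : Fin m → V, ∑ p ∈ S ×ˢ S, if p.1 ≠ p.2 then (if φ p.1 = φ p.2 then (1:ℝ) else 0) else 0)
        * Fintype.card V := by
        gcongr with φ _; exact h1 φ
    _ = ∑ p ∈ S ×ˢ S, (∑ φ : Fin m → V, if p.1 ≠ p.2 then (if φ p.1 = φ p.2 then (1:ℝ) else 0) else 0)
        * Fintype.card V := by
        rw [Finset.sum_comm, Finset.sum_mul]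
    _ ≤ ∑ p ∈ S ×ˢ S, (Fintype.card V : ℝ) ^ m := by
        refine Finset.sum_le_sum fun p _ => ?_
        by_cases hp : p.1 = p.2
        · simp [hp]
        · simp only [ne_eq, hp, not_false_eq_true, if_true]
          exact (coll p.1 p.2 hp).le
    _ = _ := by rw [sum_const, card_product, nsmul_eq_mul]; push_cast; ring

theorem marg {α : Type} [Fintype α] [DecidableEq α] (p : α → Prop) [DecidablePred p]
    (G : ({a // p a} → V) → ℝ) :
    ∑ g : α → V, G (fun a => g a) =
      (Fintype.card V : ℝ) ^ (Fintype.card {a // ¬ p a}) * ∑ h, G h := by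
  rw [← (Equiv.piEquivPiSubtypeProd p (fun _ => V)).symm.sum_comp, Fintype.sum_prod_type,
    Finset.mul_sum]
  refine Finset.sum_congr rfl fun h _ => ?_
  have : ∀ y : ({a // ¬ p a} → V), (fun a : {a // p a} =>
      (Equiv.piEquivPiSubtypeProd p (fun _ => V)).symm (h, y) a) = h := by
    intro y; ext a; simp [Equiv.piEquivPiSubtypeProd, a.2]
  simp_rw [this]
  simp

theorem mean_T (F : Finset (Finset V)) (k d : ℕ) (hdk : d ≤ k) (hF : ∀ A ∈ F, A.card = k)
    (S T : Finset (Fin m)) (hS : S.card = d) (hT : T.card = k) (hST : S ⊆ T)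
    (ψ : Fin m → V) (hψ : Set.InjOn ψ S) :
    ((k - d).factorial : ℝ) * (F.filter (fun A => S.image ψ ⊆ A)).card * (Fintype.card V : ℝ) ^ m ≤
      (Fintype.card V : ℝ) ^ (k - d) *
        ∑ φ : Fin m → V, if T.image (S.piecewise ψ φ) ∈ F then (1:ℝ) else 0 := by
  classical
  set q : ℝ := (Fintype.card V : ℝ) with hq
  have himg : ∀ φ : Fin m → V, T.image (S.piecewise ψ φ) =
      S.image ψ ∪ univ.image (fun a : {a // a ∈ T \ S} => φ a) := by
    intro φ
    ext v
    simp only [mem_image, mem_union, mem_univ, true_and, Subtype.exists, mem_sdiff]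
    constructor
    · rintro ⟨a, ha, rfl⟩
      by_cases h : a ∈ S
      · left; exact ⟨a, h, by simp [h]⟩
      · right; exact ⟨a, ⟨ha, h⟩, by simp [h]⟩
    · rintro (⟨a, ha, rfl⟩ | ⟨a, ⟨ha, h⟩, rfl⟩)
      · exact ⟨a, hST ha, by simp [ha]⟩
      · exact ⟨a, ha, by simp [h]⟩
  simp_rw [himg]
  have hmarg := marg (V := V) (fun a : Fin m => a ∈ T \ S)
    (fun h => if S.image ψ ∪ univ.image h ∈ F then (1:ℝ) else 0)
  rw [hmarg]
  have hcard1 : Fintype.card {a // a ∈ T \ S} = k - d := by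
    rw [Fintype.card_coe, card_sdiff_of_subset hST, hS, hT]
  have hkm : k ≤ m := by
    rw [← hT]; simpa using card_le_univ T
  have hcard2 : Fintype.card {a // ¬ a ∈ T \ S} = m - (k - d) := by
    rw [Fintype.card_subtype_compl, hcard1, Fintype.card_fin]
  rw [hcard2, ← mul_assoc, ← pow_add, show k - d + (m - (k - d)) = m by omega, mul_comm _ (q ^ m)]
  refine mul_le_mul_of_nonneg_left ?_ (by positivity)
  rw [Finset.sum_boole]
  -- count
  have hS' : (S.image ψ).card = d := by rw [card_image_of_injOn hψ, hS]
  let FS := F.filter (fun A => S.image ψ ⊆ A)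
  have hcount : Fintype.card (Σ A : {A // A ∈ FS}, ({a // a ∈ T \ S} ≃ {v // v ∈ A.1 \ S.image ψ})) =
      (k - d).factorial * FS.card := by
    rw [Fintype.card_sigma]
    have : ∀ A : {A // A ∈ FS}, Fintype.card ({a // a ∈ T \ S} ≃ {v // v ∈ A.1 \ S.image ψ}) =
        (k - d).factorial := by
      intro A
      have hA := mem_filter.mp A.2
      have : Fintype.card {v // v ∈ A.1 \ S.image ψ} = k - d := by
        rw [Fintype.card_coe, card_sdiff_of_subset hA.2, hS', hF _ hA.1]
      rw [Fintype.card_equiv (Fintype.equivOfCardEq (hcard1.trans this.symm)), hcard1]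
    simp_rw [this]
    simp [mul_comm]
  have hle : Fintype.card (Σ A : {A // A ∈ FS}, ({a // a ∈ T \ S} ≃ {v // v ∈ A.1 \ S.image ψ})) ≤
      (univ.filter fun h : {a // a ∈ T \ S} → V => S.image ψ ∪ univ.image h ∈ F).card := by
    rw [← Finset.card_univ]
    have himA : ∀ x : (Σ A : {A // A ∈ FS}, ({a // a ∈ T \ S} ≃ {v // v ∈ A.1 \ S.image ψ})),
        S.image ψ ∪ univ.image (fun a => (x.2 a).1) = x.1.1 := by
      rintro ⟨⟨A, hA⟩, e⟩
      have hA' := (mem_filter.mp hA).2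
      ext v
      simp only [mem_union]
      constructor
      · rintro (h | h)
        · exact hA' h
        · simp only [mem_image, mem_univ, true_and] at h
          obtain ⟨a, rfl⟩ := h
          exact (mem_sdiff.mp (e a).2).1
      · intro hv
        by_cases h : v ∈ S.image ψ
        · left; exact h
        · right
          simp only [mem_image, mem_univ, true_and]
          refine ⟨e.symm ⟨v, mem_sdiff.mpr ⟨hv, h⟩⟩, ?_⟩
          simp
    apply Finset.card_le_card_of_injOn (fun x => fun a => (x.2 a).1)
    · intro x _
      simp only [coe_filter, mem_univ, true_and, Set.mem_ofPred_eq]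
      rw [himA x]
      exact (mem_filter.mp x.1.2).1
    · intro x _ y _ hxy
      simp only at hxy
      have h1 := himA x
      have h2 := himA y
      rw [hxy, h2] at h1
      obtain ⟨A, e⟩ := x
      obtain ⟨B, e'⟩ := y
      have : A = B := Subtype.ext h1.symm
      subst this
      congr 1
      ext a
      exact congrFun hxy a
  rw [hcount] at hle
  have h' := (Nat.cast_le (α := ℝ)).mpr hle
  push_cast at h'
  convert h'
end samp
end Nib

open Finset
set_option linter.unusedSectionVars false
namespace Nib

theorem card_super {α : Type} [DecidableEq α] (U R : Finset α) (hR : R ⊆ U) (k : ℕ) (hk : R.card ≤ k) :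
    ((U.powersetCard k).filter (fun T => R ⊆ T)).card = (U.card - R.card).choose (k - R.card) := by
  rw [← card_sdiff_of_subset hR, ← card_powersetCard]
  refine Finset.card_nbij' (fun T => T \ R) (fun B => B ∪ R) ?_ ?_ ?_ ?_
  · intro T hT
    simp only [coe_filter, mem_powersetCard, Set.mem_ofPred_eq] at hT
    obtain ⟨⟨h1, h2⟩, h3⟩ := hT
    simp only [mem_coe, mem_powersetCard]
    exact ⟨sdiff_subset_sdiff h1 le_rfl, by rw [card_sdiff_of_subset h3, h2]⟩
  · intro B hB
    simp only [mem_coe, mem_powersetCard] at hB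
    simp only [coe_filter, mem_powersetCard, Set.mem_ofPred_eq]
    refine ⟨⟨union_subset (hB.1.trans sdiff_subset) hR, ?_⟩, subset_union_right⟩
    rw [card_union_of_disjoint, hB.2]
    · omega
    · exact disjoint_of_subset_left hB.1 sdiff_disjoint
  · intro T hT
    simp only [coe_filter, mem_powersetCard, Set.mem_ofPred_eq] at hT
    exact sdiff_union_of_subset hT.2
  · intro B hB
    simp only [mem_coe, mem_powersetCard] at hB
    have : Disjoint B R := disjoint_of_subset_left hB.1 sdiff_disjoint
    exact union_sdiff_cancel_right this

section samp
variable {V : Type} [Fintype V] [DecidableEq V] {m : ℕ}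

noncomputable def X (F : Finset (Finset V)) (k : ℕ) (S : Finset (Fin m)) (φ : Fin m → V) : ℝ :=
  ∑ T ∈ ((univ : Finset (Fin m)).powersetCard k).filter (fun T => S ⊆ T),
    if T.image φ ∈ F then (1:ℝ) else 0

theorem X_bd (F : Finset (Finset V)) (k d : ℕ) (hdk : d < k) (S : Finset (Fin m)) (hS : S.card = d)
    (ψ φ : Fin m → V) (a : Fin m) (v : V) :
    |X F k S (S.piecewise ψ (Function.update φ a v)) - X F k S (S.piecewise ψ φ)| ≤
      ((m - d - 1).choose (k - d - 1) : ℝ) := by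
  by_cases ha : a ∈ S
  · have : S.piecewise ψ (Function.update φ a v) = S.piecewise ψ φ := by
      ext i
      by_cases hi : i ∈ S
      · simp [hi]
      · have : i ≠ a := fun h => hi (h ▸ ha)
        simp [hi, this]
    rw [this]; simp
  · unfold X
    rw [← Finset.sum_sub_distrib]
    refine (Finset.abs_sum_le_sum_abs _ _).trans ?_
    have hle : ∀ T : Finset (Fin m), |(if T.image (S.piecewise ψ (Function.update φ a v)) ∈ F then (1:ℝ) else 0) -
        (if T.image (S.piecewise ψ φ) ∈ F then (1:ℝ) else 0)| ≤ if a ∈ T then 1 else 0 := by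
      intro T
      by_cases haT : a ∈ T
      · rw [if_pos haT]
        split_ifs <;> norm_num
      · rw [if_neg haT]
        have : T.image (S.piecewise ψ (Function.update φ a v)) = T.image (S.piecewise ψ φ) := by
          apply Finset.image_congr
          intro i hi
          have : i ≠ a := fun h => haT (h ▸ hi)
          by_cases hi : i ∈ S <;> simp [hi, this]
        rw [this]; simp
    refine (Finset.sum_le_sum fun T _ => hle T).trans ?_
    rw [Finset.sum_boole, Finset.filter_filter]
    have h1 := card_super (univ : Finset (Fin m)) (insert a S) (subset_univ _) k (by
      rw [card_insert_of_notMem ha]; omega)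
    rw [card_insert_of_notMem ha, hS, card_univ, Fintype.card_fin] at h1
    have h2 : (univ.powersetCard k).filter (fun T : Finset (Fin m) => S ⊆ T ∧ a ∈ T) =
        (univ.powersetCard k).filter (fun T => insert a S ⊆ T) := by
      apply Finset.filter_congr
      intro T _
      rw [insert_subset_iff, and_comm]
    rw [h2, h1, Nat.sub_sub, Nat.sub_sub]

theorem X_mean (F : Finset (Finset V)) (k d : ℕ) (hdk : d ≤ k) (hF : ∀ A ∈ F, A.card = k)
    (S : Finset (Fin m)) (hS : S.card = d) (ψ : Fin m → V) (hψ : Set.InjOn ψ S)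
    (c : ℝ) (hV : 0 < Fintype.card V)
    (hc : c * (Fintype.card V : ℝ) ^ (k - d) ≤
      ((k - d).factorial : ℝ) * (F.filter (fun A => S.image ψ ⊆ A)).card) :
    c * ((m - d).choose (k - d)) * (Fintype.card V : ℝ) ^ m ≤
      ∑ φ : Fin m → V, X F k S (S.piecewise ψ φ) := by
  have hq0 : (0:ℝ) < (Fintype.card V : ℝ) := by exact_mod_cast hV
  set q : ℝ := (Fintype.card V : ℝ) with hq
  unfold X
  rw [Finset.sum_comm]
  have h1 := card_super (univ : Finset (Fin m)) S (subset_univ _) k (by omega)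
  rw [hS, card_univ, Fintype.card_fin] at h1
  rw [← h1]
  have : ∀ T ∈ ((univ : Finset (Fin m)).powersetCard k).filter (fun T => S ⊆ T), c * q ^ m ≤
      ∑ φ : Fin m → V, if T.image (S.piecewise ψ φ) ∈ F then (1:ℝ) else 0 := by
    intro T hT
    simp only [mem_filter, mem_powersetCard] at hT
    have h2 := mean_T F k d hdk hF S T hS hT.1.2 hT.2 ψ hψ
    have h3 : (c * q ^ (k-d)) * q ^ m ≤ q ^ (k - d) *
        ∑ φ : Fin m → V, if T.image (S.piecewise ψ φ) ∈ F then (1:ℝ) else 0 :=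
      le_trans (by gcongr) h2
    have h4 : 0 < q ^ (k-d) := by positivity
    refine le_of_mul_le_mul_left ?_ h4
    linarith
  have h5 := Finset.card_nsmul_le_sum _ _ _ this
  rw [nsmul_eq_mul] at h5
  linarith

open Classical in
theorem bad_S (F : Finset (Finset V)) (k d : ℕ) (hdk : d < k) (hF : ∀ A ∈ F, A.card = k)
    (S : Finset (Fin m)) (hS : S.card = d) (c0 c : ℝ) (hc0 : c0 < c) (hc1 : c - c0 ≤ 1)
    (hV : 0 < Fintype.card V) (hm : 2 * k ≤ m)
    (hc : ∀ S' : Finset V, S'.card = d → c * (Fintype.card V : ℝ) ^ (k - d) ≤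
      ((k - d).factorial : ℝ) * (F.filter (fun A => S' ⊆ A)).card) :
    ∑ φ : Fin m → V, (if X F k S φ < c0 * ((m - d).choose (k - d)) then (1:ℝ) else 0) ≤
      (Fintype.card V : ℝ) ^ m * (Real.exp (- ((c - c0) ^ 2 / (16 * k ^ 2) * m)) +
        d ^ 2 / Fintype.card V) := by
  have hq0 : (0:ℝ) < (Fintype.card V : ℝ) := by exact_mod_cast hV
  have : Nonempty V := Fintype.card_pos_iff.mp hV
  set q : ℝ := (Fintype.card V : ℝ) with hq
  set K : ℝ := ((m - d).choose (k - d) : ℝ) with hK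
  set B : ℝ := ((m - d - 1).choose (k - d - 1) : ℝ) with hB
  set γ := c - c0 with hγ
  have hγ0 : 0 < γ := by linarith
  have hKB : B * (m - d) = K * (k - d) := by
    have := Nat.add_one_mul_choose_eq (m - d - 1) (k - d - 1)
    rw [show m - d - 1 + 1 = m - d by omega, show k - d - 1 + 1 = k - d by omega] at this
    have h' : (((m - d : ℕ) : ℝ)) * B = K * ((k - d : ℕ) : ℝ) := by
      rw [hB, hK]; exact_mod_cast this
    rw [Nat.cast_sub (by omega), Nat.cast_sub (by omega)] at h'
    linarith
  have hK0 : 0 < K := by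
    rw [hK]; exact_mod_cast Nat.choose_pos (by omega)
  have hmR : 2 * (k:ℝ) ≤ m := by exact_mod_cast hm
  have hdR : (d:ℝ) < k := by exact_mod_cast hdk
  have hd0 : (0:ℝ) ≤ d := by positivity
  have hk0 : (1:ℝ) ≤ k := by exact_mod_cast (by omega : 1 ≤ k)
  have hmd : 0 < (m:ℝ) - d := by linarith
  set κ := γ / (4 * k ^ 2) with hκ
  have hκ0 : 0 < κ := by positivity
  set l := κ * (m - d) / K with hl
  have hl0 : 0 ≤ l := by positivity
  have hlB : l * B = κ * (k - d) := by
    rw [hl, div_mul_eq_mul_div, div_eq_iff hK0.ne']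
    linear_combination κ * hKB
  have hκk : κ * k = γ / (4 * k) := by rw [hκ]; field_simp
  have hlB1 : l * B ≤ 1 := by
    rw [hlB]
    have : κ * (k - d) ≤ κ * k := by gcongr; linarith
    refine this.trans ?_
    rw [hκk, div_le_one (by positivity)]
    linarith
  -- tail for fixed ψ
  have htail : ∀ ψ : Fin m → V, Set.InjOn ψ S →
      ∑ φ : Fin m → V, (if X F k S (S.piecewise ψ φ) < c0 * K then (1:ℝ) else 0) ≤
        q ^ m * Real.exp (- (γ ^ 2 / (16 * k ^ 2) * m)) := by
    intro ψ hψ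
    have hS' : (S.image ψ).card = d := by rw [card_image_of_injOn hψ, hS]
    have h1 := mcd_tail l B (γ * K) hl0 hlB1 m (fun φ => X F k S (S.piecewise ψ φ))
      (fun g a v => X_bd F k d hdk S hS ψ g a v) (c * K)
      (X_mean F k d hdk.le hF S hS ψ hψ c hV (hc _ hS'))
    have e1 : c * K - γ * K = c0 * K := by rw [hγ]; ring
    rw [e1] at h1
    refine h1.trans ?_
    refine mul_le_mul_of_nonneg_left (Real.exp_le_exp.mpr ?_) (by positivity)
    rw [hlB]
    have e2 : l * (γ * K) = κ * γ * (m - d) := by rw [hl]; field_simp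
    rw [e2]
    have e3 : (κ * (k - d)) ^ 2 ≤ (κ * k) ^ 2 := by
      have : 0 ≤ κ * (k - d) := mul_nonneg hκ0.le (by linarith)
      gcongr; linarith
    have e4 : (m:ℝ) * (κ * (k-d)) ^ 2 ≤ m * (κ * k) ^ 2 := by gcongr
    have e5 : (κ * k) ^ 2 = γ ^ 2 / (16 * k ^ 2) := by rw [hκk]; field_simp; norm_num
    have e6 : κ * γ = 4 * (γ ^ 2 / (16 * k ^ 2)) := by rw [hκ]; field_simp; norm_num
    rw [e5] at e4
    rw [e6]
    set z := γ ^ 2 / (16 * (k:ℝ) ^ 2) with hz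
    have hz0 : 0 ≤ z := by positivity
    have e7 : z * m / 2 ≤ z * (m - d) := by
      rw [mul_div_assoc]; gcongr; linarith
    linarith
  have hall : ∀ ψ : Fin m → V,
      ∑ φ : Fin m → V, (if X F k S (S.piecewise ψ φ) < c0 * K then (1:ℝ) else 0) ≤
        q ^ m * Real.exp (- (γ ^ 2 / (16 * k ^ 2) * m)) + q ^ m * (if Set.InjOn ψ S then (0:ℝ) else 1) := by
    intro ψ
    by_cases h : Set.InjOn ψ S
    · rw [if_pos h]; linarith [htail ψ h]
    · rw [if_neg h]
      have : ∑ φ : Fin m → V, (if X F k S (S.piecewise ψ φ) < c0 * K then (1:ℝ) else 0) ≤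
          ∑ φ : Fin m → V, (1:ℝ) := Finset.sum_le_sum fun φ _ => by split_ifs <;> norm_num
      have h2 : ∑ φ : Fin m → V, (1:ℝ) = q ^ m := by simp [hq]
      rw [h2] at this
      have : 0 ≤ q ^ m * Real.exp (- (γ ^ 2 / (16 * k ^ 2) * m)) := by positivity
      linarith
  have hsum := Finset.sum_le_sum (s := univ) fun ψ _ => hall ψ
  rw [piecewise_swap S (fun φ => if X F k S φ < c0 * K then (1:ℝ) else 0), Finset.sum_add_distrib,
    ← Finset.mul_sum, ← Finset.mul_sum] at hsum
  have h2 : ∑ _ψ : Fin m → V, Real.exp (- (γ ^ 2 / (16 * k ^ 2) * m)) =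
    q ^ m * Real.exp (- (γ ^ 2 / (16 * k ^ 2) * m)) := by simp [hq]
  rw [h2, ← mul_add] at hsum
  have h3 := le_of_mul_le_mul_left hsum (by positivity)
  have h4 := noninj (V := V) S
  rw [hS, ← le_div_iff₀ hq0] at h4
  refine h3.trans ?_
  rw [mul_add]
  have : q ^ m * ((d:ℝ) ^ 2 / q) = d ^ 2 * q ^ m / q := by ring
  rw [this]
  linarith
end samp
end Nib

open Finset
set_option linter.unusedSectionVars false
namespace Nib

theorem avg (k : ℕ) (hk : 2 ≤ k) (ε : ℝ) (hε : 0 < ε) (m : ℕ) (hm : 0 < m) : ∃ N : ℕ,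
    ∀ (V : Type) [Fintype V] [DecidableEq V] (F : Finset (Finset V))
      (w : (Fin m → V) → Finset (Fin m) → ℝ),
      N ≤ Fintype.card V → (∀ A ∈ F, A.card = k) → (∀ φ T, 0 ≤ w φ T) →
      (∀ φ T, T.image φ ∉ F → w φ T = 0) →
      (∀ φ i, ∑ T, (if i ∈ T then w φ T else 0) ≤ 1) →
      ∃ M : Finset (Finset V), M ⊆ F ∧ (∀ A ∈ M, ∀ B ∈ M, A ≠ B → Disjoint A B) ∧
        (Fintype.card V : ℝ) / m * ((∑ φ, ∑ T, w φ T) / (Fintype.card V : ℝ) ^ m)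
          - ε * Fintype.card V ≤ M.card := by
  classical
  obtain ⟨δ, hδ, N, hfi⟩ := frac_to_int k hk ε hε
  refine ⟨N + ⌈m / δ⌉₊ + 1, ?_⟩
  intro V _ _ F w hN hF hw0 hwF hw1
  set n : ℝ := (Fintype.card V : ℝ) with hn
  have hn0 : 0 < n := by rw [hn]; exact_mod_cast (by omega)
  have hnδ : m / δ ≤ n := by
    refine (Nat.le_ceil _).trans ?_
    rw [hn]; exact_mod_cast by omega
  have hm0 : (0:ℝ) < m := by exact_mod_cast hm
  let ι := {p : (Fin m → V) × Finset (Fin m) // p.2.image p.1 ∈ F}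
  let E : ι → Finset V := fun p => p.1.2.image p.1.1
  set s : ℝ := n / m / n ^ m with hs
  have hs0 : 0 < s := by positivity
  let W : ι → ℝ := fun p => s * w p.1.1 p.1.2
  have hsum : ∀ G : (Fin m → V) → Finset (Fin m) → ℝ,
      ∑ p : ι, W p * G p.1.1 p.1.2 = s * ∑ φ, ∑ T, w φ T * G φ T := by
    intro G
    rw [← Fintype.sum_prod_type' (fun φ T => w φ T * G φ T), Finset.mul_sum]
    have h1 := Finset.sum_subtype (univ.filter
      (fun p : (Fin m → V) × Finset (Fin m) => p.2.image p.1 ∈ F))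
      (p := fun p => p.2.image p.1 ∈ F) (F := inferInstance) (fun p => by simp) (fun p => s * (w p.1 p.2 * G p.1 p.2))
    have h2 : ∑ p : ι, W p * G p.1.1 p.1.2 = ∑ p : ι, s * (w p.1.1 p.1.2 * G p.1.1 p.1.2) :=
      Finset.sum_congr rfl fun p _ => by simp only [W]; ring
    rw [h2]
    refine h1.symm.trans ?_
    rw [Finset.sum_filter]
    refine Finset.sum_congr rfl fun p _ => ?_
    split_ifs with h
    · rfl
    · rw [hwF _ _ h]; ring
  have hdg : ∀ v, dg E W v ≤ 1 := by
    intro v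
    have := hsum (fun φ T => ind (T.image φ) v)
    unfold dg
    simp only [E]
    rw [this]
    have h1 : ∀ φ : Fin m → V, ∑ T, w φ T * ind (T.image φ) v ≤
        ∑ i, if φ i = v then (1:ℝ) else 0 := by
      intro φ
      calc _ ≤ ∑ T, ∑ i, (if φ i = v then (if i ∈ T then w φ T else 0) else 0) := by
            refine Finset.sum_le_sum fun T _ => ?_
            have hnn : ∀ i ∈ (univ : Finset (Fin m)),
                0 ≤ (if φ i = v then (if i ∈ T then w φ T else 0) else 0) := by
              intro i _; split_ifs <;> first | exact hw0 φ T | exact le_rfl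
            unfold ind
            split_ifs with h
            · obtain ⟨i, hi, hiv⟩ := mem_image.mp h
              have := Finset.single_le_sum hnn (mem_univ i)
              simp only [hiv, hi, if_true] at this
              simpa using this
            · simpa using Finset.sum_nonneg hnn
        _ = ∑ i, if φ i = v then (∑ T, (if i ∈ T then w φ T else 0)) else 0 := by
            rw [Finset.sum_comm]
            refine Finset.sum_congr rfl fun i _ => ?_
            split_ifs <;> simp
        _ ≤ _ := by
            refine Finset.sum_le_sum fun i _ => ?_
            split_ifs
            · exact hw1 φ i
            · exact le_rfl
    calc _ ≤ s * ∑ φ : Fin m → V, ∑ i, if φ i = v then (1:ℝ) else 0 := by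
          gcongr with φ _; exact h1 φ
      _ = s * (m * (n ^ m / n)) := by
          rw [Finset.sum_comm]
          have : ∀ i : Fin m, ∑ φ : Fin m → V, (if φ i = v then (1:ℝ) else 0) = n ^ m / n := by
            intro i
            have := card_one (β := V) i v
            rw [Fintype.card_fin] at this
            rw [eq_div_iff hn0.ne']; exact this
          simp_rw [this]; simp
      _ = 1 := by rw [hs]; field_simp
      _ ≤ 1 := le_rfl
  have hcd : ∀ u v, u ≠ v → cd E W u v ≤ δ := by
    intro u v huv
    have := hsum (fun φ T => ind (T.image φ) u * ind (T.image φ) v)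
    unfold cd
    simp only [E]
    simp_rw [mul_assoc]
    rw [this]
    have h1 : ∀ φ : Fin m → V, ∑ T, w φ T * (ind (T.image φ) u * ind (T.image φ) v) ≤
        ∑ i, ∑ j, if i ≠ j then (if φ i = u ∧ φ j = v then (1:ℝ) else 0) else 0 := by
      intro φ
      calc _ ≤ ∑ T, ∑ i, ∑ j, (if φ i = u ∧ φ j = v then (if i ∈ T then (if j ∈ T then w φ T else 0) else 0) else 0) := by
            refine Finset.sum_le_sum fun T _ => ?_
            have hnn' : ∀ i j : Fin m,
                0 ≤ (if φ i = u ∧ φ j = v then (if i ∈ T then (if j ∈ T then w φ T else 0) else 0) else 0) := by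
              intro i j; split_ifs <;> first | exact hw0 φ T | exact le_rfl
            unfold ind
            by_cases h : u ∈ T.image φ
            · by_cases h' : v ∈ T.image φ
              · obtain ⟨i, hi, hiv⟩ := mem_image.mp h
                obtain ⟨j, hj, hjv⟩ := mem_image.mp h'
                have t1 := Finset.single_le_sum (f := fun i => ∑ j, (if φ i = u ∧ φ j = v then (if i ∈ T then (if j ∈ T then w φ T else 0) else 0) else 0)) (fun i _ => Finset.sum_nonneg fun j _ => hnn' i j) (mem_univ i)
                have t2 := Finset.single_le_sum (fun j _ => hnn' i j) (mem_univ j)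
                have t3 := t2.trans t1
                simp only [hiv, hjv, hi, hj, and_self, if_true] at t3
                rw [if_pos h, if_pos h', mul_one, mul_one]
                exact t3
              · rw [if_neg h', mul_zero, mul_zero]
                exact Finset.sum_nonneg fun i _ => Finset.sum_nonneg fun j _ => hnn' i j
            · rw [if_neg h, zero_mul, mul_zero]
              exact Finset.sum_nonneg fun i _ => Finset.sum_nonneg fun j _ => hnn' i j
        _ = ∑ i, ∑ j, if φ i = u ∧ φ j = v then (∑ T, (if i ∈ T then (if j ∈ T then w φ T else 0) else 0)) else 0 := by
            rw [Finset.sum_comm]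
            refine Finset.sum_congr rfl fun i _ => ?_
            rw [Finset.sum_comm]
            refine Finset.sum_congr rfl fun j _ => ?_
            split_ifs <;> simp
        _ ≤ _ := by
            refine Finset.sum_le_sum fun i _ => Finset.sum_le_sum fun j _ => ?_
            by_cases h : φ i = u ∧ φ j = v
            · have hij : i ≠ j := by
                rintro rfl; exact huv (h.1.symm.trans h.2)
              rw [if_pos h, if_pos hij, if_pos h]
              refine le_trans (Finset.sum_le_sum fun T _ => ?_) (hw1 φ i)
              split_ifs <;> first | exact hw0 φ T | exact le_rfl
            · rw [if_neg h]; simp [h]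
    calc _ ≤ s * ∑ φ : Fin m → V, ∑ i, ∑ j, (if i ≠ j then (if φ i = u ∧ φ j = v then (1:ℝ) else 0) else 0) := by
          gcongr with φ _; exact h1 φ
      _ ≤ s * (m * (m * (n ^ m / n ^ 2))) := by
          refine mul_le_mul_of_nonneg_left ?_ hs0.le
          rw [Finset.sum_comm]
          have : ∀ i j : Fin m, ∑ φ : Fin m → V, (if i ≠ j then (if φ i = u ∧ φ j = v then (1:ℝ) else 0) else 0) ≤ n ^ m / n ^ 2 := by
            intro i j
            by_cases hij : i ≠ j
            · have := card_two (β := V) i j hij u v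
              rw [Fintype.card_fin] at this
              simp only [hij, ne_eq, not_false_eq_true, if_true]
              rw [le_div_iff₀ (by positivity)]; exact this.le
            · simp only [hij, if_false, sum_const_zero]; positivity
          calc _ ≤ ∑ i : Fin m, ∑ j : Fin m, n ^ m / n ^ 2 := by
                refine Finset.sum_le_sum fun i _ => ?_
                rw [Finset.sum_comm]
                exact Finset.sum_le_sum fun j _ => this i j
            _ = _ := by simp
            _ ≤ _ := le_rfl
      _ = m / n := by rw [hs]; field_simp
      _ ≤ δ := by
          rw [div_le_iff₀ hδ] at hnδ
          rw [div_le_iff₀ hn0]; linarith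
  obtain ⟨M, hM, hMc⟩ := hfi V ι E W (by omega) (fun p => hF _ p.2)
    (fun p => mul_nonneg hs0.le (hw0 _ _)) hdg hcd
  refine ⟨M.image E, ?_, ?_, ?_⟩
  · intro A hA
    obtain ⟨p, _, rfl⟩ := mem_image.mp hA
    exact p.2
  · intro A hA B hB hAB
    obtain ⟨p, hp, rfl⟩ := mem_image.mp hA
    obtain ⟨p', hp', rfl⟩ := mem_image.mp hB
    exact hM p hp p' hp' (fun h => hAB (by rw [h]))
  · rw [card_image_of_injOn]
    · have h1 := hsum (fun _ _ => 1)
      simp only [mul_one] at h1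
      rw [h1] at hMc
      have : n / m * ((∑ φ, ∑ T, w φ T) / n ^ m) = s * ∑ φ, ∑ T, w φ T := by rw [hs]; ring
      rw [this]; exact hMc
    · intro p hp p' hp' hpp
      by_contra hne
      have h1 := hM p hp p' hp' hne
      rw [hpp, disjoint_self] at h1
      have h2 := hF _ p'.2
      have h3 : E p' = ∅ := h1
      simp only [E] at h3
      rw [h3] at h2; simp at h2; omega
end Nib

open Finset
set_option linter.unusedSectionVars false
namespace Nib

theorem pow_exp_small (d : ℕ) (b e : ℝ) (hb : 0 < b) (he : 0 < e) :
    ∃ N : ℕ, ∀ m : ℕ, N ≤ m → (m:ℝ) ^ d * Real.exp (-(b * m)) ≤ e := by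
  have h := (tendsto_rpow_mul_exp_neg_mul_atTop_nhds_zero (d:ℝ) b hb).comp
    (tendsto_natCast_atTop_atTop (R := ℝ))
  have h2 := h.eventually (ge_mem_nhds he)
  obtain ⟨N, hN⟩ := Filter.eventually_atTop.mp h2
  refine ⟨N, fun m hm => ?_⟩
  have := hN m hm
  simpa [Function.comp] using this

theorem sampling (k d : ℕ) (hk : 2 ≤ k) (hdk : d < k) (x c0 c η : ℝ) (hx0 : 0 < x) (hx1 : x ≤ 1)
    (hc0 : c0 < c) (hc1 : c - c0 ≤ 1) (hη : 0 < η) (N0 : ℕ)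
    (hstar : ∀ m, N0 ≤ m → ∀ F : Finset (Finset (Fin m)), (∀ T ∈ F, T.card = k) →
      (∀ S : Finset (Fin m), S.card = d →
        c0 * ((m - d).choose (k - d)) ≤ ((F.filter (fun T => S ⊆ T)).card : ℝ)) →
      ∃ w : Finset (Fin m) → ℝ, (∀ T, 0 ≤ w T) ∧ (∀ T, T ∉ F → w T = 0) ∧
        (∀ i, ∑ T, (if i ∈ T then w T else 0) ≤ 1) ∧ x * m ≤ ∑ T, w T) :
    ∃ N : ℕ, ∀ (V : Type) [Fintype V] [DecidableEq V] (F : Finset (Finset V)),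
      N ≤ Fintype.card V → (∀ A ∈ F, A.card = k) →
      (∀ S' : Finset V, S'.card = d → c * (Fintype.card V : ℝ) ^ (k - d) ≤
        ((k - d).factorial : ℝ) * (F.filter (fun A => S' ⊆ A)).card) →
      ∃ M : Finset (Finset V), M ⊆ F ∧ (∀ A ∈ M, ∀ B ∈ M, A ≠ B → Disjoint A B) ∧
        (x - η) * Fintype.card V ≤ M.card := by
  classical
  have hk0 : (0:ℝ) < k := by exact_mod_cast (by omega : 0 < k)
  have hγ : 0 < c - c0 := by linarith
  obtain ⟨N1, hN1⟩ := pow_exp_small d ((c - c0) ^ 2 / (16 * k ^ 2)) (η / 4) (by positivity) (by positivity)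
  obtain ⟨m, hm⟩ : ∃ m, m = N0 + N1 + 2 * k := ⟨_, rfl⟩
  have hexp := hN1 m (by omega)
  obtain ⟨N2, hN2⟩ := avg k hk (η / 2) (by positivity) m (by omega)
  refine ⟨N2 + ⌈(m:ℝ) ^ d * d ^ 2 / (η / 4)⌉₊ + 1, ?_⟩
  intro V _ _ F hN hF hdeg
  set n : ℝ := (Fintype.card V : ℝ) with hn
  have hn0 : 0 < n := by rw [hn]; exact_mod_cast (by omega)
  have hnn : (m:ℝ) ^ d * d ^ 2 / (η / 4) ≤ n := by
    refine (Nat.le_ceil _).trans ?_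
    rw [hn]; exact Nat.cast_le.mpr (by omega)
  have hm0 : (0:ℝ) < m := by exact_mod_cast (by omega)
  set K : ℝ := ((m - d).choose (k - d) : ℝ) with hK
  let Ff : (Fin m → V) → Finset (Finset (Fin m)) := fun φ =>
    ((univ : Finset (Fin m)).powersetCard k).filter (fun T => T.image φ ∈ F)
  have hX : ∀ φ S, X F k S φ = (((Ff φ).filter (fun T => S ⊆ T)).card : ℝ) := by
    intro φ S
    unfold X
    rw [Finset.sum_boole]
    congr 2
    simp only [Ff]
    rw [Finset.filter_filter, Finset.filter_filter]
    exact Finset.filter_congr fun T _ => and_comm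
  let good : (Fin m → V) → Prop := fun φ => ∀ S : Finset (Fin m), S.card = d → c0 * K ≤ X F k S φ
  have hex : ∀ φ, ∃ w : Finset (Fin m) → ℝ, (∀ T, 0 ≤ w T) ∧ (∀ T, T ∉ Ff φ → w T = 0) ∧
        (∀ i, ∑ T, (if i ∈ T then w T else 0) ≤ 1) ∧ (good φ → x * m ≤ ∑ T, w T) := by
    intro φ
    by_cases hg : good φ
    · obtain ⟨w, h1, h2, h3, h4⟩ := hstar m (by omega) (Ff φ)
        (fun T hT => (mem_powersetCard.mp (mem_filter.mp hT).1).2)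
        (fun S hS => by rw [← hX]; exact hg S hS)
      exact ⟨w, h1, h2, h3, fun _ => h4⟩
    · exact ⟨fun _ => 0, by simp, by simp, by simp, fun h => absurd h hg⟩
  choose w hw0 hwF hw1 hwx using hex
  obtain ⟨M, hMF, hMd, hMc⟩ := hN2 V F w (by omega) hF hw0
    (fun φ T hT => hwF φ T (fun h => hT (mem_filter.mp h).2)) hw1
  refine ⟨M, hMF, hMd, le_trans ?_ hMc⟩
  set z : ℝ := Real.exp (- ((c - c0) ^ 2 / (16 * k ^ 2) * m)) + d ^ 2 / n with hz
  have hz0 : 0 ≤ z := by positivity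
  have hbad : ∑ φ : Fin m → V, (if good φ then (0:ℝ) else 1) ≤ n ^ m * (η / 2) := by
    calc _ ≤ ∑ φ : Fin m → V, ∑ S ∈ (univ : Finset (Fin m)).powersetCard d,
          (if X F k S φ < c0 * K then (1:ℝ) else 0) := by
          refine Finset.sum_le_sum fun φ _ => ?_
          have hnn : ∀ S ∈ (univ : Finset (Fin m)).powersetCard d,
            0 ≤ (if X F k S φ < c0 * K then (1:ℝ) else 0) := by
            intro S _; split_ifs <;> norm_num
          split_ifs with hg
          · exact Finset.sum_nonneg hnn
          · simp only [good, not_forall, not_le] at hg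
            obtain ⟨S, hS, hlt⟩ := hg
            have := Finset.single_le_sum hnn (mem_powersetCard.mpr ⟨subset_univ S, hS⟩)
            rwa [if_pos hlt] at this
      _ ≤ ∑ S ∈ (univ : Finset (Fin m)).powersetCard d, n ^ m * z := by
          rw [Finset.sum_comm]
          refine Finset.sum_le_sum fun S hS => ?_
          have := bad_S F k d hdk hF S (mem_powersetCard.mp hS).2 c0 c hc0 hc1 (by omega) (by omega) hdeg
          convert this
      _ = (m.choose d : ℝ) * (n ^ m * z) := by simp
      _ ≤ (m:ℝ) ^ d * (n ^ m * z) := by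
          gcongr
          exact_mod_cast Nat.choose_le_pow m d
      _ = n ^ m * ((m:ℝ) ^ d * Real.exp (- ((c - c0) ^ 2 / (16 * k ^ 2) * m)) + (m:ℝ) ^ d * d ^ 2 / n) := by
          rw [hz]; ring
      _ ≤ n ^ m * (η / 4 + η / 4) := by
          rw [div_le_iff₀ (by positivity)] at hnn
          refine mul_le_mul_of_nonneg_left (add_le_add hexp ?_) (by positivity)
          rw [div_le_iff₀ hn0]; linarith
      _ = _ := by ring
  have hlow : x * m * (n ^ m * (1 - η / 2)) ≤ ∑ φ, ∑ T, w φ T := by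
    calc _ ≤ x * m * (∑ φ : Fin m → V, (1 - (if good φ then (0:ℝ) else 1))) := by
          refine mul_le_mul_of_nonneg_left ?_ (by positivity)
          rw [Finset.sum_sub_distrib]
          have : ∑ φ : Fin m → V, (1:ℝ) = n ^ m := by simp [hn]
          rw [this]; linarith
      _ ≤ _ := by
          rw [Finset.mul_sum]
          refine Finset.sum_le_sum fun φ _ => ?_
          split_ifs with hg
          · simpa using hwx φ hg
          · simpa using Finset.sum_nonneg fun T _ => hw0 φ T
  have h1 : x * m * (1 - η / 2) ≤ (∑ φ, ∑ T, w φ T) / n ^ m := by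
    rw [le_div_iff₀ (by positivity)]; linarith
  have h2 : n / m * (x * m * (1 - η / 2)) ≤ n / m * ((∑ φ, ∑ T, w φ T) / n ^ m) := by gcongr
  have h3 : n / m * (x * m * (1 - η / 2)) = x * n - x * (η / 2 * n) := by field_simp
  have h4 : x * (η / 2 * n) ≤ 1 * (η / 2 * n) := by gcongr
  rw [h3] at h2
  linarith
end Nib

open Finset
set_option linter.unusedSectionVars false
namespace Nib

section
variable {V : Type} [Fintype V] [DecidableEq V]

theorem avoid (F : Finset (Finset V)) (k d : ℕ) (hdk : d < k) (hF : ∀ A ∈ F, A.card = k)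
    (U S : Finset V) (hS : S.card = d) (hSU : Disjoint S U) :
    ((F.filter (fun A => S ⊆ A)).card : ℝ) - U.card * (Fintype.card V : ℝ) ^ (k - d - 1) ≤
      ((F.filter (fun A => S ⊆ A ∧ Disjoint A U)).card : ℝ) := by
  have h1 : F.filter (fun A => S ⊆ A) ⊆ F.filter (fun A => S ⊆ A ∧ Disjoint A U) ∪
      U.biUnion (fun u => ((univ : Finset V).powersetCard k).filter (fun A => insert u S ⊆ A)) := by
    intro A hA
    obtain ⟨hAF, hSA⟩ := mem_filter.mp hA
    by_cases h : Disjoint A U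
    · exact mem_union_left _ (mem_filter.mpr ⟨hAF, hSA, h⟩)
    · apply mem_union_right
      obtain ⟨u, hu, hu'⟩ := Finset.not_disjoint_iff.mp h
      refine mem_biUnion.mpr ⟨u, hu', mem_filter.mpr ⟨?_, insert_subset hu hSA⟩⟩
      exact mem_powersetCard.mpr ⟨subset_univ _, hF A hAF⟩
  have h2 : (U.biUnion (fun u => ((univ : Finset V).powersetCard k).filter
      (fun A => insert u S ⊆ A))).card ≤ U.card * (Fintype.card V) ^ (k - d - 1) := by
    apply card_biUnion_le_card_mul
    intro u hu
    have huS : u ∉ S := fun h => Finset.disjoint_left.mp hSU h hu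
    rw [card_super univ (insert u S) (subset_univ _) k (by rw [card_insert_of_notMem huS]; omega),
      card_insert_of_notMem huS, hS, card_univ]
    rw [Nat.sub_sub]
    refine (Nat.choose_le_pow _ _).trans ?_
    exact Nat.pow_le_pow_left (by omega) _
  have h3 := (card_le_card h1).trans (card_union_le _ _)
  have h4 := h3.trans (Nat.add_le_add_left h2 _)
  have h5 : ((F.filter (fun A => S ⊆ A)).card : ℝ) ≤
    ((F.filter (fun A => S ⊆ A ∧ Disjoint A U)).card : ℝ) + U.card * (Fintype.card V : ℝ) ^ (k - d - 1) := by
    exact_mod_cast h4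
  linarith

theorem greedy (F : Finset (Finset V)) (k d t : ℕ) (hdk : d < k) (hF : ∀ A ∈ F, A.card = k)
    (ht : k * t + d ≤ Fintype.card V)
    (h : ∀ U S : Finset V, S.card = d → Disjoint S U → U.card ≤ k * t →
      0 < (F.filter (fun A => S ⊆ A ∧ Disjoint A U)).card) (j : ℕ) (hj : j ≤ t) :
    ∃ M : Finset (Finset V), M ⊆ F ∧ (∀ A ∈ M, ∀ B ∈ M, A ≠ B → Disjoint A B) ∧ M.card = j := by
  induction j with
  | zero => exact ⟨∅, by simp, by simp, by simp⟩
  | succ j ih =>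
    obtain ⟨M, hMF, hMd, hMc⟩ := ih (by omega)
    have hU : (M.biUnion id).card ≤ k * t := by
      have h1 : (M.biUnion id).card ≤ M.card * k := card_biUnion_le_card_mul _ _ _ (fun A hA => (hF A (hMF hA)).le)
      rw [hMc] at h1
      have : j * k ≤ t * k := Nat.mul_le_mul_right k (by omega)
      linarith [mul_comm t k]
    obtain ⟨S, hS, hSc⟩ := Finset.exists_subset_card_eq (s := (M.biUnion id)ᶜ) (n := d) (by
      rw [card_compl]; omega)
    have hSU : Disjoint S (M.biUnion id) := disjoint_of_subset_left hS disjoint_compl_left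
    obtain ⟨A, hA⟩ := card_pos.mp (h _ S hSc hSU hU)
    obtain ⟨hAF, _, hAU⟩ := mem_filter.mp hA
    have hAB : ∀ B ∈ M, Disjoint A B := fun B hB =>
      disjoint_of_subset_right (subset_biUnion_of_mem id hB) hAU
    have hAM : A ∉ M := by
      intro hAM
      have := hAB A hAM
      rw [disjoint_self] at this
      have h2 := hF A hAF
      have h3 : A = ∅ := this
      rw [h3] at h2; simp at h2; omega
    refine ⟨insert A M, insert_subset hAF hMF, ?_, by rw [card_insert_of_notMem hAM, hMc]⟩
    intro B hB C hC hBC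
    rcases mem_insert.mp hB with hB1 | hB1
    · rcases mem_insert.mp hC with hC1 | hC1
      · exact absurd (hB1.trans hC1.symm) hBC
      · rw [hB1]; exact hAB C hC1
    · rcases mem_insert.mp hC with hC1 | hC1
      · rw [hC1]; exact (hAB B hB1).symm
      · exact hMd B hB1 C hC1 hBC
end

theorem boosted (k d : ℕ) (hk : 2 ≤ k) (hdk : d < k) (x c0 c1 : ℝ) (hx0 : 0 < x) (hx1 : k * x < 1)
    (hc00 : 0 ≤ c0) (hc0 : c0 < c1) (N0 : ℕ)
    (hstar : ∀ m, N0 ≤ m → ∀ F : Finset (Finset (Fin m)), (∀ T ∈ F, T.card = k) →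
      (∀ S : Finset (Fin m), S.card = d →
        c0 * ((m - d).choose (k - d)) ≤ ((F.filter (fun T => S ⊆ T)).card : ℝ)) →
      ∃ w : Finset (Fin m) → ℝ, (∀ T, 0 ≤ w T) ∧ (∀ T, T ∉ F → w T = 0) ∧
        (∀ i, ∑ T, (if i ∈ T then w T else 0) ≤ 1) ∧ x * m ≤ ∑ T, w T) :
    ∃ N : ℕ, ∀ (V : Type) [Fintype V] [DecidableEq V] (F : Finset (Finset V)),
      N ≤ Fintype.card V → (∀ A ∈ F, A.card = k) →
      (∀ S' : Finset V, S'.card = d → c1 * (Fintype.card V : ℝ) ^ (k - d) ≤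
        ((k - d).factorial : ℝ) * (F.filter (fun A => S' ⊆ A)).card) →
      ∃ M : Finset (Finset V), M ⊆ F ∧ (∀ A ∈ M, ∀ B ∈ M, A ≠ B → Disjoint A B) ∧
        x * Fintype.card V < M.card := by
  classical
  have hk2 : (2:ℝ) ≤ k := by exact_mod_cast hk
  -- choose c
  obtain ⟨c, hcc0, hcc1, hc01⟩ : ∃ c, c0 < c ∧ c < c1 ∧ c - c0 ≤ 1 := by
    refine ⟨min ((c0 + c1) / 2) (c0 + 1), ?_, ?_, ?_⟩
    · apply lt_min <;> linarith
    · exact lt_of_le_of_lt (min_le_left _ _) (by linarith)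
    · linarith [min_le_right ((c0 + c1) / 2) (c0 + 1)]
  have hc0' : 0 < c := by linarith
  set g : ℝ := ((k - d).factorial : ℝ) with hg
  have hg0 : 0 < g := by rw [hg]; exact_mod_cast Nat.factorial_pos _
  obtain ⟨β, hβ0, hβ1, hβ2⟩ : ∃ β : ℝ, 0 < β ∧ g * k * (2 * β) ≤ c1 - c ∧ k * (2 * β) ≤ 1 / 2 := by
    refine ⟨min ((c1 - c) / (g * k * 2)) (1 / (4 * k)), ?_, ?_, ?_⟩
    · apply lt_min
      · apply div_pos <;> [linarith; positivity]
      · positivity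
    · have := min_le_left ((c1 - c) / (g * k * 2)) (1 / (4 * (k:ℝ)))
      rw [le_div_iff₀ (by positivity)] at this
      linarith
    · have := min_le_right ((c1 - c) / (g * k * 2)) (1 / (4 * (k:ℝ)))
      rw [le_div_iff₀ (by positivity)] at this
      linarith
  set η := β * (1 - k * x) / 2 with hη
  have hη0 : 0 < η := by
    have : 0 < 1 - k * x := by linarith
    positivity
  obtain ⟨N, hsamp⟩ := sampling k d hk hdk x c0 c η hx0 (by nlinarith) hcc0 hc01 hη0 N0 hstar
  refine ⟨2 * N + 2 * d + ⌈1 / β⌉₊ + 1, ?_⟩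
  intro V _ _ F hN hF hdeg
  set n : ℝ := (Fintype.card V : ℝ) with hn
  have hn0 : 0 < n := by rw [hn]; exact_mod_cast (by omega)
  have hnβ : 1 ≤ β * n := by
    have : 1 / β ≤ n := by
      refine (Nat.le_ceil _).trans ?_
      rw [hn]; exact_mod_cast by omega
    rw [div_le_iff₀ hβ0] at this
    linarith
  have hn2 : 2 * (N:ℝ) + 2 * d ≤ n := by
    rw [hn]; exact_mod_cast (by omega)
  set t := ⌈β * n⌉₊ with ht
  have ht1 : β * n ≤ t := Nat.le_ceil _
  have ht2 : (t:ℝ) ≤ 2 * β * n := by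
    have := Nat.ceil_lt_add_one (show 0 ≤ β * n by positivity)
    linarith
  have hkt : (k:ℝ) * t ≤ n / 2 := by
    calc (k:ℝ) * t ≤ k * (2 * β * n) := by gcongr
      _ = k * (2 * β) * n := by ring
      _ ≤ 1 / 2 * n := by gcongr
      _ = n / 2 := by ring
  have hktN : k * t + d + N ≤ Fintype.card V := by
    have : (k:ℝ) * t + d + N ≤ n := by linarith
    rw [hn] at this
    exact_mod_cast this
  have hpow : n * n ^ (k - d - 1) = n ^ (k - d) := by
    rw [← pow_succ']; congr 1; omega
  have hav : ∀ U S : Finset V, S.card = d → Disjoint S U → U.card ≤ k * t →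
      c * n ^ (k - d) ≤ g * (F.filter (fun A => S ⊆ A ∧ Disjoint A U)).card := by
    intro U S hS hSU hU
    have h1 := avoid F k d hdk hF U S hS hSU
    have h2 := hdeg S hS
    have h3 : (U.card : ℝ) ≤ k * (2 * β * n) := by
      have : (U.card : ℝ) ≤ k * t := by exact_mod_cast hU
      refine this.trans ?_
      gcongr
    have h4 : g * (U.card * n ^ (k - d - 1)) ≤ (c1 - c) * n ^ (k - d) := by
      calc g * (U.card * n ^ (k - d - 1)) ≤ g * (k * (2 * β * n) * n ^ (k - d - 1)) := by gcongr
        _ = g * k * (2 * β) * (n * n ^ (k - d - 1)) := by ring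
        _ ≤ (c1 - c) * (n * n ^ (k - d - 1)) := by gcongr
        _ = _ := by rw [hpow]
    have h5 := mul_le_mul_of_nonneg_left h1 hg0.le
    rw [mul_sub] at h5
    linarith
  obtain ⟨M, hMF, hMd, hMc⟩ := greedy F k d t hdk hF (by omega) (by
    intro U S hS hSU hU
    have := hav U S hS hSU hU
    have h2 : 0 < c * n ^ (k - d) := by positivity
    have h3 : 0 < g * (F.filter (fun A => S ⊆ A ∧ Disjoint A U)).card := lt_of_lt_of_le h2 this
    have h4 := pos_of_mul_pos_right h3 hg0.le
    exact_mod_cast h4) t le_rfl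
  set U := M.biUnion id with hU
  have hUc : U.card = k * t := by
    rw [hU, card_biUnion (t := id) (fun A hA B hB hAB => hMd A hA B hB hAB),
      Finset.sum_congr rfl (f := fun A => #(id A)) (g := fun _ => k) (fun A hA => hF A (hMF hA))]
    simp [hMc, mul_comm]
  let V1 := {v : V // v ∉ U}
  let em : V1 ↪ V := Function.Embedding.subtype _
  have hV1 : Fintype.card V1 = Fintype.card V - k * t := by
    rw [← hUc, ← Fintype.card_coe U, ← Fintype.card_subtype_compl]
  have hV1R : (Fintype.card V1 : ℝ) = n - k * t := by
    rw [hV1, Nat.cast_sub (by omega)]; push_cast; rfl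
  let F1 : Finset (Finset V1) := univ.filter (fun B => B.map em ∈ F)
  have hdisjU : ∀ B : Finset V1, Disjoint (B.map em) U := by
    intro B
    rw [Finset.disjoint_left]
    intro v hv
    obtain ⟨a, _, rfl⟩ := mem_map.mp hv
    exact a.2
  obtain ⟨M1, hM1F, hM1d, hM1c⟩ := hsamp V1 F1 (by omega) (by
      intro B hB
      have := hF _ (mem_filter.mp hB).2
      rwa [card_map] at this) (by
      intro S' hS'
      have h1 := hav U (S'.map em) (by rw [card_map, hS']) (hdisjU S') hUc.le
      have h2 : (F.filter (fun A => S'.map em ⊆ A ∧ Disjoint A U)).card ≤ (F1.filter (fun A => S' ⊆ A)).card := by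
        have hmap : ∀ A : Finset V, Disjoint A U → (A.subtype (fun v => v ∉ U)).map em = A := by
          intro A hA
          refine (Finset.subtype_map _).trans ?_
          rw [Finset.filter_eq_self]
          intro v hv hvU
          exact Finset.disjoint_left.mp hA hv hvU
        apply Finset.card_le_card_of_injOn (fun A => A.subtype (fun v => v ∉ U))
        · intro A hA
          simp only [coe_filter, Set.mem_ofPred_eq] at hA
          obtain ⟨hAF, hSA, hAU⟩ := hA
          simp only [coe_filter, Set.mem_ofPred_eq, F1, mem_filter, mem_univ, true_and]
          refine ⟨by rw [hmap A hAU]; exact hAF, ?_⟩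
          rw [← Finset.map_subset_map (f := em), hmap A hAU]
          exact hSA
        · intro A hA B hB hAB
          simp only [coe_filter, Set.mem_ofPred_eq] at hA hB
          simp only at hAB
          rw [← hmap A hA.2.2, hAB, hmap B hB.2.2]
      have h3 : ((F.filter (fun A => S'.map em ⊆ A ∧ Disjoint A U)).card : ℝ) ≤ (F1.filter (fun A => S' ⊆ A)).card := by
        exact_mod_cast h2
      calc c * (Fintype.card V1 : ℝ) ^ (k - d) ≤ c * n ^ (k - d) := by
            have : (Fintype.card V1 : ℝ) ≤ n := by
              rw [hV1R]; have : 0 ≤ (k:ℝ) * t := by positivity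
              linarith
            gcongr
        _ ≤ _ := h1
        _ ≤ _ := by gcongr)
  have hdisj : ∀ A ∈ M, ∀ B ∈ M1, Disjoint A (B.map em) := fun A hA B _ =>
    (disjoint_of_subset_right (subset_biUnion_of_mem id hA) (hdisjU B)).symm
  refine ⟨M ∪ M1.image (fun B => B.map em), ?_, ?_, ?_⟩
  · apply union_subset hMF
    intro A hA
    obtain ⟨B, hB, rfl⟩ := mem_image.mp hA
    exact (mem_filter.mp (hM1F hB)).2
  · intro A hA B hB hAB
    rcases mem_union.mp hA with hA | hA
    · rcases mem_union.mp hB with hB | hB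
      · exact hMd A hA B hB hAB
      · obtain ⟨B', hB', rfl⟩ := mem_image.mp hB
        exact hdisj A hA B' hB'
    · obtain ⟨A', hA', rfl⟩ := mem_image.mp hA
      rcases mem_union.mp hB with hB | hB
      · exact (hdisj B hB A' hA').symm
      · obtain ⟨B', hB', rfl⟩ := mem_image.mp hB
        rw [Finset.disjoint_map]
        exact hM1d A' hA' B' hB' (fun h => hAB (by rw [h]))
  · have hdd : Disjoint M (M1.image (fun B => B.map em)) := by
      rw [Finset.disjoint_left]
      intro A hA hA'
      obtain ⟨B, hB, hBA⟩ := mem_image.mp hA'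
      have h1 := hdisj A hA B hB
      rw [hBA, disjoint_self] at h1
      have h2 := hF A (hMF hA)
      have h3 : A = ∅ := h1
      rw [h3] at h2; simp at h2; omega
    rw [card_union_of_disjoint hdd, card_image_of_injective _ (Finset.map_injective em), hMc]
    push_cast
    rw [hV1R] at hM1c
    have e1 : β * n * (1 - k * x) ≤ t * (1 - k * x) := by
      gcongr
    have e2 : η * n = β * n * (1 - k * x) / 2 := by rw [hη]; ring
    have e3 : 0 ≤ η * (k * t) := by positivity
    have e4 : 0 < β * n * (1 - k * x) := mul_pos (by positivity) (by linarith)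
    nlinarith
end Nib

open Finset
set_option linter.unusedSectionVars false
namespace Nib

theorem minDeg_le (n d : ℕ) (F : Finset (Finset ℕ)) (S : Finset ℕ) (hS : S ⊆ range n) (hc : S.card = d) :
    minDeg n d F ≤ (F.filter (fun A => S ⊆ A)).card :=
  Nat.sInf_le ⟨S, mem_powersetCard.mpr ⟨hS, hc⟩, rfl⟩

theorem le_minDeg (n d : ℕ) (hd : d ≤ n) (F : Finset (Finset ℕ)) :
    ∃ S ∈ (range n).powersetCard d, minDeg n d F = (F.filter (fun A => S ⊆ A)).card := by
  have : {t : ℕ | ∃ S ∈ (Finset.range n).powersetCard d,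
      t = (F.filter (fun A => S ⊆ A)).card}.Nonempty := by
    refine ⟨_, range d, mem_powersetCard.mpr ⟨?_, card_range d⟩, rfl⟩
    exact range_subset_range.mpr hd
  exact Nat.sInf_mem this

theorem minDeg_le_choose (n k d : ℕ) (hd : d ≤ n) (hdk : d ≤ k) (F : Finset (Finset ℕ))
    (hF : F ⊆ (range n).powersetCard k) : minDeg n d F ≤ (n - d).choose (k - d) := by
  refine (minDeg_le n d F (range d) (range_subset_range.mpr hd) (card_range d)).trans ?_
  have := card_super (range n) (range d) (range_subset_range.mpr hd) k (by simpa using hdk)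
  rw [card_range, card_range] at this
  rw [← this]
  exact card_le_card (filter_subset_filter _ hF)

theorem minDeg_bdd (n d : ℕ) (F : Finset (Finset ℕ)) : minDeg n d F ≤ F.card := by
  unfold minDeg
  by_cases h : {t : ℕ | ∃ S ∈ (Finset.range n).powersetCard d,
      t = (F.filter (fun A => S ⊆ A)).card}.Nonempty
  · obtain ⟨S, _, h2⟩ := Nat.sInf_mem h
    rw [h2]; exact card_filter_le _ _
  · rw [Set.not_nonempty_iff_eq_empty.mp h]; simp

theorem bdd1 (n k d s : ℕ) : BddAbove {t : ℕ | ∃ F : Finset (Finset ℕ), F ⊆ (Finset.range n).powersetCard k ∧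
    fracMatchingNumber n F < (s : ℝ) + 1 ∧ t = minDeg n d F} := by
  refine ⟨((range n).powersetCard k).card, ?_⟩
  rintro t ⟨F, hF, _, rfl⟩
  exact (minDeg_bdd n d F).trans (card_le_card hF)

theorem bdd2 (n k d s : ℕ) : BddAbove {t : ℕ | ∃ F : Finset (Finset ℕ), F ⊆ (Finset.range n).powersetCard k ∧
    matchingNumber F < s + 1 ∧ t = minDeg n d F} := by
  refine ⟨((range n).powersetCard k).card, ?_⟩
  rintro t ⟨F, hF, _, rfl⟩
  exact (minDeg_bdd n d F).trans (card_le_card hF)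

theorem bdd3 (F : Finset (Finset ℕ)) : BddAbove {t : ℕ | ∃ M : Finset (Finset ℕ), M ⊆ F ∧
    (M : Set (Finset ℕ)).Pairwise (fun A B => Disjoint A B) ∧ M.card = t} := by
  refine ⟨F.card, ?_⟩
  rintro t ⟨M, hM, _, rfl⟩
  exact card_le_card hM

theorem nu_le (n : ℕ) (F : Finset (Finset ℕ)) : (matchingNumber F : ℝ) ≤ fracMatchingNumber n F := by
  have hne : {t : ℕ | ∃ M : Finset (Finset ℕ), M ⊆ F ∧
    (M : Set (Finset ℕ)).Pairwise (fun A B => Disjoint A B) ∧ M.card = t}.Nonempty :=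
    ⟨0, ∅, by simp, by simp, by simp⟩
  obtain ⟨M, hMF, hMd, hMc⟩ := Nat.sSup_mem hne (bdd3 F)
  have hMc' : M.card = matchingNumber F := hMc
  rw [← hMc']
  unfold fracMatchingNumber
  apply le_csSup
  · refine ⟨F.card, ?_⟩
    rintro v ⟨w, h1, _, _, rfl⟩
    calc ∑ A ∈ F, w A ≤ ∑ A ∈ F, (1:ℝ) := Finset.sum_le_sum fun A _ => (h1 A).2
      _ = F.card := by simp
  · refine ⟨fun A => if A ∈ M then 1 else 0, ?_, ?_, ?_, ?_⟩
    · intro A; dsimp only; split_ifs <;> norm_num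
    · intro A hA; dsimp only; rw [if_neg (fun h => hA (hMF h))]
    · intro i _
      rw [Finset.sum_boole]
      have : (#{A ∈ F.filter (fun A => i ∈ A) | A ∈ M}) ≤ 1 := by
        rw [Finset.card_le_one]
        intro A hA B hB
        simp only [mem_filter] at hA hB
        by_contra hne
        exact Finset.disjoint_left.mp (hMd hA.2 hB.2 hne) hA.1.2 hB.1.2
      exact_mod_cast this
    · rw [Finset.sum_boole, Finset.filter_mem_eq_inter, Finset.inter_eq_right.mpr hMF]

theorem frac_zero (n : ℕ) : fracMatchingNumber n ∅ ≤ 0 := by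
  unfold fracMatchingNumber
  refine csSup_le (Set.nonempty_of_mem (x := (0:ℝ)) ⟨fun _ => 0, by simp, by simp, by simp, by simp⟩) ?_
  rintro v ⟨w, _, _, _, rfl⟩
  simp

theorem star_le (n k d s : ℕ) : mStarDeg n k d s ≤ mDeg n k d s := by
  unfold mStarDeg mDeg
  apply csSup_le_csSup (bdd2 n k d s)
  · refine ⟨_, ∅, by simp, ?_, rfl⟩
    have := frac_zero n
    have h2 : (0:ℝ) ≤ s := by positivity
    linarith
  · rintro t ⟨F, hF, h1, rfl⟩
    refine ⟨F, hF, ?_, rfl⟩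
    have := (nu_le n F).trans_lt h1
    exact_mod_cast this

theorem mDeg_le (n k d s : ℕ) (hd : d ≤ n) (hdk : d ≤ k) : mDeg n k d s ≤ (n - d).choose (k - d) := by
  unfold mDeg
  have hne : {t : ℕ | ∃ F : Finset (Finset ℕ), F ⊆ (Finset.range n).powersetCard k ∧
    matchingNumber F < s + 1 ∧ t = minDeg n d F}.Nonempty := by
    refine ⟨_, ∅, by simp, ?_, rfl⟩
    have := (nu_le n ∅).trans (frac_zero n)
    have : matchingNumber ∅ ≤ 0 := by exact_mod_cast this
    omega
  apply csSup_le hne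
  rintro t ⟨F, hF, _, rfl⟩
  exact minDeg_le_choose n k d hd hdk F hF

theorem mDeg_mem (n k d s : ℕ) : ∃ F : Finset (Finset ℕ), F ⊆ (Finset.range n).powersetCard k ∧
    matchingNumber F < s + 1 ∧ mDeg n k d s = minDeg n d F := by
  have hne : {t : ℕ | ∃ F : Finset (Finset ℕ), F ⊆ (Finset.range n).powersetCard k ∧
    matchingNumber F < s + 1 ∧ t = minDeg n d F}.Nonempty := by
    refine ⟨_, ∅, by simp, ?_, rfl⟩
    have := (nu_le n ∅).trans (frac_zero n)
    have : matchingNumber ∅ ≤ 0 := by exact_mod_cast this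
    omega
  exact Nat.sSup_mem hne (bdd2 n k d s)

/-- pulling a finset of naturals below `m` back to `Fin m` -/
theorem lift_fin (m : ℕ) (S : Finset ℕ) (hS : S ⊆ range m) :
    ∃ S' : Finset (Fin m), S'.map Fin.valEmbedding = S := by
  refine ⟨univ.filter (fun i => (i : ℕ) ∈ S), ?_⟩
  ext v
  simp only [mem_map, mem_filter, mem_univ, true_and, Fin.valEmbedding_apply]
  constructor
  · rintro ⟨a, ha, rfl⟩; exact ha
  · intro hv
    exact ⟨⟨v, mem_range.mp (hS hv)⟩, hv, rfl⟩

theorem map_sub_range (m : ℕ) (T : Finset (Fin m)) : T.map Fin.valEmbedding ⊆ range m := by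
  intro v hv
  obtain ⟨a, _, rfl⟩ := mem_map.mp hv
  exact mem_range.mpr a.2

theorem star_frac (k d m : ℕ) (x c0 : ℝ) (hx0 : 0 < x) (hdm : d ≤ m)
    (hlt : (mStarDeg m k d ⌊x * m⌋₊ : ℝ) < c0 * ((m - d).choose (k - d)))
    (F : Finset (Finset (Fin m))) (hF : ∀ T ∈ F, T.card = k)
    (hdeg : ∀ S : Finset (Fin m), S.card = d →
        c0 * ((m - d).choose (k - d)) ≤ ((F.filter (fun T => S ⊆ T)).card : ℝ)) :
      ∃ w : Finset (Fin m) → ℝ, (∀ T, 0 ≤ w T) ∧ (∀ T, T ∉ F → w T = 0) ∧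
        (∀ i, ∑ T, (if i ∈ T then w T else 0) ≤ 1) ∧ x * m ≤ ∑ T, w T := by
  classical
  let em : Finset (Fin m) ↪ Finset ℕ := ⟨fun T => T.map Fin.valEmbedding, Finset.map_injective _⟩
  let G : Finset (Finset ℕ) := F.map em
  have hG : G ⊆ (range m).powersetCard k := by
    intro A hA
    obtain ⟨T, hT, rfl⟩ := mem_map.mp hA
    refine mem_powersetCard.mpr ⟨map_sub_range m T, ?_⟩
    simp only [em, Function.Embedding.coeFn_mk, card_map]
    exact hF T hT
  have hdG : ¬ ((minDeg m d G : ℝ) < c0 * ((m - d).choose (k - d))) := by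
    obtain ⟨S, hS, hSe⟩ := le_minDeg m d hdm G
    obtain ⟨hS1, hS2⟩ := mem_powersetCard.mp hS
    obtain ⟨S', rfl⟩ := lift_fin m S hS1
    rw [card_map] at hS2
    rw [hSe, not_lt]
    refine (hdeg S' hS2).trans ?_
    have : (F.filter (fun T => S' ⊆ T)).card ≤ (G.filter (fun A => S'.map Fin.valEmbedding ⊆ A)).card := by
      rw [← card_map em]
      apply card_le_card
      intro A hA
      obtain ⟨T, hT, rfl⟩ := mem_map.mp hA
      obtain ⟨h1, h2⟩ := mem_filter.mp hT
      exact mem_filter.mpr ⟨mem_map_of_mem em h1, Finset.map_subset_map.mpr h2⟩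
    exact_mod_cast this
  have hnu : ¬ (fracMatchingNumber m G < (⌊x * m⌋₊ : ℝ) + 1) := by
    intro h
    apply hdG
    refine lt_of_le_of_lt ?_ hlt
    have hle : minDeg m d G ≤ mStarDeg m k d ⌊x * m⌋₊ :=
      le_csSup (bdd1 m k d ⌊x * m⌋₊) ⟨G, hG, h, rfl⟩
    exact_mod_cast hle
  have hgt : x * m < fracMatchingNumber m G :=
    lt_of_lt_of_le (Nat.lt_floor_add_one _) (not_lt.mp hnu)
  unfold fracMatchingNumber at hgt
  have hex := fun hne => exists_lt_of_lt_csSup hne hgt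
  obtain ⟨v, ⟨w, h1, h2, h3, rfl⟩, hv⟩ := hex
    (Set.nonempty_of_mem (x := (0:ℝ)) ⟨fun _ => 0, by simp, by simp, by simp, by simp⟩)
  refine ⟨fun T => w (em T), fun T => (h1 _).1, fun T hT => h2 _ ?_, ?_, ?_⟩
  · intro h
    obtain ⟨T', hT', he⟩ := mem_map.mp h
    rw [em.injective he] at hT'
    exact hT hT'
  · intro i
    have := h3 i (mem_range.mpr i.2)
    rw [Finset.sum_filter, Finset.sum_map] at this
    refine le_trans (le_of_eq ?_) this
    symm
    refine (Finset.sum_subset (subset_univ F) ?_).trans (Finset.sum_congr rfl ?_)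
    · intro T _ hT
      have : w (em T) = 0 := h2 _ (by
        intro h
        obtain ⟨T', hT', he⟩ := mem_map.mp h
        rw [em.injective he] at hT'
        exact hT hT')
      rw [this]; simp
    · intro T _
      have : ((i:ℕ) ∈ em T) ↔ i ∈ T := by
        simp only [em, Function.Embedding.coeFn_mk]
        exact Finset.mem_map' Fin.valEmbedding
      simp only [this]
  · refine hv.le.trans ?_
    rw [Finset.sum_map]
    exact Finset.sum_le_sum_of_subset_of_nonneg (subset_univ _) (fun T _ _ => (h1 _).1)

theorem fact_choose (k d n : ℕ) (hdk : d < k) (hn : k ≤ n) :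
    ((n:ℝ) - k) ^ (k - d) ≤ ((k - d).factorial : ℝ) * ((n - d).choose (k - d)) := by
  have h1 := Nat.pow_sub_le_descFactorial (n - d) (k - d)
  rw [Nat.descFactorial_eq_factorial_mul_choose] at h1
  have h2 : (n - k) ^ (k - d) ≤ (n - d + 1 - (k - d)) ^ (k - d) := Nat.pow_le_pow_left (by omega) _
  have h3 := h2.trans h1
  have h4 : (((n - k : ℕ) : ℝ)) ^ (k - d) ≤ ((k - d).factorial : ℝ) * ((n - d).choose (k - d)) := by
    exact_mod_cast h3
  rwa [Nat.cast_sub hn] at h4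

theorem asym (k r : ℕ) (c c1 : ℝ) (hc : c < c1) :
    ∀ᶠ n : ℕ in Filter.atTop, c * (n:ℝ) ^ r ≤ c1 * ((n:ℝ) - k) ^ r := by
  have h1 : Filter.Tendsto (fun n : ℕ => c1 * (1 - (k:ℝ) / n) ^ r) Filter.atTop (nhds (c1 * (1 - 0) ^ r)) :=
    ((tendsto_const_nhds.sub (tendsto_const_div_atTop_nhds_zero_nat (k:ℝ))).pow r).const_mul c1
  simp only [sub_zero, one_pow, mul_one] at h1
  filter_upwards [h1.eventually (lt_mem_nhds hc), Filter.eventually_gt_atTop 0] with n hn hn0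
  have hn0' : (0:ℝ) < n := by exact_mod_cast hn0
  have : (n:ℝ) - k = n * (1 - k / n) := by field_simp
  rw [this, mul_pow]
  have h2 : 0 < (n:ℝ) ^ r := by positivity
  nlinarith

theorem hard (k d : ℕ) (hk : 2 ≤ k) (hdk : d < k) (x c0 c1 : ℝ) (hx0 : 0 < x) (hx1 : k * x < 1)
    (hc00 : 0 ≤ c0) (hc0 : c0 < c1)
    (hstar : ∀ᶠ m : ℕ in Filter.atTop, (mStarDeg m k d ⌊x * m⌋₊ : ℝ) < c0 * ((m - d).choose (k - d))) :
    ∀ᶠ n : ℕ in Filter.atTop, (mDeg n k d ⌊x * n⌋₊ : ℝ) < c1 * ((n - d).choose (k - d)) := by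
  classical
  obtain ⟨N0, hN0⟩ := Filter.eventually_atTop.mp hstar
  obtain ⟨c, hc, hcc⟩ := exists_between hc0
  obtain ⟨N, hN⟩ := boosted k d hk hdk x c0 c hx0 hx1 hc00 hc (N0 + d) (fun m hm F hF hdeg =>
    star_frac k d m x c0 hx0 (by omega) (hN0 m (by omega)) F hF hdeg)
  filter_upwards [asym k (k - d) c c1 hcc, Filter.eventually_ge_atTop (N + k)] with n hn hnN
  by_contra hcon
  rw [not_lt] at hcon
  obtain ⟨F, hF, hnu, hmD⟩ := mDeg_mem n k d ⌊x * n⌋₊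
  rw [hmD] at hcon
  let em : Finset (Fin n) ↪ Finset ℕ := ⟨fun T => T.map Fin.valEmbedding, Finset.map_injective _⟩
  let F' : Finset (Finset (Fin n)) := univ.filter (fun T => em T ∈ F)
  have hdeg : ∀ S' : Finset (Fin n), S'.card = d → c * (Fintype.card (Fin n) : ℝ) ^ (k - d) ≤
        ((k - d).factorial : ℝ) * (F'.filter (fun A => S' ⊆ A)).card := by
    intro S' hS'
    rw [Fintype.card_fin]
    have h1 : (F.filter (fun A => em S' ⊆ A)).card ≤ (F'.filter (fun A => S' ⊆ A)).card := by
      rw [← card_map em (s := F'.filter _)]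
      apply card_le_card
      intro A hA
      obtain ⟨hAF, hSA⟩ := mem_filter.mp hA
      obtain ⟨T, rfl⟩ := lift_fin n A (mem_powersetCard.mp (hF hAF)).1
      refine mem_map.mpr ⟨T, mem_filter.mpr ⟨mem_filter.mpr ⟨mem_univ _, hAF⟩, ?_⟩, rfl⟩
      exact Finset.map_subset_map.mp hSA
    have h2 := minDeg_le n d F (em S') (map_sub_range n S') (by
      simp only [em, Function.Embedding.coeFn_mk, card_map]; exact hS')
    have h3 : (minDeg n d F : ℝ) ≤ (F'.filter (fun A => S' ⊆ A)).card := by exact_mod_cast h2.trans h1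
    have h4 := fact_choose k d n hdk (by omega)
    have h5 : c1 * ((n:ℝ) - k) ^ (k - d) ≤ c1 * (((k - d).factorial : ℝ) * ((n - d).choose (k - d))) := by
      apply mul_le_mul_of_nonneg_left h4; linarith
    calc _ ≤ _ := hn
      _ ≤ _ := h5
      _ = ((k - d).factorial : ℝ) * (c1 * ((n - d).choose (k - d))) := by ring
      _ ≤ _ := by
        apply mul_le_mul_of_nonneg_left (hcon.trans h3) (by positivity)
  obtain ⟨M, hMF, hMd, hMc⟩ := hN (Fin n) F' (by rw [Fintype.card_fin]; omega) (by
    intro A hA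
    have := (mem_powersetCard.mp (hF (mem_filter.mp hA).2)).2
    simpa only [em, Function.Embedding.coeFn_mk, card_map] using this) hdeg
  rw [Fintype.card_fin] at hMc
  have h1 : M.card ≤ matchingNumber F := by
    apply le_csSup (bdd3 F)
    refine ⟨M.map em, ?_, ?_, card_map em⟩
    · intro A hA
      obtain ⟨T, hT, rfl⟩ := mem_map.mp hA
      exact (mem_filter.mp (hMF hT)).2
    · intro A hA B hB hAB
      obtain ⟨T, hT, rfl⟩ := mem_map.mp (mem_coe.mp hA)
      obtain ⟨T', hT', rfl⟩ := mem_map.mp (mem_coe.mp hB)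
      exact (Finset.disjoint_map _).mpr (hMd T hT T' hT' (fun h => hAB (by rw [h])))
  have h2 : M.card ≤ ⌊x * n⌋₊ := by omega
  have h3 : (M.card : ℝ) ≤ x * n := by
    refine le_trans ?_ (Nat.floor_le (by positivity))
    exact_mod_cast h2
  linarith
end Nib

theorem fractional_equals_integral_dirac (k d : ℕ) (hk : 2 ≤ k) (hd : d ≤ k - 1)
    (x : ℝ) (hx0 : 0 < x) (hx1 : x < 1 / (k : ℝ)) :
    Filter.limsup
        (fun n : ℕ => (mStarDeg n k d ⌊x * n⌋₊ : ℝ) / ((n - d).choose (k - d) : ℝ))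
        Filter.atTop =
      Filter.limsup
        (fun n : ℕ => (mDeg n k d ⌊x * n⌋₊ : ℝ) / ((n - d).choose (k - d) : ℝ))
        Filter.atTop := by
  have hdk : d < k := by omega
  have hk0 : (0:ℝ) < k := by exact_mod_cast (by omega : 0 < k)
  have hkx : (k:ℝ) * x < 1 := by rw [lt_div_iff₀ hk0] at hx1; linarith
  set f : ℕ → ℝ := fun n => (mStarDeg n k d ⌊x * n⌋₊ : ℝ) / ((n - d).choose (k - d) : ℝ) with hf
  set g : ℕ → ℝ := fun n => (mDeg n k d ⌊x * n⌋₊ : ℝ) / ((n - d).choose (k - d) : ℝ) with hg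
  have hfg : ∀ n, f n ≤ g n := by
    intro n
    simp only [hf, hg]
    gcongr
    exact Nib.star_le _ _ _ _
  have hf0 : ∀ n, 0 ≤ f n := fun n => by simp only [hf]; positivity
  have hg1 : ∀ᶠ n in Filter.atTop, g n ≤ 1 := by
    filter_upwards [Filter.eventually_ge_atTop k] with n hn
    simp only [hg]
    apply div_le_one_of_le₀ _ (by positivity)
    exact_mod_cast Nib.mDeg_le n k d _ (by omega) hdk.le
  have hgb : Filter.IsBoundedUnder (· ≤ ·) Filter.atTop g := Filter.isBoundedUnder_of_eventually_le hg1
  have hfb : Filter.IsBoundedUnder (· ≤ ·) Filter.atTop f :=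
    Filter.isBoundedUnder_of_eventually_le (hg1.mono fun n hn => (hfg n).trans hn)
  have hfc : Filter.IsCoboundedUnder (· ≤ ·) Filter.atTop f :=
    Filter.IsBoundedUnder.isCoboundedUnder_le
      (Filter.isBoundedUnder_of_eventually_ge (Filter.Eventually.of_forall hf0))
  have hgc : Filter.IsCoboundedUnder (· ≤ ·) Filter.atTop g :=
    Filter.IsBoundedUnder.isCoboundedUnder_le
      (Filter.isBoundedUnder_of_eventually_ge (Filter.Eventually.of_forall fun n => (hf0 n).trans (hfg n)))
  apply le_antisymm
  · exact Filter.limsup_le_limsup (Filter.Eventually.of_forall hfg) hfc hgb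
  · by_contra hcon
    rw [not_le] at hcon
    obtain ⟨c0, h0, h0'⟩ := exists_between hcon
    obtain ⟨c1, h1, h1'⟩ := exists_between h0'
    have hev := Filter.eventually_lt_of_limsup_lt h0 hfb
    have hfr := Filter.frequently_lt_of_lt_limsup hgc h1'
    have hc00 : 0 ≤ c0 := by
      obtain ⟨n, hn⟩ := hev.exists
      exact (hf0 n).trans hn.le
    have hpos : ∀ n : ℕ, k ≤ n → (0:ℝ) < ((n - d).choose (k - d) : ℝ) := fun n hn => by
      exact_mod_cast Nat.choose_pos (by omega)
    have hst : ∀ᶠ m : ℕ in Filter.atTop,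
        (mStarDeg m k d ⌊x * m⌋₊ : ℝ) < c0 * ((m - d).choose (k - d)) := by
      filter_upwards [hev, Filter.eventually_ge_atTop k] with m hm hmk
      exact (div_lt_iff₀ (hpos m hmk)).mp hm
    have hh := Nib.hard k d hk hdk x c0 c1 hx0 hkx hc00 h1 hst
    obtain ⟨n, hn1, hn2, hn3⟩ := (hfr.and_eventually (hh.and (Filter.eventually_ge_atTop k))).exists
    have := (lt_div_iff₀ (hpos n hn3)).mp hn1
    linarith
end

section
/- Suppose m, l, t are positive integers with m ≥ tl. Let G be a family of l-element subsets of [m] and α := |G|/C(m,l). Let B = (B_1,…,B_t) be a uniformly random ordered tuple of t pairwise disjoint l-element subsets of [m], and let η := |{i ∈ [t] : B_i ∈ G}|. Then E[η] = αt and, for any real β > 0, Pr[|η − αt| ≥ βt] ≤ 2α(1−α)/(β²t). -/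
open Finset

/-- The set of ordered tuples of `t` pairwise disjoint `l`-element subsets of
`{0,…,m-1}` (ordered `t`-matchings of `l`-sets). -/
noncomputable def tupleSpace (m l t : ℕ) : Finset (Fin t → Finset ℕ) :=
  (Fintype.piFinset fun _ : Fin t => (Finset.range m).powersetCard l).filter
    fun B => ∀ i j : Fin t, i ≠ j → Disjoint (B i) (B j)

/-- `hits G B` is the number of indices `i` with `B i ∈ G`. -/
noncomputable def hits (G : Finset (Finset ℕ)) {t : ℕ} (B : Fin t → Finset ℕ) : ℕ :=
  (Finset.univ.filter fun i : Fin t => B i ∈ G).card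


abbrev swp (x y : ℕ) (S : Finset ℕ) : Finset ℕ := S.map (Equiv.swap x y).toEmbedding

lemma mem_swp {x y z : ℕ} {S : Finset ℕ} : z ∈ swp x y S ↔ Equiv.swap x y z ∈ S := by
  simp [swp, Finset.mem_map_equiv]

lemma swp_swp (x y : ℕ) (S : Finset ℕ) : swp x y (swp x y S) = S := by
  ext z; simp

lemma swap_mem_iff {x y z : ℕ} {U : Finset ℕ} (hx : x ∈ U) (hy : y ∈ U) :
    Equiv.swap x y z ∈ U ↔ z ∈ U := by
  rw [Equiv.swap_apply_def]; split_ifs <;> simp_all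

lemma swp_mem {x y l : ℕ} {U S : Finset ℕ} (hx : x ∈ U) (hy : y ∈ U)
    (hS : S ∈ U.powersetCard l) : swp x y S ∈ U.powersetCard l := by
  rw [mem_powersetCard] at hS ⊢
  refine ⟨fun z hz => ?_, by rw [swp, card_map]; exact hS.2⟩
  rw [mem_swp] at hz
  exact (swap_mem_iff hx hy).1 (hS.1 hz)

lemma swp_disj {x y : ℕ} {S T : Finset ℕ} : Disjoint (swp x y S) (swp x y T) ↔ Disjoint S T :=
  disjoint_map _

lemma swp_fix {x y : ℕ} {S : Finset ℕ} (h : x ∈ S ↔ y ∈ S) : swp x y S = S := by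
  ext z; rw [mem_swp, Equiv.swap_apply_def]; split_ifs <;> simp_all

lemma conn {β : Type*} (U : Finset ℕ) (l : ℕ) (φ : Finset ℕ → β)
    (h : ∀ S ∈ U.powersetCard l, ∀ x ∈ U, ∀ y ∈ U, φ (swp x y S) = φ S) :
    ∀ k, ∀ S ∈ U.powersetCard l, ∀ S' ∈ U.powersetCard l, (S \ S').card = k → φ S = φ S' := by
  intro k
  induction k with
  | zero =>
    intro S hS S' hS' hk
    rw [mem_powersetCard] at hS hS'
    rw [card_eq_zero, sdiff_eq_empty_iff_subset] at hk
    rw [eq_of_subset_of_card_le hk (by omega)]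
  | succ k ih =>
    intro S hS S' hS' hk
    have hS1 := mem_powersetCard.1 hS
    have hS1' := mem_powersetCard.1 hS'
    have hk' : (S' \ S).card = k + 1 := by
      rw [← hk]; exact card_sdiff_comm (by omega)
    obtain ⟨x, hx⟩ := card_pos.1 (by omega : 0 < (S \ S').card)
    obtain ⟨y, hy⟩ := card_pos.1 (by omega : 0 < (S' \ S).card)
    rw [mem_sdiff] at hx hy
    have hxU := hS1.1 hx.1
    have hyU := hS1'.1 hy.1
    rw [← h S hS x hxU y hyU]
    apply ih _ (swp_mem hxU hyU hS) _ hS'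
    have : swp x y S \ S' = (S \ S').erase x := by
      ext z
      rw [mem_sdiff, mem_swp, mem_erase, mem_sdiff, Equiv.swap_apply_def]
      split_ifs <;> grind
    rw [this, card_erase_of_mem (by simp [hx]), hk]; rfl

lemma conn' {β : Type*} (U : Finset ℕ) (l : ℕ) (φ : Finset ℕ → β)
    (h : ∀ S ∈ U.powersetCard l, ∀ x ∈ U, ∀ y ∈ U, φ (swp x y S) = φ S)
    (S) (hS : S ∈ U.powersetCard l) (S') (hS' : S' ∈ U.powersetCard l) : φ S = φ S' :=
  conn U l φ h _ S hS S' hS' rfl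

/-- sum over neighbours -/
noncomputable def nb (m l : ℕ) (w : Finset ℕ → ℝ) (S : Finset ℕ) : ℝ :=
  ∑ T ∈ (range m \ S).powersetCard l, w T

lemma nb_swp_aux (m l : ℕ) (hl : 0 < l) (w : Finset ℕ → ℝ) (L : ℝ)
    (hL : ∀ S ∈ (range m).powersetCard l, ∀ x ∈ range m, ∀ y ∈ range m, |w (swp x y S) - w S| ≤ L)
    (S) (hS : S ∈ (range m).powersetCard l) (x y) (hx : x ∈ range m) (hy : y ∈ range m)
    (hxS : x ∈ S) (hyS : y ∉ S) :
    |nb m l w (swp x y S) - nb m l w S| ≤ ((m - l - 1).choose (l - 1) : ℕ) * L := by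
  have h1 : nb m l w (swp x y S) = ∑ T ∈ (range m \ S).powersetCard l, w (swp x y T) := by
    unfold nb
    have key : ∀ T S, T ∈ (range m \ S).powersetCard l →
        swp x y T ∈ (range m \ swp x y S).powersetCard l := by
      intro T S hT
      rw [mem_powersetCard] at hT ⊢
      refine ⟨fun z hz => ?_, by rw [swp, card_map]; exact hT.2⟩
      rw [mem_swp] at hz
      have := hT.1 hz
      rw [mem_sdiff, swap_mem_iff hx hy] at this
      rw [mem_sdiff, mem_swp]; exact this
    refine sum_nbij' (swp x y) (swp x y) ?_ (fun T hT => key T S hT) ?_ ?_ ?_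
    · intro T hT; simpa only [swp_swp] using key T _ hT
    · intro T hT; exact swp_swp _ _ _
    · intro T hT; exact swp_swp _ _ _
    · intro T hT; rw [swp_swp]
  rw [h1, nb, ← sum_sub_distrib]
  have h2 : ∑ T ∈ (range m \ S).powersetCard l, (w (swp x y T) - w T)
      = ∑ T ∈ ((range m \ S).powersetCard l).filter (fun T => y ∈ T), (w (swp x y T) - w T) := by
    symm
    apply sum_filter_of_ne
    intro T hT hne
    by_contra hyT
    apply hne
    have hxT : x ∉ T := fun h => by
      have := (mem_powersetCard.1 hT).1 h
      simp [hxS] at this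
    rw [swp_fix (by simp [hxT, hyT]), sub_self]
  rw [h2]
  have hS1 := mem_powersetCard.1 hS
  have hc : (((range m \ S).powersetCard l).filter (fun T => y ∈ T)).card
      = (m - l - 1).choose (l - 1) := by
    have : (((range m \ S).powersetCard l).filter (fun T => y ∈ T)).card
      = (((range m \ S).erase y).powersetCard (l-1)).card := by
      refine card_nbij' (fun T => T.erase y) (fun T => insert y T) ?_ ?_ ?_ ?_
      · intro T hT
        simp only [coe_filter, Set.mem_ofPred_eq, mem_powersetCard, mem_coe] at hT ⊢
        exact ⟨erase_subset_erase _ hT.1.1, by rw [card_erase_of_mem hT.2, hT.1.2]⟩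
      · intro T hT
        simp only [coe_filter, Set.mem_ofPred_eq, mem_powersetCard, mem_coe] at hT ⊢
        have hyT : y ∉ T := fun h => by simpa using hT.1 h
        refine ⟨⟨?_, by rw [card_insert_of_notMem hyT]; omega⟩, mem_insert_self _ _⟩
        intro z hz
        rcases mem_insert.1 hz with rfl | hz
        · simp [hyS]; simpa using hy
        · exact mem_of_mem_erase (hT.1 hz)
      · intro T hT
        simp only [coe_filter, Set.mem_ofPred_eq] at hT
        exact insert_erase hT.2
      · intro T hT
        simp only [mem_powersetCard, mem_coe] at hT
        exact erase_insert (fun h => by simpa using hT.1 h)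
    rw [this, card_powersetCard, card_erase_of_mem (by simp [hyS]; simpa using hy),
      card_sdiff_of_subset hS1.1, card_range, hS1.2]
  refine (abs_sum_le_sum_abs _ _).trans ?_
  rw [← hc, ← nsmul_eq_mul]
  apply sum_le_card_nsmul
  intro T hT
  rw [mem_filter, mem_powersetCard] at hT
  exact hL T (mem_powersetCard.2 ⟨hT.1.1.trans sdiff_subset, hT.1.2⟩) x hx y hy

lemma nb_swp (m l : ℕ) (hl : 0 < l) (w : Finset ℕ → ℝ) (L : ℝ)
    (hL : ∀ S ∈ (range m).powersetCard l, ∀ x ∈ range m, ∀ y ∈ range m, |w (swp x y S) - w S| ≤ L)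
    (S) (hS : S ∈ (range m).powersetCard l) (x y) (hx : x ∈ range m) (hy : y ∈ range m) :
    |nb m l w (swp x y S) - nb m l w S| ≤ ((m - l - 1).choose (l - 1) : ℕ) * L := by
  by_cases h : x ∈ S ↔ y ∈ S
  · rw [swp_fix h, sub_self, abs_zero]
    have : 0 ≤ L := (abs_nonneg _).trans (hL S hS x hx y hy)
    positivity
  · by_cases hxS : x ∈ S
    · exact nb_swp_aux m l hl w L hL S hS x y hx hy hxS (by tauto)
    · have := nb_swp_aux m l hl w L hL S hS y x hy hx (by tauto) hxS
      rwa [swp, Equiv.swap_comm] at this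

lemma eig (m l : ℕ) (hl : 0 < l) (hlm : l ≤ m) (w : Finset ℕ → ℝ) (μ : ℝ)
    (hw : ∀ S ∈ (range m).powersetCard l,
      ((m - l - 1).choose (l - 1) : ℕ) * w S - nb m l w S
        + ((m - l).choose l : ℕ) * ∑ T ∈ (range m).powersetCard l, w T = μ * w S)
    (hne : ∃ S ∈ (range m).powersetCard l, w S ≠ 0) : 0 ≤ μ := by
  by_contra! hμ
  obtain ⟨S0, hS0, hw0⟩ := hne
  have hm : 0 < m := by omega
  set P := (range m).powersetCard l ×ˢ (range m ×ˢ range m) with hP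
  have hPne : P.Nonempty := ⟨(S0, 0, 0), by simp [hP, hm]; simpa using hS0⟩
  obtain ⟨⟨S1, x1, y1⟩, hp, hmax⟩ := exists_max_image P
    (fun p => |w (swp p.2.1 p.2.2 p.1) - w p.1|) hPne
  set L := |w (swp x1 y1 S1) - w S1| with hLdef
  simp only [hP, mem_product] at hp
  have hL : ∀ S ∈ (range m).powersetCard l, ∀ x ∈ range m, ∀ y ∈ range m,
      |w (swp x y S) - w S| ≤ L := by
    intro S hS x hx y hy
    exact hmax (S, x, y) (by simp only [hP, mem_product]; exact ⟨hS, hx, hy⟩)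
  have hk := nb_swp m l hl w L hL S1 hp.1 x1 y1 hp.2.1 hp.2.2
  have e1 := hw S1 hp.1
  have e2 := hw _ (swp_mem hp.2.1 hp.2.2 hp.1)
  set κ : ℝ := (((m - l - 1).choose (l - 1) : ℕ) : ℝ) with hκ
  have hκ0 : 0 ≤ κ := by positivity
  have e3 : nb m l w (swp x1 y1 S1) - nb m l w S1 = (κ - μ) * (w (swp x1 y1 S1) - w S1) := by
    linarith
  rw [e3, abs_mul, ← hLdef, abs_of_pos (by linarith)] at hk
  have hL0 : L ≤ 0 := by
    by_contra! h
    nlinarith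
  have hconst : ∀ S ∈ (range m).powersetCard l, w S = w S0 := by
    intro S hS
    refine conn' (range m) l w ?_ S hS S0 hS0
    intro S hS x hx y hy
    have := abs_nonpos_iff.1 ((hL S hS x hx y hy).trans hL0)
    linarith
  have e := hw S0 hS0
  have hS01 := mem_powersetCard.1 hS0
  have hnb : nb m l w S0 = ((m - l).choose l : ℕ) * w S0 := by
    unfold nb
    rw [sum_congr rfl (g := fun _ => w S0), sum_const, card_powersetCard,
      card_sdiff_of_subset hS01.1, card_range, hS01.2, nsmul_eq_mul]
    intro T hT
    rw [mem_powersetCard] at hT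
    exact hconst T (mem_powersetCard.2 ⟨hT.1.trans sdiff_subset, hT.2⟩)
  rw [hnb, sum_congr rfl hconst, sum_const, card_powersetCard, card_range, nsmul_eq_mul] at e
  have hN : (1:ℝ) ≤ (m.choose l : ℕ) := by exact_mod_cast Nat.choose_pos hlm
  have hD : (0:ℝ) ≤ ((m - l).choose l : ℕ) := by positivity
  have : κ - ((m - l).choose l : ℕ) + ((m - l).choose l : ℕ) * (m.choose l : ℕ) = μ := by
    apply mul_right_cancel₀ hw0
    linarith
  nlinarith

lemma nb_eq (m l : ℕ) (w : Finset ℕ → ℝ) (S : Finset ℕ) :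
    nb m l w S = ∑ T ∈ (range m).powersetCard l, if Disjoint S T then w T else 0 := by
  rw [nb, ← sum_filter]
  congr 1
  ext T
  simp only [mem_powersetCard, mem_filter, subset_sdiff, disjoint_comm]
  tauto

lemma quad (m l : ℕ) (hl : 0 < l) (hlm : l ≤ m) (g : Finset ℕ → ℝ)
    (hg : ∑ S ∈ (range m).powersetCard l, g S = 0) :
    ∑ S ∈ (range m).powersetCard l, g S * nb m l g S ≤
      ((m - l - 1).choose (l - 1) : ℕ) * ∑ S ∈ (range m).powersetCard l, g S ^ 2 := by
  classical
  set V := (range m).powersetCard l with hV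
  set κ : ℝ := (((m - l - 1).choose (l - 1) : ℕ) : ℝ) with hκ
  set D : ℝ := (((m - l).choose l : ℕ) : ℝ) with hD
  let M : Matrix V V ℝ := fun S T =>
    (if S = T then κ else 0) - (if Disjoint S.1 T.1 then 1 else 0) + D
  have hM : M.IsHermitian := by
    ext S T
    rw [Matrix.conjTranspose_apply, star_trivial]
    simp only [M, disjoint_comm (a := T.1), eq_comm (a := T)]
  have hmul : ∀ (w : Finset ℕ → ℝ) (S : V), (M.mulVec (fun T : V => w T.1)) S
      = κ * w S - nb m l w S + D * ∑ T ∈ V, w T := by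
    intro w S
    rw [nb_eq, ← hV, ← sum_coe_sort V, ← sum_coe_sort V]
    simp only [Matrix.mulVec, dotProduct, M, add_mul, sub_mul, sum_add_distrib,
      sum_sub_distrib, ite_mul, zero_mul, one_mul, mul_sum]
    simp
  have hpos : M.PosSemidef := by
    rw [hM.posSemidef_iff_eigenvalues_nonneg]
    intro i
    show 0 ≤ hM.eigenvalues i
    let v : V → ℝ := hM.eigenvectorBasis i
    have hv : M.mulVec v = hM.eigenvalues i • v := hM.mulVec_eigenvectorBasis i
    let w : Finset ℕ → ℝ := fun S => if h : S ∈ V then v ⟨S, h⟩ else 0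
    have hwv : (fun T : V => w T.1) = v := by
      funext T; simp [w]
    refine eig m l hl hlm w _ ?_ ?_
    · intro S hS
      have := hmul w ⟨S, hS⟩
      rw [hwv, hv] at this
      simp only [← hV, ← hκ, ← hD]
      rw [← this]
      simp [w, hV ▸ hS]
    · by_contra! hz
      have hv0 : v = 0 := by
        rw [← hwv]; funext T; exact hz T.1 T.2
      have := hM.eigenvectorBasis.orthonormal.ne_zero i
      apply this
      ext j
      exact congrFun hv0 j
  have := hpos.dotProduct_mulVec_nonneg (fun T : V => g T.1)
  simp only [dotProduct, hmul, hg] at this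
  simp only [star_trivial, mul_zero, add_zero] at this
  rw [sum_coe_sort V (fun S => g S * (κ * g S - nb m l g S))] at this
  simp only [mul_sub, sum_sub_distrib] at this
  rw [mul_sum]
  have h2 : ∑ S ∈ V, g S * (κ * g S) = ∑ S ∈ V, κ * g S ^ 2 := sum_congr rfl fun _ _ => by ring
  linarith

lemma mem_ts {m l t : ℕ} {B : Fin t → Finset ℕ} : B ∈ tupleSpace m l t ↔
    (∀ i, B i ∈ (range m).powersetCard l) ∧ ∀ i j : Fin t, i ≠ j → Disjoint (B i) (B j) := by
  simp [tupleSpace]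

lemma swp_ts {m l t x y : ℕ} (hx : x ∈ range m) (hy : y ∈ range m) {B : Fin t → Finset ℕ}
    (hB : B ∈ tupleSpace m l t) : (fun k => swp x y (B k)) ∈ tupleSpace m l t := by
  rw [mem_ts] at hB ⊢
  exact ⟨fun i => swp_mem hx hy (hB.1 i), fun i j h => swp_disj.2 (hB.2 i j h)⟩

lemma fib_swp {m l t x y : ℕ} (hx : x ∈ range m) (hy : y ∈ range m) (i j : Fin t)
    (S T : Finset ℕ) :
    ((tupleSpace m l t).filter fun B => B i = swp x y S ∧ B j = swp x y T).card
      = ((tupleSpace m l t).filter fun B => B i = S ∧ B j = T).card := by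
  refine card_nbij' (fun B k => swp x y (B k)) (fun B k => swp x y (B k)) ?_ ?_ ?_ ?_
  · intro B hB
    rw [mem_coe, mem_filter] at hB ⊢
    refine ⟨swp_ts hx hy hB.1, ?_, ?_⟩
    · simp only [hB.2.1, swp_swp]
    · simp only [hB.2.2, swp_swp]
  · intro B hB
    rw [mem_coe, mem_filter] at hB ⊢
    refine ⟨swp_ts hx hy hB.1, ?_, ?_⟩
    · simp only [hB.2.1]
    · simp only [hB.2.2]
  · intro B hB; funext k; exact swp_swp _ _ _
  · intro B hB; funext k; exact swp_swp _ _ _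

lemma fib1 {m l t : ℕ} (i : Fin t) (S) (hS : S ∈ (range m).powersetCard l) :
    ((tupleSpace m l t).filter fun B => B i = S).card * m.choose l = (tupleSpace m l t).card := by
  have h1 : ∀ S' ∈ (range m).powersetCard l, ((tupleSpace m l t).filter fun B => B i = S').card
      = ((tupleSpace m l t).filter fun B => B i = S).card := by
    intro S' hS'
    refine conn' (range m) l (fun S => ((tupleSpace m l t).filter fun B => B i = S).card)
      ?_ S' hS' S hS
    intro S hS x hx y hy
    have := fib_swp (l := l) hx hy i i S S
    simpa only [and_self] using this
  have h2 := card_eq_sum_card_fiberwise (s := tupleSpace m l t) (f := fun B => B i)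
    (t := (range m).powersetCard l) (fun B hB => (mem_ts.1 hB).1 i)
  rw [h2, sum_congr rfl h1, sum_const, card_powersetCard, card_range, smul_eq_mul, mul_comm]

lemma fib2 {m l t : ℕ} (i j : Fin t) (hij : i ≠ j) (S) (hS : S ∈ (range m).powersetCard l)
    (T) (hT : T ∈ (range m \ S).powersetCard l) :
    ((tupleSpace m l t).filter fun B => B i = S ∧ B j = T).card * (m.choose l * (m - l).choose l)
      = (tupleSpace m l t).card := by
  have h1 : ∀ T' ∈ (range m \ S).powersetCard l,
      ((tupleSpace m l t).filter fun B => B i = S ∧ B j = T').card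
      = ((tupleSpace m l t).filter fun B => B i = S ∧ B j = T).card := by
    intro T' hT'
    refine conn' (range m \ S) l
      (fun T => ((tupleSpace m l t).filter fun B => B i = S ∧ B j = T).card)
      ?_ T' hT' T hT
    intro T hT x hx y hy
    rw [mem_sdiff] at hx hy
    have := fib_swp (l := l) hx.1 hy.1 i j S T
    rwa [swp_fix (S := S) (by simp [hx.2, hy.2])] at this
  have h2 := card_eq_sum_card_fiberwise (s := (tupleSpace m l t).filter fun B => B i = S)
    (f := fun B => B j) (t := (range m \ S).powersetCard l) (by
      intro B hB
      rw [mem_coe, mem_filter, mem_ts] at hB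
      rw [mem_coe, mem_powersetCard, subset_sdiff]
      have := mem_powersetCard.1 (hB.1.1 j)
      refine ⟨⟨this.1, ?_⟩, this.2⟩
      rw [← hB.2]; exact hB.1.2 j i hij.symm)
  have hS1 := mem_powersetCard.1 hS
  simp only [filter_filter] at h2
  rw [sum_congr rfl h1, sum_const, card_powersetCard, card_sdiff_of_subset hS1.1, card_range,
    hS1.2, smul_eq_mul] at h2
  rw [← fib1 i S hS, h2]; ring

lemma ts_pos {m l t : ℕ} (hml : t * l ≤ m) : 0 < (tupleSpace m l t).card := by
  rw [card_pos]
  refine ⟨fun i => Ico (i.1 * l) ((i.1 + 1) * l), ?_⟩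
  rw [mem_ts]
  constructor
  · intro i
    rw [mem_powersetCard]
    constructor
    · intro z hz
      rw [mem_Ico] at hz
      have : (i.1 + 1) * l ≤ t * l := Nat.mul_le_mul_right _ i.2
      rw [mem_range]; omega
    · rw [Nat.card_Ico, add_mul, one_mul]; omega
  · have key : ∀ i j : Fin t, i.1 < j.1 →
        Disjoint (Ico (i.1 * l) ((i.1 + 1) * l)) (Ico (j.1 * l) ((j.1 + 1) * l)) := by
      intro i j h
      rw [disjoint_left]
      intro z hz hz'
      rw [mem_Ico] at hz hz'
      have : (i.1 + 1) * l ≤ j.1 * l := Nat.mul_le_mul_right _ h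
      omega
    intro i j h
    rcases lt_or_gt_of_ne (fun h' => h (Fin.ext h') : i.1 ≠ j.1) with h | h
    · exact key i j h
    · exact (key j i h).symm

lemma sum1 {m l t : ℕ} (hlm : l ≤ m) (i : Fin t) (f : Finset ℕ → ℝ) :
    ∑ B ∈ tupleSpace m l t, f (B i)
      = (tupleSpace m l t).card / (m.choose l : ℝ) * ∑ S ∈ (range m).powersetCard l, f S := by
  rw [← sum_fiberwise_of_maps_to (g := fun B => B i) (t := (range m).powersetCard l)
    (fun B hB => (mem_ts.1 hB).1 i), mul_sum]
  apply sum_congr rfl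
  intro S hS
  rw [sum_congr rfl (g := fun _ => f S) (fun B hB => by rw [(mem_filter.1 hB).2]), sum_const,
    nsmul_eq_mul, ← fib1 i S hS]
  have : (m.choose l : ℝ) ≠ 0 := by exact_mod_cast (Nat.choose_pos hlm).ne'
  push_cast
  field_simp

lemma sum2 {m l t : ℕ} (hlm : 2 * l ≤ m) (i j : Fin t) (hij : i ≠ j) (f : Finset ℕ → ℝ) :
    ∑ B ∈ tupleSpace m l t, f (B i) * f (B j)
      = (tupleSpace m l t).card / ((m.choose l : ℝ) * ((m - l).choose l : ℕ)) *
        ∑ S ∈ (range m).powersetCard l, f S * nb m l f S := by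
  rw [← sum_fiberwise_of_maps_to (g := fun B => B i) (t := (range m).powersetCard l)
    (fun B hB => (mem_ts.1 hB).1 i), mul_sum]
  apply sum_congr rfl
  intro S hS
  rw [← sum_fiberwise_of_maps_to (g := fun B => B j) (t := (range m \ S).powersetCard l) (by
      intro B hB
      rw [mem_filter, mem_ts] at hB
      rw [mem_powersetCard, subset_sdiff]
      have := mem_powersetCard.1 (hB.1.1 j)
      refine ⟨⟨this.1, ?_⟩, this.2⟩
      rw [← hB.2]; exact hB.1.2 j i hij.symm), nb, mul_sum, mul_sum]
  apply sum_congr rfl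
  intro T hT
  rw [filter_filter, sum_congr rfl (g := fun _ => f S * f T)
    (fun B hB => by rw [(mem_filter.1 hB).2.1, (mem_filter.1 hB).2.2]), sum_const,
    nsmul_eq_mul, ← fib2 i j hij S hS T hT]
  have h1 : (m.choose l : ℝ) ≠ 0 := by
    exact_mod_cast (Nat.choose_pos (by omega : l ≤ m)).ne'
  have h2 : ((m - l).choose l : ℝ) ≠ 0 := by
    exact_mod_cast (Nat.choose_pos (by omega : l ≤ m - l)).ne'
  push_cast
  field_simp

lemma cov {m l t : ℕ} (hl : 0 < l) (hml : t * l ≤ m) (i j : Fin t) (hij : i ≠ j)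
    (f : Finset ℕ → ℝ) (hf : ∑ S ∈ (range m).powersetCard l, f S = 0) :
    ((t : ℝ) - 1) * ∑ B ∈ tupleSpace m l t, f (B i) * f (B j)
      ≤ (tupleSpace m l t).card / (m.choose l : ℝ) * ∑ S ∈ (range m).powersetCard l, f S ^ 2 := by
  have ht : 2 ≤ t := by
    have := i.2; have := j.2
    have : i.1 ≠ j.1 := fun h => hij (Fin.ext h)
    omega
  have h2l : 2 * l ≤ m := (Nat.mul_le_mul_right l ht).trans hml
  rw [sum2 h2l i j hij]
  have q := quad m l hl (by omega) f hf
  have hN : (0:ℝ) < m.choose l := by exact_mod_cast Nat.choose_pos (by omega : l ≤ m)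
  have hD : (0:ℝ) < (m - l).choose l := by exact_mod_cast Nat.choose_pos (by omega : l ≤ m - l)
  have hk : (t - 1) * (m - l - 1).choose (l - 1) ≤ (m - l).choose l := by
    obtain ⟨a, ha⟩ : ∃ a, m - l = a + 1 := ⟨m - l - 1, by omega⟩
    obtain ⟨b, rfl⟩ : ∃ b, l = b + 1 := ⟨l - 1, by omega⟩
    obtain ⟨c, rfl⟩ : ∃ c, t = c + 1 := ⟨t - 1, by omega⟩
    rw [ha]
    simp only [Nat.add_sub_cancel]
    have e := Nat.add_one_mul_choose_eq a b
    have : c * (b + 1) ≤ a + 1 := by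
      have : (c + 1) * (b + 1) = c * (b + 1) + (b + 1) := by ring
      omega
    refine Nat.le_of_mul_le_mul_right ?_ (Nat.succ_pos b)
    calc c * a.choose b * (b + 1) = c * (b + 1) * a.choose b := by ring
      _ ≤ (a + 1) * a.choose b := Nat.mul_le_mul_right _ this
      _ = _ := e
  have hk' : ((t : ℝ) - 1) * ((m - l - 1).choose (l - 1) : ℕ) ≤ ((m - l).choose l : ℕ) := by
    have : ((t - 1 : ℕ) : ℝ) = (t : ℝ) - 1 := by
      rw [Nat.cast_sub (by omega)]; simp
    rw [← this]; exact_mod_cast hk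
  have ht' : (0:ℝ) ≤ (t:ℝ) - 1 := by
    have : (2:ℝ) ≤ t := by exact_mod_cast ht
    linarith
  have hs : 0 ≤ ∑ S ∈ (range m).powersetCard l, f S ^ 2 := sum_nonneg fun _ _ => sq_nonneg _
  have main : ((t : ℝ) - 1) * ∑ S ∈ (range m).powersetCard l, f S * nb m l f S
      ≤ ((m - l).choose l : ℕ) * ∑ S ∈ (range m).powersetCard l, f S ^ 2 := by
    refine (mul_le_mul_of_nonneg_left q ht').trans ?_
    rw [← mul_assoc]
    exact mul_le_mul_of_nonneg_right hk' hs
  set X := ∑ S ∈ (range m).powersetCard l, f S * nb m l f S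
  set Y := ∑ S ∈ (range m).powersetCard l, f S ^ 2
  have hc : (0:ℝ) ≤ (tupleSpace m l t).card / ((m.choose l : ℝ) * ((m - l).choose l : ℕ)) := by
    positivity
  calc _ = (tupleSpace m l t).card / ((m.choose l : ℝ) * ((m - l).choose l : ℕ))
        * (((t:ℝ) - 1) * X) := by ring
    _ ≤ _ := mul_le_mul_of_nonneg_left main hc
    _ = _ := by field_simp
  
theorem intersection_chebyshev (m l t : ℕ) (hm : 0 < m) (hl : 0 < l) (ht : 0 < t)
    (hml : t * l ≤ m) (G : Finset (Finset ℕ)) (hG : G ⊆ (Finset.range m).powersetCard l)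
    (α : ℝ) (hα : α = (G.card : ℝ) / (m.choose l : ℝ)) :
    (∑ B ∈ tupleSpace m l t, (hits G B : ℝ)) / ((tupleSpace m l t).card : ℝ) = α * t ∧
    ∀ β : ℝ, 0 < β →
      (((tupleSpace m l t).filter
            fun B => β * t ≤ |(hits G B : ℝ) - α * t|).card : ℝ) /
          ((tupleSpace m l t).card : ℝ) ≤
        2 * α * (1 - α) / (β ^ 2 * t) := by
  have hlm : l ≤ m := (Nat.le_mul_of_pos_left l ht).trans hml
  have hN : (0:ℝ) < m.choose l := by exact_mod_cast Nat.choose_pos hlm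
  have hΩ : (0:ℝ) < (tupleSpace m l t).card := by exact_mod_cast ts_pos hml
  have ht' : (0:ℝ) < t := by exact_mod_cast ht
  have hGs : ∑ S ∈ (range m).powersetCard l, (if S ∈ G then (1:ℝ) else 0) = G.card := by
    rw [sum_boole, filter_mem_eq_inter, inter_eq_right.2 hG]
  have hGc : (G.card : ℝ) = α * m.choose l := by rw [hα]; field_simp
  have hh : ∀ B : Fin t → Finset ℕ, (hits G B : ℝ) = ∑ i, if B i ∈ G then (1:ℝ) else 0 := by
    intro B; rw [sum_boole]; rfl
  refine ⟨?_, ?_⟩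
  · simp only [hh]
    rw [sum_comm, sum_congr rfl (fun i _ => sum1 hlm i (fun S => if S ∈ G then (1:ℝ) else 0)),
      sum_const, hGs, hGc, card_univ, Fintype.card_fin, nsmul_eq_mul]
    rw [div_eq_iff hΩ.ne', mul_comm α, ← mul_assoc (_ / _),
      div_mul_cancel₀ _ hN.ne']
    ring
  intro β hβ
  set g : Finset ℕ → ℝ := fun S => (if S ∈ G then (1:ℝ) else 0) - α with hg
  have hcard : ((range m).powersetCard l).card = m.choose l := by
    rw [card_powersetCard, card_range]
  have hg0 : ∑ S ∈ (range m).powersetCard l, g S = 0 := by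
    rw [hg, sum_sub_distrib, hGs, sum_const, hcard, nsmul_eq_mul, hGc]; ring
  have hg2 : ∑ S ∈ (range m).powersetCard l, g S ^ 2 = m.choose l * (α * (1 - α)) := by
    have : ∀ S, g S ^ 2 = (1 - 2 * α) * (if S ∈ G then (1:ℝ) else 0) + α ^ 2 := by
      intro S; simp only [hg]; split_ifs <;> ring
    simp only [this]
    rw [sum_add_distrib, ← mul_sum, hGs, sum_const, hcard, nsmul_eq_mul, hGc]; ring
  have hgB : ∀ B : Fin t → Finset ℕ, (hits G B : ℝ) - α * t = ∑ i, g (B i) := by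
    intro B
    rw [hh, hg, sum_sub_distrib, sum_const, card_univ, Fintype.card_fin, nsmul_eq_mul]; ring
  set W : ℝ := ((tupleSpace m l t).card : ℝ) with hW
  have hd : ∀ i : Fin t, ∑ B ∈ tupleSpace m l t, g (B i) * g (B i) = W * (α * (1 - α)) := by
    intro i
    have := sum1 hlm i (fun S => g S ^ 2)
    rw [hg2] at this
    simp only [← pow_two]
    rw [this, ← hW]; field_simp
  have hvar : ∑ B ∈ tupleSpace m l t, ((hits G B : ℝ) - α * t) ^ 2
      ≤ 2 * t * (W * (α * (1 - α))) := by
    have e : ∑ B ∈ tupleSpace m l t, ((hits G B : ℝ) - α * t) ^ 2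
        = ∑ i : Fin t, ∑ j : Fin t, ∑ B ∈ tupleSpace m l t, g (B i) * g (B j) := by
      simp only [hgB, pow_two, sum_mul_sum]
      rw [sum_comm]
      exact sum_congr rfl fun i _ => sum_comm
    have hrow : ∀ i : Fin t, ∑ j : Fin t, ∑ B ∈ tupleSpace m l t, g (B i) * g (B j)
        ≤ 2 * (W * (α * (1 - α))) := by
      intro i
      rw [← add_sum_erase _ _ (mem_univ i), hd]
      have hce : (univ.erase i).card = t - 1 := by
        rw [card_erase_of_mem (mem_univ i), card_univ, Fintype.card_fin]
      have hct : ((t - 1 : ℕ) : ℝ) = (t : ℝ) - 1 := by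
        rw [Nat.cast_sub (by omega)]; simp
      have hX : 0 ≤ W * (α * (1 - α)) := by
        rw [← hd i]; exact sum_nonneg fun _ _ => mul_self_nonneg _
      have : ∑ j ∈ univ.erase i, ∑ B ∈ tupleSpace m l t, g (B i) * g (B j)
          ≤ W * (α * (1 - α)) := by
        rcases Nat.eq_or_lt_of_le (show 1 ≤ t from ht) with h1 | h1
        · have : univ.erase i = ∅ := by rw [← card_eq_zero, hce]; omega
          rw [this, sum_empty]; exact hX
        · have hp : (0:ℝ) < (t:ℝ) - 1 := by
            rw [← hct]; exact_mod_cast (by omega : 0 < t - 1)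
          have : ∀ j ∈ univ.erase i, ∑ B ∈ tupleSpace m l t, g (B i) * g (B j)
              ≤ W * (α * (1 - α)) / ((t:ℝ) - 1) := by
            intro j hj
            have := cov hl hml i j (ne_of_mem_erase hj).symm g hg0
            rw [le_div_iff₀ hp, mul_comm]
            refine this.trans (le_of_eq ?_)
            rw [hg2, ← hW]; field_simp
          refine (sum_le_card_nsmul _ _ _ this).trans (le_of_eq ?_)
          rw [hce, nsmul_eq_mul, hct]; field_simp
      linarith
    rw [e]
    refine (sum_le_card_nsmul _ _ _ (fun i _ => hrow i)).trans (le_of_eq ?_)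
    rw [card_univ, Fintype.card_fin, nsmul_eq_mul]; ring
  set F := (tupleSpace m l t).filter fun B => β * t ≤ |(hits G B : ℝ) - α * t| with hF
  have hch : (F.card : ℝ) * (β * t) ^ 2 ≤ ∑ B ∈ tupleSpace m l t, ((hits G B : ℝ) - α * t) ^ 2 := by
    rw [← nsmul_eq_mul]
    refine (card_nsmul_le_sum F (fun B => ((hits G B : ℝ) - α * t) ^ 2) _ ?_).trans
      (sum_le_sum_of_subset_of_nonneg (filter_subset _ _) fun _ _ _ => sq_nonneg _)
    intro B hB
    have := (mem_filter.1 hB).2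
    rw [← sq_abs ((hits G B : ℝ) - α * t)]
    exact pow_le_pow_left₀ (by positivity) this 2
  rw [div_le_div_iff₀ hΩ (by positivity)]
  have := hch.trans hvar
  have h3 : ((F.card : ℝ) * (β ^ 2 * t)) * t ≤ (2 * α * (1 - α) * W) * t := by
    linarith
  exact le_of_mul_le_mul_right h3 ht'
end
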